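/- arXiv:2509.04271 — 2 statements merged into one kernel-verified Lean document; each statement's English description precedes it below -/
import Mathlib

section
/- For all integers d ≥ 0 and q ≥ 1 there is a constant C = C(d,q) such that the following holds. Let G be a group and A ⊆ G a nonempty finite set such that A⁻¹A has exponent q and VC^r_A(A) = d; set k = |A³|/|A|. Then for any ε ∈ (0,1) there is a subgroup H ≤ G satisfying: (i) H ⊆ St^r_ε(A) and cov(A:H) ≤ C(k/ε)^{2d+C}; (ii) |A △ FH| ≤ ε|A| for some F ⊆ A with |F| ≤ C(k/ε)^{2d+C}; and (iii) |Z^ℓ_{√ε}(A,H)| ≤ 2√ε·|A|. -/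
open scoped Pointwise symmDiff

/-- `Stab^ℓ_N(A) = {x : |xA △ A| ≤ N}`. -/
def stabL {G : Type*} [Group G] (A : Set G) (N : ℝ) : Set G :=
  {x : G | (((x • A) ∆ A).ncard : ℝ) ≤ N}

/-- `Stab^r_N(A) = {x : |Ax △ A| ≤ N}`. -/
def stabR {G : Type*} [Group G] (A : Set G) (N : ℝ) : Set G :=
  {x : G | (((A * {x}) ∆ A).ncard : ℝ) ≤ N}

/-- `St^ℓ_ε(A) = Stab^ℓ_{ε|A|}(A)`. -/
def stL {G : Type*} [Group G] (A : Set G) (ε : ℝ) : Set G := stabL A (ε * A.ncard)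

/-- `St^r_ε(A) = Stab^r_{ε|A|}(A)`. -/
def stR {G : Type*} [Group G] (A : Set G) (ε : ℝ) : Set G := stabR A (ε * A.ncard)

/-- A family of sets shatters `S` if every subset of `S` is cut out by a member of the family. -/
def Shatters {α : Type*} (F : Set (Set α)) (S : Set α) : Prop :=
  ∀ T ⊆ S, ∃ f ∈ F, S ∩ f = T

/-- VC-dimension of a set system: the supremum of cardinalities of finite shattered sets. -/
noncomputable def vcDim {α : Type*} (F : Set (Set α)) : ℕ∞ :=
  ⨆ (S : Finset α) (_ : Shatters F ↑S), (S.card : ℕ∞)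

/-- The family of left translates `{xA : x ∈ B}`. -/
def leftFam {G : Type*} [Group G] (A B : Set G) : Set (Set G) := (fun x => x • A) '' B

/-- The family of right translates `{Ax : x ∈ B}`. -/
def rightFam {G : Type*} [Group G] (A B : Set G) : Set (Set G) := (fun x => A * {x}) '' B

/-- `Z^ℓ_ε(A,X) = {g : min(|gX ∩ A|, |gX \ A|) ≥ ε|X|}`. -/
def Zl {G : Type*} [Group G] (A X : Set G) (ε : ℝ) : Set G :=
  {g : G | ε * X.ncard ≤ min (((g • X) ∩ A).ncard : ℝ) (((g • X) \ A).ncard : ℝ)}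

/-!
Right translation of `A` in `ℓ²(G)` is an isometric action, and the sets `St^r_δ(A)` are the balls
of the length function that measures how far it moves a multiple of `1_A`. By Haussler's packing
lemma, `(k/δ)^{2d}` translates of `St^r_δ(A)` cover `A`, up to constants; comparing these bounds
over the scales `δ = ε/4^i` gives a scale at which the balls are doubling.

At that scale let `Q` be the set of elements all of whose conjugates by elements of the ball are
very short. Following Gleason, words of length `n` in `Q` stay short, by induction on `n`: smooth
the density of words in `Q` to a bump function and take the covariance operator of the orbit of
`1_A` weighted by it. Increments along a cycle of bounded length sum to zero, so this operator
almost commutes with `Q`, and by the Davis–Kahan argument `Q` almost preserves its spectral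
subspaces. Bounded exponent, used once more, prevents displacement along the large eigenspaces, and
across the small ones displacement is small. Hence `Q` generates a subgroup `H ⊆ St^r_ε(A)`, which
is large by a pigeonhole argument on a net of the ball. Double counting over the cosets of `H` then
shows that few of them are split by `A`.
-/

theorem norm_le_of_sum_range_eq_zero {E : Type*} [NormedAddCommGroup E] [NormedSpace ℝ E] {q : ℕ}
    (hq : 0 < q) {d : ℕ → E} (hd : ∑ i ∈ Finset.range q, d i = 0) {c : E} {δ : ℝ}
    (hc : ∀ i < q, ‖d i - c‖ ≤ δ) : ‖c‖ ≤ δ := by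
  have hsum : (q : ℝ) • c = -∑ i ∈ Finset.range q, (d i - c) := by
    rw [Finset.sum_sub_distrib, hd, zero_sub, neg_neg, Finset.sum_const, Finset.card_range,
      Nat.cast_smul_eq_nsmul]
  refine le_of_mul_le_mul_left (a := (q : ℝ)) ?_ (by exact_mod_cast hq)
  rw [← Real.norm_natCast (n := q), ← norm_smul, Real.norm_natCast, hsum, norm_neg]
  exact (norm_sum_le_of_le _ fun i hi => hc i (Finset.mem_range.1 hi)).trans_eq (by simp)

section Spectral

variable {E : Type*} [NormedAddCommGroup E] [InnerProductSpace ℝ E]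

theorem exists_orthonormal_diagonalization {T : E →ₗ[ℝ] E} (hT : T.IsSymmetric)
    [FiniteDimensional ℝ T.range] :
    ∃ (n : ℕ) (e : Fin n → E) (l : Fin n → ℝ), Orthonormal ℝ e ∧
      ∀ u, T u = ∑ i, (l i * inner ℝ (e i) u) • e i := by
  have hT' := hT.restrict_invariant (V := T.range) fun v _ => T.mem_range_self v
  let b := hT'.eigenvectorBasis rfl
  refine ⟨_, fun i => (b i : E), fun i => hT'.eigenvalues rfl i,
    b.orthonormal.comp_linearIsometry T.range.subtypeₗᵢ, fun u => ?_⟩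
  have hcoord (i) : inner ℝ (b i) ⟨T u, T.mem_range_self u⟩
      = hT'.eigenvalues rfl i * inner ℝ (b i : E) u := by
    have heig : T (b i) = hT'.eigenvalues rfl i • (b i : E) :=
      congrArg Subtype.val (hT'.apply_eigenvectorBasis rfl i)
    rw [Submodule.coe_inner, ← hT, heig, real_inner_smul_left]
  simpa [hcoord] using (congrArg Subtype.val (b.sum_repr' ⟨T u, T.mem_range_self u⟩)).symm

theorem exists_gap_of_sum_le {ι : Type*} [Fintype ι] {l : ι → ℝ} (hl : ∀ i, 0 ≤ l i)
    {τ Λ : ℝ} {N : ℕ} (hΛ : 0 < Λ) (hτ : ∑ i, l i ≤ τ) (hN : 2 * τ / Λ ≤ N) :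
    ∃ θ, Λ / 2 ≤ θ ∧ θ + Λ / (2 * (N + 1)) ≤ Λ ∧
      ∀ i, l i < θ ∨ θ + Λ / (2 * (N + 1)) ≤ l i := by
  classical
  set g := Λ / (2 * ((N : ℝ) + 1)) with hg
  have hg0 : 0 < g := by positivity
  have hgN : g * (N + 1) = Λ / 2 := by rw [hg]; field_simp
  let large : Finset ι := {i | Λ / 2 ≤ l i}
  have hlarge : large.card ≤ N := by
    have hmarkov : (large.card : ℝ) * (Λ / 2) ≤ τ := calc
      (large.card : ℝ) * (Λ / 2) = ∑ _i ∈ large, Λ / 2 := by simp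
      _ ≤ ∑ i ∈ large, l i := Finset.sum_le_sum fun i hi => (Finset.mem_filter.1 hi).2
      _ ≤ ∑ i, l i := Finset.sum_le_univ_sum_of_nonneg hl
      _ ≤ τ := hτ
    have : (large.card : ℝ) ≤ N := le_trans (by rw [le_div_iff₀ hΛ]; linarith) hN
    exact_mod_cast this
  obtain ⟨j, hj, hjfree⟩ : ∃ j ∈ Finset.range (N + 1),
      j ∉ large.image fun i => ⌊(l i - Λ / 2) / g⌋₊ :=
    Finset.exists_mem_notMem_of_card_lt_card <| by
      rw [Finset.card_range]; exact (Finset.card_image_le.trans hlarge).trans_lt N.lt_succ_self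
  have hjg : 0 ≤ (j : ℝ) * g := by positivity
  have hjN : (j : ℝ) + 1 ≤ N + 1 := by exact_mod_cast Finset.mem_range.1 hj
  refine ⟨Λ / 2 + j * g, by linarith, by nlinarith, fun i => ?_⟩
  by_contra! ⟨hlow, hhigh⟩
  refine hjfree (Finset.mem_image.2 ⟨i, Finset.mem_filter.2 ⟨Finset.mem_univ i, by linarith⟩, ?_⟩)
  rw [Nat.floor_eq_iff (div_nonneg (by linarith) hg0.le), le_div_iff₀ hg0, div_lt_iff₀ hg0]
  constructor <;> linarith

/-- `V` splits the self-adjoint operator `T` at the spectral level `θ` with a gap `g`: both `V` and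
its orthogonal complement are invariant, `|T| ≥ θ + g` on `V` and `|T| ≤ θ` on the complement. -/
structure IsSpectralCut (T : E →L[ℝ] E) (V : Submodule ℝ E) (θ g : ℝ) : Prop where
  map_mem : ∀ v ∈ V, T v ∈ V
  map_mem_orthogonal : ∀ u ∈ Vᗮ, T u ∈ Vᗮ
  le_norm_map : ∀ v ∈ V, (θ + g) * ‖v‖ ≤ ‖T v‖
  norm_map_le : ∀ u ∈ Vᗮ, ‖T u‖ ≤ θ * ‖u‖

theorem norm_sum_smul_sq_of_orthonormal {ι : Type*} [Fintype ι] {e : ι → E}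
    (he : Orthonormal ℝ e) (a : ι → ℝ) : ‖∑ i, a i • e i‖ ^ 2 = ∑ i, a i ^ 2 := by
  rw [← real_inner_self_eq_norm_sq, he.inner_sum]
  simp [sq]

theorem sum_inner_smul_eq_of_mem_span {ι : Type*} [Fintype ι] {e : ι → E}
    (he : Orthonormal ℝ e) {s : Set ι} {v : E} (hv : v ∈ Submodule.span ℝ (e '' s)) :
    (∀ i ∉ s, inner ℝ (e i) v = 0) ∧ ∑ i, inner ℝ (e i) v • e i = v := by
  classical
  induction hv using Submodule.span_induction with
  | mem _ h =>
    obtain ⟨j, hj, rfl⟩ := h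
    refine ⟨fun i hi => he.inner_eq_zero fun hij => hi (hij ▸ hj), ?_⟩
    simp [orthonormal_iff_ite.1 he]
  | zero => simp
  | add v w _ _ hv hw =>
    refine ⟨fun i hi => by rw [inner_add_right, hv.1 i hi, hw.1 i hi, add_zero], ?_⟩
    simp only [inner_add_right, add_smul, Finset.sum_add_distrib, hv.2, hw.2]
  | smul c v _ hv =>
    refine ⟨fun i hi => by rw [real_inner_smul_right, hv.1 i hi, mul_zero], ?_⟩
    simp only [real_inner_smul_right, mul_smul, ← Finset.smul_sum, hv.2]

theorem isSpectralCut_span_of_diagonalization {ι : Type*} [Fintype ι] {T : E →L[ℝ] E}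
    {e : ι → E} {l : ι → ℝ} (he : Orthonormal ℝ e) (hl : ∀ i, 0 ≤ l i)
    (hT : ∀ u, T u = ∑ i, (l i * inner ℝ (e i) u) • e i) {θ g : ℝ} (hθ : 0 ≤ θ) (hg : 0 ≤ g)
    (hgap : ∀ i, l i < θ ∨ θ + g ≤ l i) :
    IsSpectralCut T (Submodule.span ℝ (e '' {i | θ + g ≤ l i})) θ g where
  map_mem v hv := by
    rw [hT]
    refine Submodule.sum_mem _ fun i _ => ?_
    by_cases hi : θ + g ≤ l i
    · exact Submodule.smul_mem _ _ (Submodule.subset_span ⟨i, hi, rfl⟩)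
    · rw [(sum_inner_smul_eq_of_mem_span he hv).1 i hi, mul_zero, zero_smul]
      exact Submodule.zero_mem _
  map_mem_orthogonal u hu := by
    refine (Submodule.mem_orthogonal _ _).2 fun v hv => ?_
    rw [hT, inner_sum]
    refine Finset.sum_eq_zero fun i _ => ?_
    rw [real_inner_smul_right]
    by_cases hi : θ + g ≤ l i
    · rw [hu _ (Submodule.subset_span ⟨i, hi, rfl⟩), mul_zero, zero_mul]
    · rw [real_inner_comm (e i) v, (sum_inner_smul_eq_of_mem_span he hv).1 i hi, mul_zero]
  le_norm_map v hv := by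
    obtain ⟨hzero, hsum⟩ := sum_inner_smul_eq_of_mem_span he hv
    refine le_of_sq_le_sq ?_ (norm_nonneg _)
    rw [hT, norm_sum_smul_sq_of_orthonormal he, mul_pow]
    nth_rewrite 1 [← hsum]
    rw [norm_sum_smul_sq_of_orthonormal he, Finset.mul_sum]
    refine Finset.sum_le_sum fun i _ => ?_
    by_cases hi : θ + g ≤ l i
    · rw [mul_pow]; gcongr
    · simp [hzero i hi]
  norm_map_le u hu := by
    refine le_of_sq_le_sq ?_ (by positivity)
    have hbessel : ∑ i, inner ℝ (e i) u ^ 2 ≤ ‖u‖ ^ 2 := by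
      simpa using he.sum_inner_products_le u (s := Finset.univ)
    calc ‖T u‖ ^ 2 = ∑ i, (l i * inner ℝ (e i) u) ^ 2 := by
          rw [hT, norm_sum_smul_sq_of_orthonormal he]
      _ ≤ ∑ i, θ ^ 2 * inner ℝ (e i) u ^ 2 := by
          refine Finset.sum_le_sum fun i _ => ?_
          rcases hgap i with hi | hi
          · have := hl i
            rw [mul_pow]; gcongr
          · simp [hu _ (Submodule.subset_span ⟨i, hi, rfl⟩)]
      _ ≤ (θ * ‖u‖) ^ 2 := by rw [← Finset.mul_sum, mul_pow]; gcongr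

theorem exists_isSpectralCut {T : E →L[ℝ] E} (hT : T.IsPositive)
    [FiniteDimensional ℝ (T : E →ₗ[ℝ] E).range] {τ Λ : ℝ} {N : ℕ}
    (hτ : ∀ (n : ℕ) (e : Fin n → E), Orthonormal ℝ e → ∑ i, inner ℝ (T (e i)) (e i) ≤ τ)
    (hΛ : 0 < Λ) (hN : 2 * τ / Λ ≤ N) :
    ∃ (V : Submodule ℝ E) (θ : ℝ), FiniteDimensional ℝ V ∧ Λ / 2 ≤ θ ∧ θ ≤ Λ ∧
      IsSpectralCut T V θ (Λ / (2 * (N + 1))) := by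
  obtain ⟨n, e, l, he, hdiag⟩ := exists_orthonormal_diagonalization hT.isSymmetric
  replace hdiag (u) : T u = ∑ i, (l i * inner ℝ (e i) u) • e i := hdiag u
  have heigen (i) : inner ℝ (T (e i)) (e i) = l i := by
    rw [hdiag, he.inner_left_fintype, real_inner_self_eq_norm_sq, he.norm_eq_one]
    simp
  have hl (i) : 0 ≤ l i := heigen i ▸ hT.inner_nonneg_left (e i)
  have hsum : ∑ i, l i ≤ τ := by simpa only [heigen] using hτ n e he
  obtain ⟨θ, hΛθ, hθΛ, hgap⟩ := exists_gap_of_sum_le hl hΛ hsum hN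
  have hg : 0 ≤ Λ / (2 * ((N : ℝ) + 1)) := by positivity
  exact ⟨_, θ, FiniteDimensional.span_of_finite ℝ (Set.toFinite _), hΛθ, by linarith,
    isSpectralCut_span_of_diagonalization he hl hdiag (by linarith) hg hgap⟩

namespace IsSpectralCut

variable {T : E →L[ℝ] E} {V : Submodule ℝ E} {θ g : ℝ}

theorem starProjection_map [V.HasOrthogonalProjection] (hcut : IsSpectralCut T V θ g) (w : E) :
    V.starProjection (T w) = T (V.starProjection w) := by
  refine Submodule.eq_starProjection_of_mem_orthogonal
    (hcut.map_mem _ (V.starProjection_apply_mem w)) ?_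
  rw [← map_sub]
  exact hcut.map_mem_orthogonal _ (V.sub_starProjection_mem_orthogonal w)

/- Davis–Kahan: the off-diagonal block `X` of `U` solves the Sylvester equation
`T X - X T = P (T U - U T) P'`, whose left side has norm at least `g ‖X‖`. -/
theorem norm_starProjection_map_le_of_commutator [V.HasOrthogonalProjection]
    (hcut : IsSpectralCut T V θ g) (hθ : 0 ≤ θ) (hg : 0 < g) {U : E →L[ℝ] E} {κ : ℝ} (hκ : 0 ≤ κ)
    (hTU : ∀ w, ‖T (U w) - U (T w)‖ ≤ κ * ‖w‖) {u : E} (hu : u ∈ Vᗮ) :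
    ‖V.starProjection (U u)‖ ≤ κ / g * ‖u‖ := by
  let X := V.starProjection ∘L U ∘L Vᗮ.starProjection
  have hXu {w : E} (hw : w ∈ Vᗮ) : X w = V.starProjection (U w) := by
    simp [X, Submodule.starProjection_eq_self_iff.2 hw]
  have hpointwise (w : E) : (θ + g) * ‖X w‖ ≤ (κ + θ * ‖X‖) * ‖w‖ := by
    set w' := Vᗮ.starProjection w
    have hw'mem : w' ∈ Vᗮ := Vᗮ.starProjection_apply_mem w
    have hw'norm : ‖w'‖ ≤ ‖w‖ := Vᗮ.norm_starProjection_apply_le w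
    have hsylvester : T (X w) = V.starProjection (T (U w') - U (T w')) + X (T w') := by
      rw [hXu (hcut.map_mem_orthogonal _ hw'mem), ← map_add, sub_add_cancel,
        hcut.starProjection_map]
      rfl
    calc (θ + g) * ‖X w‖ ≤ ‖T (X w)‖ := hcut.le_norm_map _ (V.starProjection_apply_mem _)
      _ ≤ ‖T (U w') - U (T w')‖ + ‖X (T w')‖ := by
          rw [hsylvester]
          exact (norm_add_le _ _).trans (by gcongr; exact V.norm_starProjection_apply_le _)
      _ ≤ κ * ‖w'‖ + ‖X‖ * (θ * ‖w'‖) := by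
          gcongr
          · exact hTU w'
          · exact (X.le_opNorm _).trans (by gcongr; exact hcut.norm_map_le w' hw'mem)
      _ = (κ + θ * ‖X‖) * ‖w'‖ := by ring
      _ ≤ (κ + θ * ‖X‖) * ‖w‖ := by gcongr
  have hX : ‖X‖ ≤ (κ + θ * ‖X‖) / (θ + g) := by
    refine X.opNorm_le_bound (by positivity) fun w => ?_
    rw [div_mul_eq_mul_div, le_div_iff₀' (by positivity)]
    exact hpointwise w
  rw [le_div_iff₀ (by positivity)] at hX
  rw [← hXu hu]
  refine (X.le_opNorm u).trans ?_
  gcongr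
  rw [le_div_iff₀ hg]
  linarith

theorem exists_map_eq [FiniteDimensional ℝ V] (hcut : IsSpectralCut T V θ g) (hθg : 0 < θ + g)
    {v : E} (hv : v ∈ V) : ∃ w, T w = v ∧ (θ + g) * ‖w‖ ≤ ‖v‖ := by
  let TV : V →ₗ[ℝ] V := (T : E →ₗ[ℝ] E).restrict hcut.map_mem
  have hinj : Function.Injective TV := by
    refine (injective_iff_map_eq_zero TV).2 fun w hw => ?_
    have hTw : T w = 0 := congrArg Subtype.val hw
    have := hcut.le_norm_map w w.2
    rw [hTw, norm_zero] at this
    exact Subtype.ext (norm_le_zero_iff.1 (nonpos_of_mul_nonpos_right this hθg))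
  obtain ⟨w, hw⟩ := LinearMap.injective_iff_surjective.1 hinj ⟨v, hv⟩
  have hTw : T w = v := congrArg Subtype.val hw
  exact ⟨w, hTw, hTw ▸ hcut.le_norm_map w w.2⟩

theorem norm_map_sub_self_le [FiniteDimensional ℝ V] (hcut : IsSpectralCut T V θ g)
    (hθg : 0 < θ + g) {U : E →L[ℝ] E} {κ : ℝ} (hκ : 0 ≤ κ)
    (hUT : ∀ w, ‖U (T w) - T w‖ ≤ κ * ‖w‖) {v : E} (hv : v ∈ V) :
    ‖U v - v‖ ≤ κ / (θ + g) * ‖v‖ := by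
  obtain ⟨w, rfl, hw⟩ := hcut.exists_map_eq hθg hv
  calc ‖U (T w) - T w‖ ≤ κ * ‖w‖ := hUT w
    _ ≤ κ * (‖T w‖ / (θ + g)) := by gcongr; rwa [le_div_iff₀' hθg]
    _ = κ / (θ + g) * ‖T w‖ := by ring

end IsSpectralCut

end Spectral

section Isometries

variable {G : Type*} [Group G] {E : Type*} [NormedAddCommGroup E] [InnerProductSpace ℝ E]

theorem isometryAction_mul_apply (π : G →* (E ≃ₗᵢ[ℝ] E)) (x y : G) (u : E) :
    π (x * y) u = π x (π y u) := by
  rw [map_mul, LinearIsometryEquiv.coe_mul, Function.comp_apply]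

theorem isometryAction_mul_sub (π : G →* (E ≃ₗᵢ[ℝ] E)) (x y : G) (f : E) :
    π (x * y) f - f = (π x f - f) + π x (π y f - f) := by
  rw [isometryAction_mul_apply, map_sub]
  abel

/-- The length function `x ↦ ‖π x f - f‖` of an orbit of an isometric linear action. -/
noncomputable def displacement (π : G →* (E ≃ₗᵢ[ℝ] E)) (f : E) : GroupSeminorm G where
  toFun x := ‖π x f - f‖
  map_one' := by simp
  mul_le' x y := by
    rw [isometryAction_mul_sub]
    exact (norm_add_le _ _).trans_eq (by rw [LinearIsometryEquiv.norm_map])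
  inv' x := by
    rw [← LinearIsometryEquiv.norm_map (π x), map_sub, ← isometryAction_mul_apply, mul_inv_cancel,
      map_one, LinearIsometryEquiv.coe_one, id, norm_sub_rev]

theorem displacement_apply (π : G →* (E ≃ₗᵢ[ℝ] E)) (f : E) (x : G) :
    displacement π f x = ‖π x f - f‖ := rfl

variable {V : Submodule ℝ E} [V.HasOrthogonalProjection] {B : ℝ}

theorem norm_starProjection_isometry_le {U : E ≃ₗᵢ[ℝ] E} (hB : 0 ≤ B)
    (hU : ∀ u ∈ Vᗮ, ‖V.starProjection (U u)‖ ≤ B * ‖u‖) (u : E) :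
    ‖V.starProjection (U u)‖ ≤ ‖V.starProjection u‖ + B * ‖u‖ := by
  have hsplit : U u = U (V.starProjection u) + U (Vᗮ.starProjection u) := by
    rw [← map_add, V.starProjection_add_starProjection_orthogonal]
  rw [hsplit, map_add]
  refine (norm_add_le _ _).trans (add_le_add ?_ ?_)
  · exact (V.norm_starProjection_apply_le _).trans_eq (U.norm_map _)
  · refine (hU _ (Vᗮ.starProjection_apply_mem u)).trans ?_
    gcongr
    exact Vᗮ.norm_starProjection_apply_le u

theorem norm_starProjection_isometry_pow_le {U : E ≃ₗᵢ[ℝ] E} (hB : 0 ≤ B)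
    (hU : ∀ u ∈ Vᗮ, ‖V.starProjection (U u)‖ ≤ B * ‖u‖) (i : ℕ) {u : E} (hu : u ∈ Vᗮ) :
    ‖V.starProjection ((U ^ i) u)‖ ≤ i * B * ‖u‖ := by
  induction i with
  | zero => simp [V.starProjection_apply_eq_zero_iff.2 hu]
  | succ i ih =>
    rw [pow_succ', LinearIsometryEquiv.coe_mul, Function.comp_apply]
    refine (norm_starProjection_isometry_le hB hU _).trans ?_
    rw [LinearIsometryEquiv.norm_map]
    push_cast
    linarith

theorem norm_starProjection_isometry_pow_sub_le {U : E ≃ₗᵢ[ℝ] E} (hB : 0 ≤ B)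
    (hU : ∀ u ∈ Vᗮ, ‖V.starProjection (U u)‖ ≤ B * ‖u‖) {i : ℕ} {ρ : ℝ}
    (hV : ∀ v ∈ V, ‖(U ^ i) v - v‖ ≤ ρ * ‖v‖) (b : E) :
    ‖V.starProjection ((U ^ i) b) - V.starProjection b‖
      ≤ ρ * ‖V.starProjection b‖ + i * B * ‖b‖ := by
  have hsplit : V.starProjection ((U ^ i) b) - V.starProjection b
      = V.starProjection ((U ^ i) (V.starProjection b) - V.starProjection b)
        + V.starProjection ((U ^ i) (Vᗮ.starProjection b)) := by
    have hidem : V.starProjection (V.starProjection b) = V.starProjection b :=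
      V.starProjection_eq_self_iff.2 (V.starProjection_apply_mem b)
    rw [map_sub V.starProjection, hidem, sub_add_eq_add_sub, ← map_add, ← map_add,
      V.starProjection_add_starProjection_orthogonal]
  rw [hsplit]
  refine (norm_add_le _ _).trans (add_le_add ?_ ?_)
  · exact (V.norm_starProjection_apply_le _).trans (hV _ (V.starProjection_apply_mem b))
  · refine (norm_starProjection_isometry_pow_le hB hU i (Vᗮ.starProjection_apply_mem b)).trans ?_
    gcongr
    exact Vᗮ.norm_starProjection_apply_le b

/- Since `U ^ q = 1`, the vectors `U ^ i (U f - f)`, `i < q`, telescope to zero, while their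
projections to `V` are all close to the projection of `U f - f`. -/
theorem norm_starProjection_isometry_sub_le_of_pow_eq_one {U : E ≃ₗᵢ[ℝ] E} {q : ℕ} (hq : 0 < q)
    (hUq : U ^ q = 1) (hB : 0 ≤ B) (hU : ∀ u ∈ Vᗮ, ‖V.starProjection (U u)‖ ≤ B * ‖u‖)
    (hV : ∀ i < q, ∀ v ∈ V, ‖(U ^ i) v - v‖ ≤ 1 / 2 * ‖v‖) (f : E) :
    ‖V.starProjection (U f - f)‖ ≤ 2 * q * B * ‖U f - f‖ := by
  have htelescope : ∑ i ∈ Finset.range q, V.starProjection ((U ^ i) (U f - f)) = 0 := by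
    have hstep (i : ℕ) : (U ^ i) (U f - f) = (U ^ (i + 1)) f - (U ^ i) f := by
      rw [map_sub, pow_succ, LinearIsometryEquiv.coe_mul, Function.comp_apply]
    rw [← map_sum]
    simp only [hstep, Finset.sum_range_sub (fun i => (U ^ i) f), hUq, pow_zero, sub_self, map_zero]
  have hbound : ‖V.starProjection (U f - f)‖
      ≤ 1 / 2 * ‖V.starProjection (U f - f)‖ + q * B * ‖U f - f‖ :=
    norm_le_of_sum_range_eq_zero hq htelescope fun i hi =>
      (norm_starProjection_isometry_pow_sub_le hB hU (hV i hi) _).trans (by gcongr)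
  linarith

theorem norm_starProjection_displacement_le_of_mem_pow {π : G →* (E ≃ₗᵢ[ℝ] E)} {f : E} {Q : Set G}
    {q n : ℕ} (hq : 0 < q) (hQq : ∀ x ∈ Q, x ^ q = 1) (hB : 0 ≤ B)
    (hQV : ∀ x ∈ Q, ∀ u ∈ Vᗮ, ‖V.starProjection (π x u)‖ ≤ B * ‖u‖)
    (hQi : ∀ x ∈ Q, ∀ i < q, ∀ v ∈ V, ‖π (x ^ i) v - v‖ ≤ 1 / 2 * ‖v‖)
    (hQ1 : ∀ x ∈ Q, ‖π x f - f‖ ≤ 1) (hQn : ∀ j ≤ n, ∀ x ∈ Q ^ j, ‖π x f - f‖ ≤ 1) :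
    ∀ j ≤ n + 1, ∀ z ∈ Q ^ j, ‖V.starProjection (π z f - f)‖ ≤ j * (3 * q * B) := by
  have hq1 : (1 : ℝ) ≤ q := by exact_mod_cast hq
  intro j
  induction j with
  | zero =>
    intro _ z hz
    rw [pow_zero, Set.mem_one] at hz
    simp [hz]
  | succ j ih =>
    intro hj z hz
    rw [pow_succ'] at hz
    obtain ⟨x, hx, w, hw, rfl⟩ := hz
    have hfirst : ‖V.starProjection (π x f - f)‖ ≤ 2 * q * B * 1 :=
      (norm_starProjection_isometry_sub_le_of_pow_eq_one hq (by rw [← map_pow, hQq x hx, map_one])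
        hB (hQV x hx) (fun i hi v hv => by rw [← map_pow]; exact hQi x hx i hi v hv) f).trans
        (by gcongr; exact hQ1 x hx)
    have hrest := norm_starProjection_isometry_le hB (hQV x hx) (π w f - f)
    have hword := ih (by omega) w hw
    have hw1 : B * ‖π w f - f‖ ≤ q * B := calc
      B * ‖π w f - f‖ ≤ B * 1 := by gcongr; exact hQn j (by omega) w hw
      _ ≤ q * B := by rw [mul_one]; exact le_mul_of_one_le_left hB hq1
    change ‖V.starProjection (π (x * w) f - f)‖ ≤ _
    rw [isometryAction_mul_sub, map_add]
    refine (norm_add_le _ _).trans ?_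
    push_cast
    linarith

end Isometries

section Lengths

variable {G : Type*} [Group G] (ℓ : GroupSeminorm G)

theorem groupSeminorm_pow_le (x : G) (i : ℕ) : ℓ (x ^ i) ≤ i * ℓ x := by
  induction i with
  | zero => simp
  | succ i ih =>
    rw [pow_succ]
    refine (map_mul_le_add ℓ _ _).trans ?_
    push_cast
    linarith

theorem groupSeminorm_conj_pow_le (x y : G) (i : ℕ) :
    ℓ (y⁻¹ * x ^ i * y) ≤ i * ℓ (y⁻¹ * x * y) := by
  have hconj : y⁻¹ * x ^ i * y = (y⁻¹ * x * y) ^ i := by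
    simpa only [inv_inv] using (conj_pow (i := i) (a := y⁻¹) (b := x)).symm
  rw [hconj]
  exact groupSeminorm_pow_le ℓ _ i

theorem abs_groupSeminorm_mul_sub_le (w u : G) : |ℓ (w * u) - ℓ u| ≤ ℓ w := by
  simpa using abs_sub_map_le_div ℓ (w * u) u

/-- `Y` is the closed ball of radius `r` around `1` for the length function `ℓ`, as a finset. -/
def IsLengthBall (r : ℝ) (Y : Finset G) : Prop := ∀ y, y ∈ Y ↔ ℓ y ≤ r

variable {ℓ} in
theorem IsLengthBall.subset {r s : ℝ} {X Y : Finset G} (hX : IsLengthBall ℓ r X)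
    (hY : IsLengthBall ℓ s Y) (hrs : r ≤ s) : X ⊆ Y :=
  fun y hy => (hY y).2 (((hX y).1 hy).trans hrs)

/-- The elements all of whose conjugates by elements of length at most `r` have length at most
`η`. -/
def smallConj (r η : ℝ) : Set G := {x | ∀ y, ℓ y ≤ r → ℓ (y⁻¹ * x * y) ≤ η}

variable {ℓ} {r η : ℝ}

theorem one_mem_smallConj (hη : 0 ≤ η) : (1 : G) ∈ smallConj ℓ r η := by
  intro y _
  simpa using hη

theorem inv_mem_smallConj {x : G} (hx : x ∈ smallConj ℓ r η) : x⁻¹ ∈ smallConj ℓ r η := by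
  intro y hy
  rw [show y⁻¹ * x⁻¹ * y = (y⁻¹ * x * y)⁻¹ by group, map_inv_eq_map]
  exact hx y hy

theorem le_of_mem_smallConj (hr : 0 ≤ r) {x : G} (hx : x ∈ smallConj ℓ r η) : ℓ x ≤ η := by
  simpa using hx 1 (by simpa using hr)

theorem conj_pow_le_of_mem_smallConj {x y : G} (hx : x ∈ smallConj ℓ r η) (hy : ℓ y ≤ r)
    {i q : ℕ} (hi : i ≤ q) : ℓ (y⁻¹ * x ^ i * y) ≤ q * η :=
  (groupSeminorm_conj_pow_le ℓ x y i).trans <|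
    mul_le_mul (by exact_mod_cast hi) (hx y hy) (apply_nonneg ℓ _) (Nat.cast_nonneg q)

end Lengths

section Convolution

variable {G : Type*} [Group G] {X Y : Finset G} {χ ψ : G → ℝ}

/-- The convolution `g ↦ ∑ χ(u) ψ(g u⁻¹)` of functions on a group, for `χ` supported in `X`. -/
def convolution (X : Finset G) (χ ψ : G → ℝ) (g : G) : ℝ := ∑ u ∈ X, χ u * ψ (g * u⁻¹)

theorem convolution_eq_sum (hχ : ∀ u, χ u ≠ 0 → u ∈ X) (hψ : ∀ y, ψ y ≠ 0 → y ∈ Y) (g : G) :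
    convolution X χ ψ g = ∑ y ∈ Y, ψ y * χ (y⁻¹ * g) := by
  refine Finset.sum_bij_ne_zero (fun u _ _ => g * u⁻¹) ?_ ?_ ?_ ?_
  · intro u _ hu
    exact hψ _ (right_ne_zero_of_mul hu)
  · intro a _ _ b _ _ hab
    simpa using hab
  · intro y _ hy
    refine ⟨y⁻¹ * g, hχ _ (right_ne_zero_of_mul hy), ?_, by group⟩
    rwa [show g * (y⁻¹ * g)⁻¹ = y by group, mul_comm]
  · intro u _ _
    rw [mul_comm, show (g * u⁻¹)⁻¹ * g = u by group]

theorem convolution_mul_left_sub (hχ : ∀ u, χ u ≠ 0 → u ∈ X) {x : G}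
    (hψ : ∀ y, ψ y ≠ 0 → y ∈ Y) (hψx : ∀ y, ψ (x * y) ≠ 0 → y ∈ Y) (g : G) :
    convolution X χ ψ (x * g) - convolution X χ ψ g
      = ∑ y ∈ Y, (ψ (x * y) - ψ y) * χ (y⁻¹ * g) := by
  rw [← convolution_eq_sum hχ (ψ := fun y => ψ (x * y) - ψ y)]
  · simp only [convolution, mul_sub, Finset.sum_sub_distrib, mul_assoc]
  · intro y hy
    by_cases h : ψ y = 0
    · exact hψx y fun h' => hy (by rw [h, h', sub_zero])
    · exact hψ y h

/- The increments of `φ = convolution X χ ψ` along the `x`-orbit of `g` sum to zero, and any two of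
them differ by a second-order quantity, as one difference falls on `ψ` and the other on `χ`. -/
theorem abs_convolution_mul_left_sub_le_of_pow_eq_one (hχ : ∀ u, χ u ≠ 0 → u ∈ X) {x : G}
    (hψ : ∀ y, ψ y ≠ 0 → y ∈ Y) (hψx : ∀ y, ψ (x * y) ≠ 0 → y ∈ Y) {q : ℕ} (hq : 0 < q)
    (hxq : x ^ q = 1) {δ M : ℝ} (hδ : ∀ y, |ψ (x * y) - ψ y| ≤ δ)
    (hM : ∀ y ∈ Y, ∀ i < q, ∀ u, |χ (y⁻¹ * x ^ i * y * u) - χ u| ≤ M) (g : G) :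
    |convolution X χ ψ (x * g) - convolution X χ ψ g| ≤ Y.card * (δ * M) := by
  have hδ0 : 0 ≤ δ := (abs_nonneg _).trans (hδ 1)
  rw [← Real.norm_eq_abs]
  refine norm_le_of_sum_range_eq_zero hq (d := fun i =>
    convolution X χ ψ (x * (x ^ i * g)) - convolution X χ ψ (x ^ i * g)) ?_ fun i hi => ?_
  · simp only [← mul_assoc, ← pow_succ',
      Finset.sum_range_sub (fun i => convolution X χ ψ (x ^ i * g)), hxq, pow_zero, sub_self]
  · rw [convolution_mul_left_sub hχ hψ hψx, convolution_mul_left_sub hχ hψ hψx,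
      ← Finset.sum_sub_distrib, ← nsmul_eq_mul, ← Finset.sum_const]
    refine norm_sum_le_of_le _ fun y hy => ?_
    rw [← mul_sub, norm_mul]
    refine mul_le_mul (hδ y) ?_ (norm_nonneg _) hδ0
    rw [show y⁻¹ * (x ^ i * g) = y⁻¹ * x ^ i * y * (y⁻¹ * g) by group]
    exact hM y hy i hi _

end Convolution

section GleasonBump

variable {G : Type*} [Group G]

/-- The tent function of slope `c` around `1` for the length function `ℓ`. -/
noncomputable def tent (ℓ : GroupSeminorm G) (c : ℝ) (u : G) : ℝ := max 0 (1 - c * ℓ u)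

theorem tent_nonneg (ℓ : GroupSeminorm G) (c : ℝ) (u : G) : 0 ≤ tent ℓ c u := le_max_left _ _

theorem tent_le_one (ℓ : GroupSeminorm G) {c : ℝ} (hc : 0 ≤ c) (u : G) : tent ℓ c u ≤ 1 :=
  max_le zero_le_one (sub_le_self 1 (mul_nonneg hc (apply_nonneg ℓ u)))

theorem mul_length_le_one_of_tent_ne_zero {ℓ : GroupSeminorm G} {c : ℝ} {u : G}
    (hu : tent ℓ c u ≠ 0) : c * ℓ u ≤ 1 := by
  by_contra! h
  exact hu (max_eq_left (by linarith))

theorem abs_tent_mul_sub_le (ℓ : GroupSeminorm G) {c : ℝ} (hc : 0 ≤ c) (w u : G) :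
    |tent ℓ c (w * u) - tent ℓ c u| ≤ c * ℓ w := calc
  |tent ℓ c (w * u) - tent ℓ c u| ≤ |(1 - c * ℓ (w * u)) - (1 - c * ℓ u)| := by
    rw [tent, tent, max_comm 0, max_comm 0]
    exact abs_max_sub_max_le_abs _ _ 0
  _ = c * |ℓ (w * u) - ℓ u| := by
    rw [← abs_of_nonneg hc, ← abs_mul, abs_of_nonneg hc, ← abs_neg]
    congr 1
    ring
  _ ≤ c * ℓ w := by
    gcongr
    exact abs_groupSeminorm_mul_sub_le ℓ w u

open Classical in
/-- The proportion of exponents `j < N` for which `g ∈ Q ^ j * X`. -/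
noncomputable def wordDensity (Q X : Set G) (N : ℕ) (g : G) : ℝ :=
  ({j ∈ Finset.range N | g ∈ Q ^ j * X} : Finset ℕ).card / N

variable {Q X : Set G} {N : ℕ} {g : G}

theorem wordDensity_nonneg : 0 ≤ wordDensity Q X N g := by
  unfold wordDensity
  positivity

theorem wordDensity_le_one : wordDensity Q X N g ≤ 1 := by
  classical
  refine div_le_one_of_le₀ ?_ N.cast_nonneg
  exact_mod_cast (Finset.card_filter_le _ _).trans_eq (Finset.card_range N)

theorem exists_mem_pow_mul_of_wordDensity_ne_zero (hg : wordDensity Q X N g ≠ 0) :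
    ∃ j < N, g ∈ Q ^ j * X := by
  classical
  contrapose! hg
  rw [wordDensity, Finset.filter_false_of_mem fun j hj => hg j (Finset.mem_range.1 hj),
    Finset.card_empty, Nat.cast_zero, zero_div]

theorem le_wordDensity_of_mem (hQ : 1 ∈ Q) {m : ℕ} (hg : g ∈ Q ^ m * X) :
    ((N - m : ℕ) : ℝ) / N ≤ wordDensity Q X N g := by
  classical
  rw [wordDensity, ← Nat.card_Ico]
  gcongr
  intro j hj
  rw [Finset.mem_Ico] at hj
  exact Finset.mem_filter.2 ⟨Finset.mem_range.2 hj.2,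
    Set.mul_subset_mul_right (Set.pow_subset_pow_right hQ hj.1) hg⟩

theorem wordDensity_le_mul_left_add {x : G} (hx : x ∈ Q) :
    wordDensity Q X N g ≤ wordDensity Q X N (x * g) + 1 / N := by
  classical
  have hsucc : ({j ∈ Finset.range N | g ∈ Q ^ j * X} : Finset ℕ).map (addRightEmbedding 1)
      ⊆ insert N {j ∈ Finset.range N | x * g ∈ Q ^ j * X} := by
    intro j hj
    obtain ⟨i, hi, rfl⟩ := Finset.mem_map.1 hj
    obtain ⟨hiN, hgi⟩ := Finset.mem_filter.1 hi
    have hxg : x * g ∈ Q ^ (i + 1) * X := by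
      rw [pow_succ', mul_assoc]
      exact Set.mul_mem_mul hx hgi
    rcases (Nat.succ_le_of_lt (Finset.mem_range.1 hiN)).eq_or_lt with h | h
    · exact Finset.mem_insert.2 (Or.inl h)
    · exact Finset.mem_insert_of_mem (Finset.mem_filter.2 ⟨Finset.mem_range.2 h, hxg⟩)
  have hcard := (Finset.card_le_card hsucc).trans (Finset.card_insert_le _ _)
  rw [Finset.card_map] at hcard
  rw [wordDensity, wordDensity, ← add_div]
  gcongr
  exact_mod_cast hcard

theorem abs_wordDensity_mul_left_sub_le {x : G} (hx : x ∈ Q) (hx' : x⁻¹ ∈ Q) :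
    |wordDensity Q X N (x * g) - wordDensity Q X N g| ≤ 1 / N := by
  have hle := wordDensity_le_mul_left_add (X := X) (N := N) (g := g) hx
  have hge := wordDensity_le_mul_left_add (X := X) (N := N) (g := x * g) hx'
  rw [inv_mul_cancel_left] at hge
  exact abs_le.2 ⟨by linarith, by linarith⟩

/-- Gleason's bump function: the density of words of length less than `3 * n` in `Q`, smoothed by a
tent function supported in the ball of radius `1 / 8`. The set `Y` is a ball of `ℓ` containing the
support of the tent. -/
noncomputable def gleasonBump (ℓ : GroupSeminorm G) (Y : Finset G) (Q : Set G) (n : ℕ) : G → ℝ :=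
  convolution Y (tent ℓ 8) (wordDensity Q {u | ℓ u ≤ 1 / 8} (3 * n))

variable {ℓ : GroupSeminorm G} {Y S : Finset G} {n : ℕ}

theorem gleasonBump_nonneg (g : G) : 0 ≤ gleasonBump ℓ Y Q n g :=
  Finset.sum_nonneg fun _ _ => mul_nonneg (tent_nonneg ℓ 8 _) wordDensity_nonneg

theorem gleasonBump_le_card (g : G) : gleasonBump ℓ Y Q n g ≤ Y.card := by
  refine (Finset.sum_le_card_nsmul _ _ 1 fun u _ => ?_).trans_eq (by rw [nsmul_one])
  exact mul_le_one₀ (tent_le_one ℓ (by norm_num) u) wordDensity_nonneg wordDensity_le_one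

theorem length_le_three_of_mem_pow (hQ1 : 1 ∈ Q) (hQn : ∀ x ∈ Q ^ n, ℓ x ≤ 1) {j : ℕ}
    (hj : j ≤ 3 * n) {x : G} (hx : x ∈ Q ^ j) : ℓ x ≤ 3 := by
  have hx3 : x ∈ Q ^ (n + n + n) := Set.pow_subset_pow_right hQ1 (by omega) hx
  rw [pow_add, pow_add] at hx3
  obtain ⟨_, ⟨a, ha, b, hb, rfl⟩, c, hc, rfl⟩ := hx3
  have hab := map_mul_le_add ℓ a b
  have habc := map_mul_le_add ℓ (a * b) c
  change ℓ (a * b * c) ≤ 3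
  linarith [hQn a ha, hQn b hb, hQn c hc]

theorem length_le_of_wordDensity_ne_zero (hQ1 : 1 ∈ Q) (hQn : ∀ x ∈ Q ^ n, ℓ x ≤ 1)
    (hg : wordDensity Q {u | ℓ u ≤ 1 / 8} (3 * n) g ≠ 0) : ℓ g ≤ 25 / 8 := by
  obtain ⟨j, hj, w, hw, u, hu, rfl⟩ := exists_mem_pow_mul_of_wordDensity_ne_zero hg
  have hu : ℓ u ≤ 1 / 8 := hu
  refine (map_mul_le_add ℓ w u).trans ?_
  linarith [length_le_three_of_mem_pow hQ1 hQn hj.le hw]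

theorem length_le_of_gleasonBump_ne_zero (hQ1 : 1 ∈ Q) (hQn : ∀ x ∈ Q ^ n, ℓ x ≤ 1)
    (hg : gleasonBump ℓ Y Q n g ≠ 0) : ℓ g ≤ 13 / 4 := by
  obtain ⟨u, -, hu⟩ := Finset.exists_ne_zero_of_sum_ne_zero hg
  have hψ := length_le_of_wordDensity_ne_zero hQ1 hQn (right_ne_zero_of_mul hu)
  have hχ := mul_length_le_one_of_tent_ne_zero (left_ne_zero_of_mul hu)
  have hsub := map_mul_le_add ℓ (g * u⁻¹) u
  rw [inv_mul_cancel_right] at hsub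
  linarith

theorem card_div_four_le_gleasonBump (hY : IsLengthBall ℓ 4 Y) (hS : IsLengthBall ℓ (1 / 32) S)
    (hQ1 : 1 ∈ Q) (hn : 0 < n) {z : G} (hz : z ∈ Q ^ (n + 1)) {u : G} (hu : u ∈ S) :
    (S.card : ℝ) / 4 ≤ gleasonBump ℓ Y Q n (z * u) := by
  have hterm (v) (hv : v ∈ S) : (1 / 4 : ℝ)
      ≤ tent ℓ 8 v * wordDensity Q {u | ℓ u ≤ 1 / 8} (3 * n) (z * u * v⁻¹) := by
    have hu' := (hS u).1 hu
    have hv' := (hS v).1 hv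
    have hχ : 3 / 4 ≤ tent ℓ 8 v := le_max_of_le_right (by linarith)
    have huv : ℓ (u * v⁻¹) ≤ 1 / 8 := by
      refine (map_mul_le_add ℓ u v⁻¹).trans ?_
      rw [map_inv_eq_map]
      linarith
    have hmem : z * u * v⁻¹ ∈ Q ^ (n + 1) * {u | ℓ u ≤ 1 / 8} := by
      rw [mul_assoc]
      exact Set.mul_mem_mul hz huv
    have hψ : 1 / 3 ≤ wordDensity Q {u | ℓ u ≤ 1 / 8} (3 * n) (z * u * v⁻¹) := by
      refine le_trans ?_ (le_wordDensity_of_mem hQ1 hmem)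
      rw [div_le_div_iff₀ (by norm_num) (by exact_mod_cast Nat.mul_pos three_pos hn)]
      exact_mod_cast (by omega : 1 * (3 * n) ≤ (3 * n - (n + 1)) * 3)
    nlinarith
  calc (S.card : ℝ) / 4 = ∑ v ∈ S, (1 / 4 : ℝ) := by
        rw [Finset.sum_const, nsmul_eq_mul, mul_one_div]
    _ ≤ _ := Finset.sum_le_sum hterm
    _ ≤ gleasonBump ℓ Y Q n (z * u) :=
        Finset.sum_le_sum_of_subset_of_nonneg (hS.subset hY (by norm_num)) fun v _ _ =>
          mul_nonneg (tent_nonneg ℓ 8 v) wordDensity_nonneg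

theorem abs_gleasonBump_mul_left_sub_le (hY : IsLengthBall ℓ 4 Y) (hQ1 : 1 ∈ Q)
    (hQn : ∀ x ∈ Q ^ n, ℓ x ≤ 1) {η : ℝ} (hη : η ≤ 1 / 8) {x : G} (hx : x ∈ Q) (hx' : x⁻¹ ∈ Q)
    (hxη : x ∈ smallConj ℓ 4 η) {q : ℕ} (hq : 0 < q) (hxq : x ^ q = 1) (g : G) :
    |gleasonBump ℓ Y Q n (x * g) - gleasonBump ℓ Y Q n g| ≤ 8 * q * η * Y.card / n := by
  have hℓx : ℓ x ≤ η := le_of_mem_smallConj (by norm_num) hxη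
  have hη0 : 0 ≤ η := (apply_nonneg ℓ x).trans hℓx
  have hsmooth := abs_convolution_mul_left_sub_le_of_pow_eq_one (χ := tent ℓ 8)
    (ψ := wordDensity Q {u | ℓ u ≤ 1 / 8} (3 * n)) (X := Y) (Y := Y) (q := q) (x := x)
    (δ := 1 / (3 * n : ℕ)) (M := 8 * (q * η))
    (fun u hu => (hY u).2 (by linarith [mul_length_le_one_of_tent_ne_zero hu]))
    (fun y hy => (hY y).2 (by linarith [length_le_of_wordDensity_ne_zero hQ1 hQn hy]))
    (fun y hy => (hY y).2 (by
      have hinv := map_mul_le_add ℓ x⁻¹ (x * y)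
      rw [inv_mul_cancel_left, map_inv_eq_map] at hinv
      linarith [length_le_of_wordDensity_ne_zero hQ1 hQn hy]))
    hq hxq (fun y => abs_wordDensity_mul_left_sub_le hx hx')
    (fun y hy i hi u => (abs_tent_mul_sub_le ℓ (by norm_num) _ u).trans (by
      gcongr
      exact conj_pow_le_of_mem_smallConj hxη ((hY y).1 hy) hi.le)) g
  refine hsmooth.trans ?_
  rcases n.eq_zero_or_pos with rfl | hn
  · simp
  · have h3 : 1 / ((3 * n : ℕ) : ℝ) ≤ 1 / n := by
      gcongr
      omega
    calc _ ≤ (Y.card : ℝ) * (1 / n * (8 * (q * η))) := by gcongr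
      _ = 8 * q * η * Y.card / n := by ring

end GleasonBump

section Covariance

variable {E : Type*} [NormedAddCommGroup E] [InnerProductSpace ℝ E] {ι : Type*}

/-- The covariance operator `u ↦ ∑ c p ⟪w p, u⟫ w p` of a finite weighted system of vectors. -/
noncomputable def covariance (s : Finset ι) (c : ι → ℝ) (w : ι → E) : E →L[ℝ] E :=
  ∑ p ∈ s, c p • InnerProductSpace.rankOne ℝ (w p) (w p)

variable {s : Finset ι} {c : ι → ℝ} {w : ι → E}

theorem covariance_apply (u : E) :
    covariance s c w u = ∑ p ∈ s, (c p * inner ℝ (w p) u) • w p := by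
  simp only [covariance, sum_apply, smul_apply,
    InnerProductSpace.rankOne_apply, smul_smul]

theorem inner_covariance_self (u : E) :
    inner ℝ (covariance s c w u) u = ∑ p ∈ s, c p * inner ℝ (w p) u ^ 2 := by
  rw [covariance_apply, sum_inner]
  exact Finset.sum_congr rfl fun p _ => by rw [real_inner_smul_left, pow_two, mul_assoc]

theorem isPositive_covariance (hc : ∀ p ∈ s, 0 ≤ c p) : (covariance s c w).IsPositive :=
  Finset.sum_induction _ _ (fun _ _ => ContinuousLinearMap.IsPositive.add)
    ContinuousLinearMap.isPositive_zero fun p hp =>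
      (InnerProductSpace.isPositive_rankOne_self (w p)).smul_of_nonneg (hc p hp)

instance finiteDimensional_range_covariance :
    FiniteDimensional ℝ (covariance s c w : E →ₗ[ℝ] E).range := by
  have hspan : FiniteDimensional ℝ (Submodule.span ℝ (w '' s)) :=
    FiniteDimensional.span_of_finite ℝ (s.finite_toSet.image w)
  refine Submodule.finiteDimensional_of_le (S₂ := Submodule.span ℝ (w '' s)) ?_
  rintro _ ⟨u, rfl⟩
  rw [ContinuousLinearMap.coe_coe, covariance_apply]
  exact Submodule.sum_mem _ fun p hp =>
    Submodule.smul_mem _ _ (Submodule.subset_span (Set.mem_image_of_mem w hp))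

theorem sum_inner_covariance_le_of_orthonormal (hc : ∀ p ∈ s, 0 ≤ c p) {n : ℕ} {e : Fin n → E}
    (he : Orthonormal ℝ e) :
    ∑ i, inner ℝ (covariance s c w (e i)) (e i) ≤ ∑ p ∈ s, c p * ‖w p‖ ^ 2 := by
  simp only [inner_covariance_self]
  rw [Finset.sum_comm]
  refine Finset.sum_le_sum fun p hp => ?_
  rw [← Finset.mul_sum]
  refine mul_le_mul_of_nonneg_left ?_ (hc p hp)
  simpa only [Real.norm_eq_abs, sq_abs, real_inner_comm] using
    he.sum_inner_products_le (w p) (s := Finset.univ)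

end Covariance

section OrbitCovariance

variable {G : Type*} [Group G] {E : Type*} [NormedAddCommGroup E] [InnerProductSpace ℝ E]
  (π : G →* (E ≃ₗᵢ[ℝ] E)) (f : E)

theorem sum_product_mul_left {M : Type*} [AddCommMonoid M] {Y : Finset G} (x : G) {F : G × G → M}
    (hF : ∀ p, F p ≠ 0 → p ∈ Y ×ˢ Y) (hFx : ∀ p, F (x * p.1, x * p.2) ≠ 0 → p ∈ Y ×ˢ Y) :
    ∑ p ∈ Y ×ˢ Y, F (x * p.1, x * p.2) = ∑ p ∈ Y ×ˢ Y, F p := by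
  refine Finset.sum_bij_ne_zero (fun p _ _ => (x * p.1, x * p.2)) (fun p _ hp => hF _ hp) ?_ ?_
    fun _ _ _ => rfl
  · rintro ⟨a, b⟩ _ _ ⟨a', b'⟩ _ _ h
    simpa using h
  · rintro ⟨a, b⟩ _ hp
    have hx : (x * (x⁻¹ * a), x * (x⁻¹ * b)) = (a, b) := by simp only [mul_inv_cancel_left]
    exact ⟨(x⁻¹ * a, x⁻¹ * b), hFx _ (by rwa [hx]), by rwa [hx], hx⟩

/-- The covariance operator of the differences of the orbit of `f`, weighted by `φ ⊗ φ`. -/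
noncomputable def orbitCovariance (Y : Finset G) (φ : G → ℝ) : E →L[ℝ] E :=
  covariance (Y ×ˢ Y) (fun p => φ p.1 * φ p.2) (fun p => π p.1 f - π p.2 f)

variable {π f} {Y : Finset G} {φ : G → ℝ}

theorem norm_orbit_sub_orbit_le (hY : IsLengthBall (displacement π f) 4 Y) {a b : G}
    (ha : a ∈ Y) (hb : b ∈ Y) : ‖π a f - π b f‖ ≤ 8 := by
  have ha' : ‖π a f - f‖ ≤ 4 := (hY a).1 ha
  have hb' : ‖π b f - f‖ ≤ 4 := (hY b).1 hb
  rw [← sub_sub_sub_cancel_right _ _ f]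
  exact (norm_sub_le _ _).trans (by linarith)

theorem isPositive_orbitCovariance (hφ : ∀ g, 0 ≤ φ g) : (orbitCovariance π f Y φ).IsPositive :=
  isPositive_covariance fun p _ => mul_nonneg (hφ p.1) (hφ p.2)

instance finiteDimensional_range_orbitCovariance :
    FiniteDimensional ℝ (orbitCovariance π f Y φ : E →ₗ[ℝ] E).range :=
  finiteDimensional_range_covariance

theorem sum_inner_orbitCovariance_le_of_orthonormal (hY : IsLengthBall (displacement π f) 4 Y)
    (hφ : ∀ g, 0 ≤ φ g) (hφY : ∀ g, φ g ≤ Y.card) {n : ℕ} {e : Fin n → E}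
    (he : Orthonormal ℝ e) :
    ∑ i, inner ℝ (orbitCovariance π f Y φ (e i)) (e i) ≤ 64 * (Y.card : ℝ) ^ 4 := by
  refine (sum_inner_covariance_le_of_orthonormal
    (fun p _ => mul_nonneg (hφ p.1) (hφ p.2)) he).trans ?_
  have hterm (p) (hp : p ∈ Y ×ˢ Y) :
      φ p.1 * φ p.2 * ‖π p.1 f - π p.2 f‖ ^ 2 ≤ Y.card * Y.card * 8 ^ 2 := by
    rw [Finset.mem_product] at hp
    have := hφ p.2
    gcongr
    · exact hφY _
    · exact hφY _
    · exact norm_orbit_sub_orbit_le hY hp.1 hp.2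
  refine (Finset.sum_le_card_nsmul _ _ _ hterm).trans_eq ?_
  rw [Finset.card_product, nsmul_eq_mul]
  push_cast
  ring

theorem orbitCovariance_map_sub_map (x : G) (hφ : ∀ g, φ g ≠ 0 → g ∈ Y)
    (hφx : ∀ g, φ (x * g) ≠ 0 → g ∈ Y) (u : E) :
    orbitCovariance π f Y φ (π x u) - π x (orbitCovariance π f Y φ u)
      = ∑ p ∈ Y ×ˢ Y, ((φ (x * p.1) * φ (x * p.2) - φ p.1 * φ p.2)
          * inner ℝ (π p.1 f - π p.2 f) u) • π x (π p.1 f - π p.2 f) := by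
  rw [orbitCovariance, covariance_apply, covariance_apply, map_sum,
    ← sum_product_mul_left x, ← Finset.sum_sub_distrib]
  · refine Finset.sum_congr rfl fun p _ => ?_
    rw [isometryAction_mul_apply, isometryAction_mul_apply, ← map_sub,
      LinearIsometryEquiv.inner_map_map, map_smul, ← sub_smul, ← sub_mul]
  · intro p hp
    have hp' := left_ne_zero_of_mul (left_ne_zero_of_smul hp)
    exact Finset.mem_product.2 ⟨hφ _ (left_ne_zero_of_mul hp'), hφ _ (right_ne_zero_of_mul hp')⟩
  · intro p hp
    have hp' := left_ne_zero_of_mul (left_ne_zero_of_smul hp)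
    exact Finset.mem_product.2 ⟨hφx _ (left_ne_zero_of_mul hp'), hφx _ (right_ne_zero_of_mul hp')⟩

theorem abs_mul_sub_mul_le {a b c d W D : ℝ} (ha : |a| ≤ W) (hd : |d| ≤ W) (hac : |a - c| ≤ D)
    (hbd : |b - d| ≤ D) : |a * b - c * d| ≤ 2 * W * D := by
  rw [show a * b - c * d = a * (b - d) + (a - c) * d by ring]
  refine (abs_add_le _ _).trans ?_
  rw [abs_mul, abs_mul]
  have h1 := mul_le_mul ha hbd (abs_nonneg _) ((abs_nonneg a).trans ha)
  have h2 := mul_le_mul hac hd (abs_nonneg _) ((abs_nonneg _).trans hac)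
  linarith

theorem norm_orbitCovariance_commutator_le (hY : IsLengthBall (displacement π f) 4 Y)
    (hφY : ∀ g, |φ g| ≤ Y.card) {x : G} (hφ : ∀ g, φ g ≠ 0 → g ∈ Y)
    (hφx : ∀ g, φ (x * g) ≠ 0 → g ∈ Y) {D : ℝ} (hD : ∀ g, |φ (x * g) - φ g| ≤ D) (u : E) :
    ‖orbitCovariance π f Y φ (π x u) - π x (orbitCovariance π f Y φ u)‖
      ≤ 128 * (Y.card : ℝ) ^ 3 * D * ‖u‖ := by
  have hD0 : 0 ≤ D := (abs_nonneg _).trans (hD 1)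
  rw [orbitCovariance_map_sub_map x hφ hφx]
  have hterm (p) (hp : p ∈ Y ×ˢ Y) : ‖((φ (x * p.1) * φ (x * p.2) - φ p.1 * φ p.2)
      * inner ℝ (π p.1 f - π p.2 f) u) • π x (π p.1 f - π p.2 f)‖
      ≤ 2 * Y.card * D * (8 * ‖u‖) * 8 := by
    rw [Finset.mem_product] at hp
    have hn := norm_orbit_sub_orbit_le hY hp.1 hp.2
    rw [norm_smul, norm_mul, LinearIsometryEquiv.norm_map]
    have hcoeff := abs_mul_sub_mul_le (hφY (x * p.1)) (hφY p.2) (hD p.1) (hD p.2)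
    have hinner := (norm_inner_le_norm (𝕜 := ℝ) (π p.1 f - π p.2 f) u).trans
      (mul_le_mul_of_nonneg_right hn (norm_nonneg u))
    exact mul_le_mul (mul_le_mul hcoeff hinner (norm_nonneg _) (by positivity)) hn
      (norm_nonneg _) (by positivity)
  refine (norm_sum_le_of_le _ hterm).trans_eq ?_
  rw [Finset.sum_const, Finset.card_product, nsmul_eq_mul]
  push_cast
  ring

theorem norm_map_orbit_sub_orbit (x y : G) :
    ‖π x (π y f) - π y f‖ = displacement π f (y⁻¹ * x * y) := by
  rw [displacement_apply, ← LinearIsometryEquiv.norm_map (π y) (π (y⁻¹ * x * y) f - f), map_sub,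
    ← isometryAction_mul_apply, ← isometryAction_mul_apply, show y * (y⁻¹ * x * y) = x * y by group]

theorem norm_map_orbitCovariance_sub_le (hY : IsLengthBall (displacement π f) 4 Y)
    (hφY : ∀ g, |φ g| ≤ Y.card) {x : G} {ρ : ℝ}
    (hx : ∀ y ∈ Y, displacement π f (y⁻¹ * x * y) ≤ ρ) (u : E) :
    ‖π x (orbitCovariance π f Y φ u) - orbitCovariance π f Y φ u‖
      ≤ 16 * (Y.card : ℝ) ^ 4 * ρ * ‖u‖ := by
  rw [orbitCovariance, covariance_apply, map_sum, ← Finset.sum_sub_distrib]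
  have hterm (p) (hp : p ∈ Y ×ˢ Y) :
      ‖π x ((φ p.1 * φ p.2 * inner ℝ (π p.1 f - π p.2 f) u) • (π p.1 f - π p.2 f))
        - (φ p.1 * φ p.2 * inner ℝ (π p.1 f - π p.2 f) u) • (π p.1 f - π p.2 f)‖
      ≤ Y.card * Y.card * (8 * ‖u‖) * (2 * ρ) := by
    rw [Finset.mem_product] at hp
    have hn := norm_orbit_sub_orbit_le hY hp.1 hp.2
    rw [map_smul, ← smul_sub, norm_smul, norm_mul, norm_mul]
    have hinner := (norm_inner_le_norm (𝕜 := ℝ) (π p.1 f - π p.2 f) u).trans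
      (mul_le_mul_of_nonneg_right hn (norm_nonneg u))
    have hmove : ‖π x (π p.1 f - π p.2 f) - (π p.1 f - π p.2 f)‖ ≤ 2 * ρ := by
      rw [map_sub, sub_sub_sub_comm]
      refine (norm_sub_le _ _).trans ?_
      rw [norm_map_orbit_sub_orbit, norm_map_orbit_sub_orbit]
      linarith [hx _ hp.1, hx _ hp.2]
    exact mul_le_mul (mul_le_mul (mul_le_mul (hφY _) (hφY _) (norm_nonneg _) (by positivity))
      hinner (norm_nonneg _) (by positivity)) hmove (norm_nonneg _) (by positivity)
  refine (norm_sum_le_of_le _ hterm).trans_eq ?_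
  rw [Finset.sum_const, Finset.card_product, nsmul_eq_mul]
  push_cast
  ring

theorem le_inner_orbit_sub_orbit {z a b : G} {u : E} (hzu : inner ℝ (π z f - f) u = ‖u‖ ^ 2)
    (hu : 1 / 4 ≤ ‖u‖) (ha : displacement π f a ≤ 1 / 32) (hb : displacement π f b ≤ 1 / 32) :
    3 / 16 * ‖u‖ ≤ inner ℝ (π (z * a) f - π b f) u := by
  have hsplit : π (z * a) f - π b f = (π z f - f) + π z (π a f - f) - (π b f - f) := by
    rw [isometryAction_mul_apply, map_sub]
    abel
  rw [hsplit, inner_sub_left, inner_add_left, hzu]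
  have hza := (abs_le.1 (abs_real_inner_le_norm (π z (π a f - f)) u)).1
  have hbu := (abs_le.1 (abs_real_inner_le_norm (π b f - f) u)).2
  rw [LinearIsometryEquiv.norm_map] at hza
  have ha' := mul_le_mul_of_nonneg_right ha (norm_nonneg u)
  have hb' := mul_le_mul_of_nonneg_right hb (norm_nonneg u)
  rw [displacement_apply] at ha' hb'
  nlinarith

theorem sq_le_inner_orbitCovariance_self {S : Finset G}
    (hS : IsLengthBall (displacement π f) (1 / 32) S) (hφ0 : ∀ g, 0 ≤ φ g)
    (hφ : ∀ g, φ g ≠ 0 → g ∈ Y) {z : G} {β : ℝ} (hβ : 0 < β) (hz : ∀ s ∈ S, β ≤ φ (z * s))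
    (h1 : ∀ s ∈ S, β ≤ φ s) {u : E} (hzu : inner ℝ (π z f - f) u = ‖u‖ ^ 2)
    (hu : 1 / 4 ≤ ‖u‖) :
    (S.card * β * (3 / 16 * ‖u‖)) ^ 2 ≤ inner ℝ (orbitCovariance π f Y φ u) u := by
  rw [orbitCovariance, inner_covariance_self]
  let shift : G × G ↪ G × G := (mulLeftEmbedding z).prodMap (Function.Embedding.refl G)
  have hsub : (S ×ˢ S).map shift ⊆ Y ×ˢ Y := by
    intro p hp
    obtain ⟨⟨a, b⟩, hab, rfl⟩ := Finset.mem_map.1 hp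
    rw [Finset.mem_product] at hab
    exact Finset.mem_product.2
      ⟨hφ _ (hβ.trans_le (hz a hab.1)).ne', hφ _ (hβ.trans_le (h1 b hab.2)).ne'⟩
  refine le_trans ?_ (Finset.sum_le_sum_of_subset_of_nonneg hsub
    fun p _ _ => mul_nonneg (mul_nonneg (hφ0 _) (hφ0 _)) (sq_nonneg _))
  rw [Finset.sum_map]
  have hterm (p) (hp : p ∈ S ×ˢ S) : β * β * (3 / 16 * ‖u‖) ^ 2
      ≤ φ (z * p.1) * φ p.2 * inner ℝ (π (z * p.1) f - π p.2 f) u ^ 2 := by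
    rw [Finset.mem_product] at hp
    have hz0 := hφ0 (z * p.1)
    have hz1 := mul_nonneg hz0 (hφ0 p.2)
    gcongr
    · exact hz _ hp.1
    · exact h1 _ hp.2
    · exact le_inner_orbit_sub_orbit hzu hu ((hS _).1 hp.1) ((hS _).1 hp.2)
  refine le_trans (le_of_eq ?_) (Finset.sum_le_sum hterm)
  rw [Finset.sum_const, Finset.card_product, nsmul_eq_mul]
  push_cast
  ring

end OrbitCovariance

section PowersOfSmallConj

variable {G : Type*} [Group G] {E : Type*} [NormedAddCommGroup E] [InnerProductSpace ℝ E]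
  {π : G →* (E ≃ₗᵢ[ℝ] E)} {f : E} {Y S : Finset G} {K : ℝ}

theorem exists_isSpectralCut_orbitCovariance (hY : IsLengthBall (displacement π f) 4 Y)
    (hS : S.Nonempty) (hYS : (Y.card : ℝ) ≤ K * S.card) {φ : G → ℝ} (hφ : ∀ g, 0 ≤ φ g)
    (hφY : ∀ g, φ g ≤ Y.card) {N : ℕ} (hN : 2 ^ 17 * K ^ 4 ≤ N) :
    ∃ (V : Submodule ℝ E) (θ : ℝ), FiniteDimensional ℝ V ∧ (S.card : ℝ) ^ 4 / 2048 ≤ θ ∧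
      θ ≤ (S.card : ℝ) ^ 4 / 1024 ∧
      IsSpectralCut (orbitCovariance π f Y φ) V θ ((S.card : ℝ) ^ 4 / 1024 / (2 * (N + 1))) := by
  have hY4 : (Y.card : ℝ) ^ 4 ≤ K ^ 4 * (S.card : ℝ) ^ 4 := by
    rw [← mul_pow]
    gcongr
  obtain ⟨V, θ, hV, hθ, hθ', hcut⟩ := exists_isSpectralCut
    (isPositive_orbitCovariance (π := π) (f := f) (Y := Y) hφ)
    (τ := 64 * (K ^ 4 * (S.card : ℝ) ^ 4)) (Λ := (S.card : ℝ) ^ 4 / 1024) (N := N)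
    (fun n e he => (sum_inner_orbitCovariance_le_of_orthonormal hY hφ hφY he).trans (by gcongr))
    (by positivity) (by
      refine le_of_eq_of_le ?_ hN
      field_simp
      ring)
  exact ⟨V, θ, hV, by linarith, hθ', hcut⟩

theorem norm_starProjection_orthogonal_displacement_le {φ : G → ℝ} {V : Submodule ℝ E}
    [V.HasOrthogonalProjection] {θ g : ℝ} (hcut : IsSpectralCut (orbitCovariance π f Y φ) V θ g)
    (hθ : θ ≤ (S.card : ℝ) ^ 4 / 1024) (hS : IsLengthBall (displacement π f) (1 / 32) S)
    (hS0 : S.Nonempty) (hφ0 : ∀ g, 0 ≤ φ g) (hφ : ∀ g, φ g ≠ 0 → g ∈ Y) {z : G}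
    (hz : ∀ s ∈ S, (S.card : ℝ) / 4 ≤ φ (z * s)) (h1 : ∀ s ∈ S, (S.card : ℝ) / 4 ≤ φ s) :
    ‖Vᗮ.starProjection (π z f - f)‖ ≤ 1 / 4 := by
  set u := Vᗮ.starProjection (π z f - f)
  by_contra! hu
  have hzu : inner ℝ (π z f - f) u = ‖u‖ ^ 2 := by
    have hidem : Vᗮ.starProjection u = u :=
      Submodule.starProjection_eq_self_iff.2 (Vᗮ.starProjection_apply_mem _)
    rw [← real_inner_self_eq_norm_sq, ← hidem, ← Vᗮ.inner_starProjection_left_eq_right, hidem]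
  have hlower := sq_le_inner_orbitCovariance_self hS hφ0 hφ (by positivity) hz h1 hzu hu.le
  have hupper : inner ℝ (orbitCovariance π f Y φ u) u ≤ (S.card : ℝ) ^ 4 / 1024 * ‖u‖ * ‖u‖ :=
    (real_inner_le_norm _ _).trans <| by
      gcongr
      exact (hcut.norm_map_le u (Vᗮ.starProjection_apply_mem _)).trans (by gcongr)
  have hpos : 0 < (S.card : ℝ) ^ 4 * ‖u‖ ^ 2 := by positivity
  linarith

theorem norm_orbitCovariance_gleasonBump_commutator_le
    (hY : IsLengthBall (displacement π f) 4 Y) {q n : ℕ} (hq : 0 < q) {η : ℝ} (hη0 : 0 ≤ η)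
    (hη : η ≤ 1 / 8) (hQn : ∀ x ∈ smallConj (displacement π f) 4 η ^ n, displacement π f x ≤ 1)
    {x : G} (hx : x ∈ smallConj (displacement π f) 4 η) (hxq : x ^ q = 1) (u : E) :
    let T := orbitCovariance π f Y
      (gleasonBump (displacement π f) Y (smallConj (displacement π f) 4 η) n)
    ‖T (π x u) - π x (T u)‖ ≤ 1024 * q * η * (Y.card : ℝ) ^ 4 / n * ‖u‖ := by
  have hQ1 := one_mem_smallConj (ℓ := displacement π f) (r := 4) hη0
  have hx1 := le_of_mem_smallConj (by norm_num) hx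
  refine (norm_orbitCovariance_commutator_le hY
    (fun g => (abs_of_nonneg (gleasonBump_nonneg g)).trans_le (gleasonBump_le_card g))
    (fun g hg => (hY g).2 ?_) (fun g hg => (hY g).2 ?_)
    (abs_gleasonBump_mul_left_sub_le hY hQ1 hQn hη hx (inv_mem_smallConj hx) hx hq hxq) u).trans_eq
    (by ring)
  · linarith [length_le_of_gleasonBump_ne_zero hQ1 hQn hg]
  · have hinv := map_mul_le_add (displacement π f) x⁻¹ (x * g)
    rw [inv_mul_cancel_left, map_inv_eq_map] at hinv
    linarith [length_le_of_gleasonBump_ne_zero hQ1 hQn hg]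

theorem norm_isometry_pow_sub_le_of_isSpectralCut (hY : IsLengthBall (displacement π f) 4 Y)
    (hS : S.Nonempty) (hYS : (Y.card : ℝ) ≤ K * S.card) {φ : G → ℝ} (hφY : ∀ g, |φ g| ≤ Y.card)
    {V : Submodule ℝ E} [FiniteDimensional ℝ V] {θ g : ℝ}
    (hcut : IsSpectralCut (orbitCovariance π f Y φ) V θ g)
    (hθ : (S.card : ℝ) ^ 4 / 2048 ≤ θ) (hg : 0 ≤ g) {q : ℕ} {η : ℝ} (hη : 0 ≤ η) {x : G}
    (hx : x ∈ smallConj (displacement π f) 4 η) {i : ℕ} (hi : i ≤ q) {v : E} (hv : v ∈ V) :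
    ‖π (x ^ i) v - v‖ ≤ 2 ^ 15 * K ^ 4 * (q * η) * ‖v‖ := by
  have hS0 : (0 : ℝ) < S.card := by exact_mod_cast hS.card_pos
  have hmove := hcut.norm_map_sub_self_le (U := ((π (x ^ i)).toContinuousLinearEquiv : E →L[ℝ] E))
    (by linarith [pow_pos hS0 4]) (by positivity)
    (norm_map_orbitCovariance_sub_le hY hφY fun y hy =>
      conj_pow_le_of_mem_smallConj hx ((hY y).1 hy) hi) hv
  refine hmove.trans ?_
  gcongr
  rw [div_le_iff₀ (by linarith [pow_pos hS0 4])]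
  calc 16 * (Y.card : ℝ) ^ 4 * (q * η) ≤ 16 * (K * S.card) ^ 4 * (q * η) := by gcongr
    _ = 2 ^ 15 * K ^ 4 * (q * η) * ((S.card : ℝ) ^ 4 / 2048) := by ring
    _ ≤ 2 ^ 15 * K ^ 4 * (q * η) * (θ + g) := by
      gcongr
      linarith

theorem norm_starProjection_isometry_le_of_isSpectralCut
    (hY : IsLengthBall (displacement π f) 4 Y) (hS : S.Nonempty)
    (hYS : (Y.card : ℝ) ≤ K * S.card) {q n N : ℕ} (hq : 0 < q)
    (hN : (N : ℝ) + 1 ≤ 2 ^ 18 * K ^ 4) {η : ℝ} (hη0 : 0 ≤ η) (hη : η ≤ 1 / 8)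
    (hQn : ∀ x ∈ smallConj (displacement π f) 4 η ^ n, displacement π f x ≤ 1)
    {V : Submodule ℝ E} [V.HasOrthogonalProjection] {θ : ℝ} (hθ : 0 ≤ θ)
    (hcut : IsSpectralCut (orbitCovariance π f Y
      (gleasonBump (displacement π f) Y (smallConj (displacement π f) 4 η) n)) V θ
      ((S.card : ℝ) ^ 4 / 1024 / (2 * (N + 1))))
    {x : G} (hx : x ∈ smallConj (displacement π f) 4 η) (hxq : x ^ q = 1) {u : E} (hu : u ∈ Vᗮ) :
    ‖V.starProjection (π x u)‖ ≤ 2 ^ 39 * q * K ^ 8 * η / n * ‖u‖ := by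
  set g := (S.card : ℝ) ^ 4 / 1024 / (2 * (N + 1)) with hg
  have hg0 : 0 < g := by positivity
  refine (hcut.norm_starProjection_map_le_of_commutator
    (U := ((π x).toContinuousLinearEquiv : E →L[ℝ] E)) hθ hg0 (by positivity)
    (norm_orbitCovariance_gleasonBump_commutator_le hY hq hη0 hη hQn hx hxq) hu).trans ?_
  refine mul_le_mul_of_nonneg_right ?_ (norm_nonneg u)
  rw [div_le_iff₀ hg0]
  calc 1024 * q * η * (Y.card : ℝ) ^ 4 / n ≤ 1024 * q * η * (K * S.card) ^ 4 / n := by gcongr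
    _ = 2 ^ 21 * (N + 1) * q * K ^ 4 * η / n * g := by rw [hg]; field_simp; ring
    _ ≤ 2 ^ 21 * (2 ^ 18 * K ^ 4) * q * K ^ 4 * η / n * g := by gcongr
    _ = 2 ^ 39 * q * K ^ 8 * η / n * g := by ring

theorem norm_starProjection_displacement_le_quarter (hY : IsLengthBall (displacement π f) 4 Y)
    (hS : S.Nonempty) (hYS : (Y.card : ℝ) ≤ K * S.card) {q n N : ℕ} (hq : 0 < q)
    (hn : 0 < n) (hN : (N : ℝ) + 1 ≤ 2 ^ 18 * K ^ 4) {η : ℝ} (hη0 : 0 ≤ η) (hη8 : η ≤ 1 / 8)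
    (hη4 : 2 ^ 15 * K ^ 4 * (q * η) ≤ 1 / 2) (hη : 2 ^ 44 * q ^ 2 * K ^ 8 * η ≤ 1)
    (hQq : ∀ x ∈ smallConj (displacement π f) 4 η, x ^ q = 1)
    (hQn : ∀ j ≤ n, ∀ x ∈ smallConj (displacement π f) 4 η ^ j, displacement π f x ≤ 1)
    {V : Submodule ℝ E} [FiniteDimensional ℝ V] {θ : ℝ} (hθ : (S.card : ℝ) ^ 4 / 2048 ≤ θ)
    (hcut : IsSpectralCut (orbitCovariance π f Y
      (gleasonBump (displacement π f) Y (smallConj (displacement π f) 4 η) n)) V θ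
      ((S.card : ℝ) ^ 4 / 1024 / (2 * (N + 1))))
    {z : G} (hz : z ∈ smallConj (displacement π f) 4 η ^ (n + 1)) :
    ‖V.starProjection (π z f - f)‖ ≤ 1 / 4 := by
  have hn1 : (1 : ℝ) ≤ n := by exact_mod_cast hn
  have hdrift := norm_starProjection_displacement_le_of_mem_pow hq hQq
    (B := 2 ^ 39 * q * K ^ 8 * η / n) (by positivity)
    (fun x hx u hu => norm_starProjection_isometry_le_of_isSpectralCut hY hS hYS hq hN hη0 hη8
      (hQn n le_rfl) (le_trans (by positivity) hθ) hcut hx (hQq x hx) hu)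
    (fun x hx i hi v hv => (norm_isometry_pow_sub_le_of_isSpectralCut hY hS hYS
      (fun g => (abs_of_nonneg (gleasonBump_nonneg g)).trans_le (gleasonBump_le_card g))
      hcut hθ (by positivity) hη0 hx hi.le hv).trans (by gcongr))
    (fun x hx => (le_of_mem_smallConj (by norm_num) hx).trans (by linarith)) hQn (n + 1) le_rfl z hz
  calc _ ≤ ((n + 1 : ℕ) : ℝ) * (3 * q * (2 ^ 39 * q * K ^ 8 * η / n)) := hdrift
    _ ≤ (n + n) * (3 * q * (2 ^ 39 * q * K ^ 8 * η / n)) := by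
      push_cast
      gcongr
    _ = 2 ^ 44 * q ^ 2 * K ^ 8 * η * (3 / 16) := by field_simp; ring
    _ ≤ 1 * (3 / 16) := by gcongr
    _ ≤ 1 / 4 := by norm_num

theorem le_one_div_eight_of_mul_le_one (hK : 1 ≤ K) {q : ℕ} (hq : 0 < q) {η : ℝ} (hη0 : 0 ≤ η)
    (hη : 2 ^ 44 * q ^ 2 * K ^ 8 * η ≤ 1) : η ≤ 1 / 8 := by
  have hq2 : (1 : ℝ) ≤ q ^ 2 := one_le_pow₀ (by exact_mod_cast hq)
  have hqK := one_le_mul_of_one_le_of_one_le hq2 (one_le_pow₀ hK (n := 8))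
  linarith [le_mul_of_one_le_left hη0 hqK]

/- Induction on `n`: the elements of `Q` nearly commute with the covariance of the orbit under the
bump function of `Q ^ n`, and a large displacement by `Q ^ (n + 1)` would show up in it. -/
theorem displacement_le_one_of_mem_pow_smallConj (hY : IsLengthBall (displacement π f) 4 Y)
    (hS : IsLengthBall (displacement π f) (1 / 32) S) (hYS : (Y.card : ℝ) ≤ K * S.card)
    (hK : 1 ≤ K) {q : ℕ} (hq : 0 < q) {η : ℝ} (hη0 : 0 ≤ η) (hη : 2 ^ 44 * q ^ 2 * K ^ 8 * η ≤ 1)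
    (hQq : ∀ x ∈ smallConj (displacement π f) 4 η, x ^ q = 1) (n : ℕ) :
    ∀ z ∈ smallConj (displacement π f) 4 η ^ n, displacement π f z ≤ 1 := by
  have hq1 : (1 : ℝ) ≤ q := by exact_mod_cast hq
  have hKq : 2 ^ 44 * (q * K ^ 4 * η) ≤ 1 := le_trans (by
    rw [← mul_assoc, ← mul_assoc]
    gcongr
    · exact le_self_pow₀ hq1 two_ne_zero
    · norm_num) hη
  have hη8 : η ≤ 1 / 8 := le_one_div_eight_of_mul_le_one hK hq hη0 hη
  set Q := smallConj (displacement π f) 4 η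
  have hQ1 : 1 ∈ Q := one_mem_smallConj hη0
  have hSne : S.Nonempty := ⟨1, (hS 1).2 (by rw [map_one_eq_zero]; norm_num)⟩
  induction n with
  | zero =>
    intro z hz
    rw [pow_zero, Set.mem_one] at hz
    simp [hz]
  | succ n ih =>
    intro z hz
    rcases n.eq_zero_or_pos with rfl | hn
    · rw [zero_add, pow_one] at hz
      exact (le_of_mem_smallConj (by norm_num) hz).trans (by linarith)
    have hQn (j) (hj : j ≤ n) (x) (hx : x ∈ Q ^ j) : displacement π f x ≤ 1 :=
      ih x (Set.pow_subset_pow_right hQ1 hj hx)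
    obtain ⟨V, θ, _, hθ, hθ', hcut⟩ := exists_isSpectralCut_orbitCovariance hY hSne hYS
      (fun g => gleasonBump_nonneg (Q := Q) (n := n) g) gleasonBump_le_card
      (Nat.le_ceil (2 ^ 17 * K ^ 4))
    have hN : (⌈2 ^ 17 * K ^ 4⌉₊ : ℝ) + 1 ≤ 2 ^ 18 * K ^ 4 := by
      have := Nat.ceil_lt_add_one (show 0 ≤ 2 ^ 17 * K ^ 4 by positivity)
      linarith [one_le_pow₀ hK (n := 4)]
    have hV := norm_starProjection_displacement_le_quarter hY hSne hYS hq hn hN hη0 hη8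
      (by linarith) hη hQq hQn hθ hcut hz
    have hVperp : ‖Vᗮ.starProjection (π z f - f)‖ ≤ 1 / 4 :=
      norm_starProjection_orthogonal_displacement_le hcut hθ' hS hSne gleasonBump_nonneg
        (fun g hg => (hY g).2 (by
          linarith [length_le_of_gleasonBump_ne_zero hQ1 (hQn n le_rfl) hg]))
        (fun s hs => card_div_four_le_gleasonBump hY hS hQ1 hn hz hs)
        (fun s hs => by
          simpa using card_div_four_le_gleasonBump hY hS hQ1 hn (Set.one_mem_pow hQ1) hs)
    rw [displacement_apply, ← V.starProjection_add_starProjection_orthogonal (π z f - f)]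
    exact (norm_add_le _ _).trans (by linarith)

theorem exists_mem_pow_of_mem_closure {Q : Set G} (hQ : Q⁻¹ = Q) {x : G}
    (hx : x ∈ Subgroup.closure Q) : ∃ n : ℕ, x ∈ Q ^ n := by
  induction hx using Subgroup.closure_induction with
  | mem x hx => exact ⟨1, by rwa [pow_one]⟩
  | one => exact ⟨0, Set.mem_one.2 rfl⟩
  | mul x y _ _ hx hy =>
    obtain ⟨m, hm⟩ := hx
    obtain ⟨n, hn⟩ := hy
    exact ⟨m + n, pow_add Q m n ▸ Set.mul_mem_mul hm hn⟩
  | inv x _ hx =>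
    obtain ⟨n, hn⟩ := hx
    exact ⟨n, by rwa [← hQ, inv_pow, Set.inv_mem_inv]⟩

theorem displacement_le_one_of_mem_closure_smallConj
    (hY : IsLengthBall (displacement π f) 4 Y) (hS : IsLengthBall (displacement π f) (1 / 32) S)
    (hYS : (Y.card : ℝ) ≤ K * S.card) (hK : 1 ≤ K) {q : ℕ} (hq : 0 < q) {η : ℝ} (hη0 : 0 ≤ η)
    (hη : 2 ^ 44 * q ^ 2 * K ^ 8 * η ≤ 1)
    (hQq : ∀ x ∈ smallConj (displacement π f) 4 η, x ^ q = 1) {x : G}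
    (hx : x ∈ Subgroup.closure (smallConj (displacement π f) 4 η)) : displacement π f x ≤ 1 := by
  obtain ⟨n, hn⟩ := exists_mem_pow_of_mem_closure
    (Set.ext fun x => ⟨fun hx => inv_inv x ▸ inv_mem_smallConj hx, inv_mem_smallConj⟩) hx
  exact displacement_le_one_of_mem_pow_smallConj hY hS hYS hK hq hη0 hη hQq n x hn

end PowersOfSmallConj

section Nets

theorem exists_isSeparated_isCover {α : Type*} (U : SetRel α α) [U.IsRefl] [U.IsSymm]
    (s : Finset α) : ∃ F ⊆ s, U.IsSeparated (F : Set α) ∧ U.IsCover (s : Set α) (F : Set α) := by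
  obtain ⟨N, hN⟩ := (s.finite_toSet.finite_subsets.subset
    (fun _ h => h.1 : {N | N ⊆ (s : Set α) ∧ U.IsSeparated N} ⊆ _)).exists_maximal
    ⟨∅, Set.empty_subset _, .empty⟩
  lift N to Finset α using s.finite_toSet.subset hN.prop.1
  exact ⟨N, Finset.coe_subset.1 hN.prop.1, hN.prop.2, .of_maximal_isSeparated hN⟩

variable {G : Type*} [Group G] {ℓ : GroupSeminorm G} {η : ℝ}

theorem exists_net_card_mul_le {r : ℝ} (hr : 0 ≤ r) {B C R : Finset G}
    (hR : ∀ x ∈ R, ℓ x ≤ r / 2) (hC : ∀ x ∈ B, ∀ y ∈ R, x * y ∈ C) :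
    ∃ F ⊆ B, (∀ y ∈ B, ∃ z ∈ F, ℓ (y⁻¹ * z) ≤ r) ∧ F.card * R.card ≤ C.card := by
  let U : SetRel G G := {p | ℓ (p.1⁻¹ * p.2) ≤ r}
  have : U.IsRefl := ⟨fun x => by simpa [U] using hr⟩
  have : U.IsSymm := ⟨fun x y (h : ℓ (x⁻¹ * y) ≤ r) => by
    change ℓ (y⁻¹ * x) ≤ r
    rwa [← map_inv_eq_map, mul_inv_rev, inv_inv]⟩
  obtain ⟨F, hFB, hsep, hcov⟩ := exists_isSeparated_isCover U B
  refine ⟨F, hFB, fun y hy => hcov hy, ?_⟩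
  rw [← Finset.card_product]
  refine Finset.card_le_card_of_injOn (fun p => p.1 * p.2) (fun p hp => ?_) ?_
  · rw [Finset.coe_product, Set.mem_prod] at hp
    exact hC _ (hFB hp.1) _ hp.2
  · rintro ⟨a, b⟩ hab ⟨a', b'⟩ hab' (heq : a * b = a' * b')
    rw [Finset.coe_product, Set.mem_prod] at hab hab'
    obtain rfl : a = a' := by
      refine hsep.eq hab.1 hab'.1 (not_not_intro ?_)
      change ℓ (a⁻¹ * a') ≤ r
      rw [show a⁻¹ * a' = b * b'⁻¹ by
        rw [eq_mul_inv_iff_mul_eq, mul_assoc, ← heq, inv_mul_cancel_left]]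
      refine (map_mul_le_add ℓ b b'⁻¹).trans ?_
      rw [map_inv_eq_map]
      linarith [hR b hab.2, hR b' hab'.2]
    rw [mul_left_cancel heq]

theorem inv_mul_mem_smallConj {F : Finset G}
    (hF : ∀ y, ℓ y ≤ 4 → ∃ z ∈ F, ℓ (y⁻¹ * z) ≤ η / 4) {x x' : G} {p : G → G}
    (hx : ∀ z ∈ F, ℓ ((x * z)⁻¹ * p z) ≤ η / 4) (hx' : ∀ z ∈ F, ℓ ((x' * z)⁻¹ * p z) ≤ η / 4) :
    x⁻¹ * x' ∈ smallConj ℓ 4 η := by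
  intro y hy
  obtain ⟨z, hz, hyz⟩ := hF y hy
  rw [show y⁻¹ * (x⁻¹ * x') * y =
    (y⁻¹ * z * ((x * z)⁻¹ * p z)) * (y⁻¹ * z * ((x' * z)⁻¹ * p z))⁻¹ by group]
  refine (map_mul_le_add ℓ _ _).trans ?_
  rw [map_inv_eq_map]
  linarith [map_mul_le_add ℓ (y⁻¹ * z) ((x * z)⁻¹ * p z), hx z hz,
    map_mul_le_add ℓ (y⁻¹ * z) ((x' * z)⁻¹ * p z), hx' z hz]

theorem card_le_card_mul_pow_of_nets {B F F' Q : Finset G}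
    (hF : ∀ y, ℓ y ≤ 4 → ∃ z ∈ F, ℓ (y⁻¹ * z) ≤ η / 4)
    (hF' : ∀ x ∈ B, ∀ z ∈ F, ∃ p ∈ F', ℓ ((x * z)⁻¹ * p) ≤ η / 4)
    (hQ : smallConj ℓ 4 η ⊆ Q) : B.card ≤ Q.card * F'.card ^ F.card := by
  classical
  choose! near hnearF hnear using hF'
  have himage : B.image (fun x (z : F) => near x z) ⊆ Fintype.piFinset fun _ => F' := by
    intro v hv
    obtain ⟨x, hx, rfl⟩ := Finset.mem_image.1 hv
    exact Fintype.mem_piFinset.2 fun z => hnearF x hx z z.2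
  have hfiber : ∀ v ∈ B.image (fun x (z : F) => near x z),
      {x ∈ B | (fun z : F => near x z) = v}.card ≤ Q.card := by
    intro v hv
    obtain ⟨x, hx, rfl⟩ := Finset.mem_image.1 hv
    refine Finset.card_le_card_of_injOn (x⁻¹ * ·) (fun x' hx' => ?_)
      (mul_right_injective _).injOn
    obtain ⟨hx'B, hnear'⟩ := Finset.mem_filter.1 hx'
    refine hQ (inv_mul_mem_smallConj (p := near x) hF (hnear x hx) fun z hz => ?_)
    rw [← congrFun hnear' ⟨z, hz⟩]
    exact hnear x' hx'B z hz
  calc B.card ≤ Q.card * (B.image fun x (z : F) => near x z).card :=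
        Finset.card_le_mul_card_image B Q.card hfiber
    _ ≤ Q.card * F'.card ^ F.card := by
        gcongr
        refine (Finset.card_le_card himage).trans_eq ?_
        rw [Fintype.card_piFinset, Finset.prod_const, Finset.card_univ, Fintype.card_coe]

theorem card_le_card_smallConj_mul_pow (hη0 : 0 ≤ η) (hη : η ≤ 1 / 8) {B₈ B₁ R Q : Finset G}
    (hB₈ : IsLengthBall ℓ 8 B₈) (hB₁ : IsLengthBall ℓ 1 B₁) (hR : ∀ x ∈ R, ℓ x ≤ η / 8)
    {M : ℕ} (hR0 : R.Nonempty) (hRM : B₈.card ≤ M * R.card)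
    (hQ : smallConj ℓ 4 η ⊆ Q) : B₁.card ≤ Q.card * M ^ M := by
  classical
  have hnet (r : ℝ) (hr : r ≤ 7) : ∃ F : Finset G, (∀ z ∈ F, ℓ z ≤ r) ∧
      (∀ y, ℓ y ≤ r → ∃ z ∈ F, ℓ (y⁻¹ * z) ≤ η / 4) ∧ F.card ≤ M := by
    have hmem (y : G) : y ∈ {y ∈ B₈ | ℓ y ≤ r} ↔ ℓ y ≤ r := by
      rw [Finset.mem_filter, and_iff_right_iff_imp, hB₈ y]
      exact fun h => by linarith
    obtain ⟨F, hF, hnet, hcard⟩ := exists_net_card_mul_le (r := η / 4)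
      (B := {y ∈ B₈ | ℓ y ≤ r}) (C := B₈) (R := R) (by positivity)
      (fun x hx => (hR x hx).trans_eq (by ring)) fun x hx y hy => (hB₈ _).2 <|
        (map_mul_le_add ℓ x y).trans (by linarith [(hmem x).1 hx, hR y hy])
    exact ⟨F, fun z hz => (hmem z).1 (hF hz), fun y hy => hnet y ((hmem y).2 hy),
      Nat.le_of_mul_le_mul_right (hcard.trans hRM) hR0.card_pos⟩
  obtain ⟨F, hF4, hF, hFM⟩ := hnet 4 (by norm_num)
  obtain ⟨F', -, hF', hFM'⟩ := hnet 5 (by norm_num)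
  have hM : 0 < M := Nat.pos_of_mul_pos_right <|
    (Finset.card_pos.2 ⟨1, (hB₈ 1).2 (by simp)⟩).trans_le hRM
  calc B₁.card ≤ Q.card * F'.card ^ F.card := card_le_card_mul_pow_of_nets hF
        (fun x hx z hz => hF' _ ((map_mul_le_add ℓ x z).trans
          (by linarith [(hB₁ x).1 hx, hF4 z hz]))) hQ
    _ ≤ Q.card * M ^ M := by gcongr

end Nets

section DoublingOrbit

variable {G : Type*} [Group G] {E : Type*} [NormedAddCommGroup E] [InnerProductSpace ℝ E]
  {π : G →* (E ≃ₗᵢ[ℝ] E)} {f : E}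

theorem exists_subgroup_of_doubling {B : ℕ → Finset G}
    (hB : ∀ j, IsLengthBall (displacement π f) (8 / 2 ^ j) (B j)) {K : ℝ} (hK : 1 ≤ K)
    (hdbl : ∀ j, ((B 0).card : ℝ) ≤ K ^ j * (B j).card) {q : ℕ} (hq : 0 < q)
    (hBq : ∀ x ∈ B 0, x ^ q = 1) {J M : ℕ} (hJ : 2 ^ 50 * q ^ 2 * K ^ 64 ≤ 2 ^ J)
    (hM : K ^ J ≤ M) :
    ∃ H : Subgroup G, (∀ x ∈ H, displacement π f x ≤ 1) ∧
      ((B 0).card : ℝ) ≤ K ^ 3 * M ^ M * (H : Set G).ncard := by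
  set η : ℝ := 64 / 2 ^ J with hη
  have hη0 : 0 ≤ η := by positivity
  have hηK : 2 ^ 44 * q ^ 2 * (K ^ 8) ^ 8 * η ≤ 1 := by
    rw [hη, mul_div_assoc', div_le_one (by positivity)]
    exact le_of_eq_of_le (by ring) hJ
  have hη8 : η ≤ 1 / 8 := le_one_div_eight_of_mul_le_one (one_le_pow₀ hK) hq hη0 hηK
  have hball {j : ℕ} {r : ℝ} (hr : 8 / 2 ^ j = r) : IsLengthBall (displacement π f) r (B j) :=
    hr ▸ hB j
  have hB₈ := hball (j := 0) (r := 8) (by norm_num)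
  have hB₄ := hball (j := 1) (r := 4) (by norm_num)
  have hB₄card : ((B 1).card : ℝ) ≤ K ^ 8 * (B 8).card := (hdbl 8).trans' <| by
    exact_mod_cast Finset.card_le_card (hB₄.subset hB₈ (by norm_num))
  set H := Subgroup.closure (smallConj (displacement π f) 4 η)
  have hH (x) (hx : x ∈ H) : displacement π f x ≤ 1 :=
    displacement_le_one_of_mem_closure_smallConj hB₄ (hball (j := 8) (by norm_num)) hB₄card
      (one_le_pow₀ hK) hq hη0 hηK (fun x hx => hBq x <| (hB₈ x).2 <| by
        linarith [le_of_mem_smallConj (by norm_num) hx]) hx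
  refine ⟨H, hH, ?_⟩
  have hfin : (H : Set G).Finite := (B 0).finite_toSet.subset fun x hx =>
    (hB₈ x).2 ((hH x hx).trans (by norm_num))
  have hBM : ((B 0).card : ℝ) ≤ M * (B J).card := (hdbl J).trans (by gcongr)
  have hcard := card_le_card_smallConj_mul_pow hη0 hη8 hB₈ (hball (j := 3) (by norm_num))
    (fun x hx => ((hB J x).1 hx).trans_eq (by rw [hη]; ring))
    ⟨1, (hB J 1).2 (by rw [map_one_eq_zero]; positivity)⟩ (by exact_mod_cast hBM)
    (Q := hfin.toFinset) (by rw [hfin.coe_toFinset]; exact Subgroup.subset_closure)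
  rw [← Set.ncard_eq_toFinset_card _ hfin] at hcard
  calc ((B 0).card : ℝ) ≤ K ^ 3 * (B 3).card := hdbl 3
    _ ≤ K ^ 3 * ((H : Set G).ncard * M ^ M) := by
      gcongr
      exact_mod_cast hcard
    _ = K ^ 3 * M ^ M * (H : Set G).ncard := by ring

end DoublingOrbit

section Packing

variable {α : Type*} [DecidableEq α]

theorem natCast_vcDim_le_vcDim {𝒜 : Finset (Finset α)} {F : Set (Set α)}
    (h𝒜 : ∀ S ∈ 𝒜, (S : Set α) ∈ F) : (𝒜.vcDim : ℕ∞) ≤ vcDim F := by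
  obtain hempty | hne := 𝒜.shatterer.eq_empty_or_nonempty
  · simp [Finset.vcDim, hempty]
  obtain ⟨U, hU, hcard⟩ := 𝒜.shatterer.exists_mem_eq_sup hne Finset.card
  rw [Finset.mem_shatterer] at hU
  rw [Finset.vcDim, hcard]
  refine le_iSup₂ (f := fun (U : Finset α) (_ : Shatters F ↑U) => (U.card : ℕ∞)) U fun T hT => ?_
  lift T to Finset α using U.finite_toSet.subset hT
  obtain ⟨S, hS, rfl⟩ := hU (Finset.coe_subset.1 hT)
  exact ⟨S, h𝒜 S hS, (Finset.coe_inter U S).symm⟩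

theorem vcDim_image_inter_le (𝒜 : Finset (Finset α)) (T : Finset α) :
    (𝒜.image (· ∩ T)).vcDim ≤ 𝒜.vcDim := by
  refine Finset.sup_le fun U hU => ?_
  rw [Finset.mem_shatterer] at hU
  refine Finset.Shatters.card_le_vcDim fun V hV => ?_
  have hUT : U ⊆ T := by
    obtain ⟨S, hS, hUS⟩ := hU.exists_superset
    obtain ⟨S, -, rfl⟩ := Finset.mem_image.1 hS
    exact hUS.trans Finset.inter_subset_right
  obtain ⟨W, hW, rfl⟩ := hU hV
  obtain ⟨S, hS, rfl⟩ := Finset.mem_image.1 hW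
  exact ⟨S, hS, by rw [← Finset.inter_assoc, Finset.inter_right_comm, Finset.inter_eq_left.2 hUT]⟩

theorem card_le_card_add_one_pow_vcDim {𝒜 : Finset (Finset α)} {T : Finset α}
    (h𝒜 : ∀ S ∈ 𝒜, S ⊆ T) : 𝒜.card ≤ (T.card + 1) ^ 𝒜.vcDim := by
  have hshatterer :
      𝒜.shatterer ⊆ (Finset.range (𝒜.vcDim + 1)).biUnion fun i => T.powersetCard i := by
    intro U hU
    rw [Finset.mem_shatterer] at hU
    obtain ⟨S, hS, hUS⟩ := hU.exists_superset
    exact Finset.mem_biUnion.2 ⟨U.card, Finset.mem_range_succ_iff.2 hU.card_le_vcDim,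
      Finset.mem_powersetCard.2 ⟨hUS.trans (h𝒜 S hS), rfl⟩⟩
  calc 𝒜.card ≤ 𝒜.shatterer.card := 𝒜.card_le_card_shatterer
    _ ≤ ∑ i ∈ Finset.range (𝒜.vcDim + 1), (T.powersetCard i).card :=
        (Finset.card_le_card hshatterer).trans Finset.card_biUnion_le
    _ ≤ ∑ i ∈ Finset.range (𝒜.vcDim + 1), T.card ^ i * 𝒜.vcDim.choose i := by
        gcongr with i hi
        rw [Finset.card_powersetCard]
        exact (Nat.choose_le_pow _ _).trans <|
          Nat.le_mul_of_pos_right _ (Nat.choose_pos (Finset.mem_range_succ_iff.1 hi))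
    _ = (T.card + 1) ^ 𝒜.vcDim := by simp only [add_pow, one_pow, mul_one, Nat.cast_id]

/- Union bound over pairs: `m` independent uniform points of `Ω` all miss a given difference
`S ∆ S'` with probability at most `(1 - r / |Ω|) ^ m`. -/
theorem exists_injOn_inter_of_card_symmDiff_le {Ω : Finset α} {𝒜 : Finset (Finset α)} {r m : ℕ}
    (h𝒜 : ∀ S ∈ 𝒜, S ⊆ Ω) (hsep : ∀ S ∈ 𝒜, ∀ S' ∈ 𝒜, S ≠ S' → r ≤ (S ∆ S').card)
    (hm : 𝒜.card ^ 2 * (Ω.card - r) ^ m < Ω.card ^ m) :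
    ∃ T : Finset α, T.card ≤ m ∧ Set.InjOn (· ∩ T) (𝒜 : Set (Finset α)) := by
  set bad := 𝒜.offDiag.biUnion fun p => Fintype.piFinset fun _ : Fin m => Ω \ (p.1 ∆ p.2)
  have hbad : bad.card ≤ 𝒜.card ^ 2 * (Ω.card - r) ^ m := by
    refine (Finset.card_biUnion_le_card_mul 𝒜.offDiag _ ((Ω.card - r) ^ m) ?_).trans ?_
    · rintro ⟨S, S'⟩ hSS'
      obtain ⟨hS, hS', hne⟩ := Finset.mem_offDiag.1 hSS'
      rw [Fintype.card_piFinset, Finset.prod_const, Finset.card_univ, Fintype.card_fin,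
        Finset.card_sdiff_of_subset
          (Finset.symmDiff_subset_union.trans (Finset.union_subset (h𝒜 S hS) (h𝒜 S' hS')))]
      gcongr
      exact hsep S hS S' hS' hne
    · gcongr
      rw [Finset.offDiag_card, sq]
      exact Nat.sub_le _ _
  have hΩ : (Fintype.piFinset fun _ : Fin m => Ω).card = Ω.card ^ m := by
    rw [Fintype.card_piFinset, Finset.prod_const, Finset.card_univ, Fintype.card_fin]
  obtain ⟨t, ht, htbad⟩ := Finset.exists_mem_notMem_of_card_lt_card (hbad.trans_lt (hΩ ▸ hm))
  refine ⟨Finset.univ.image t, Finset.card_image_le.trans_eq (by simp), fun S hS S' hS' heq => ?_⟩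
  by_contra hne
  refine htbad (Finset.mem_biUnion.2 ⟨(S, S'), Finset.mem_offDiag.2 ⟨hS, hS', hne⟩,
    Fintype.mem_piFinset.2 fun i => Finset.mem_sdiff.2 ⟨Fintype.mem_piFinset.1 ht i, ?_⟩⟩)
  have hi := Finset.mem_image_of_mem t (Finset.mem_univ i)
  have hiff := Finset.ext_iff.1 heq (t i)
  simp only [Finset.mem_inter, hi, and_true] at hiff
  rw [Finset.mem_symmDiff]
  tauto

theorem sq_mul_sub_pow_lt_pow {n N r R : ℝ} {m : ℕ} (hn : 0 < n) (hN : 0 < N) (hrN : r ≤ N)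
    (hR : 0 < R) (hNr : N ≤ R * r) (hm : R * (2 * Real.log n) < m) :
    n ^ 2 * (N - r) ^ m < N ^ m := by
  have hexp : N - r ≤ N * Real.exp (-(1 / R)) := by
    have hr : N * (1 / R) ≤ r := by
      rw [mul_one_div, div_le_iff₀ hR]
      linarith
    nlinarith [Real.add_one_le_exp (-(1 / R))]
  have hlt : n ^ 2 * Real.exp (-(1 / R)) ^ m < 1 := by
    nth_rw 1 [← Real.exp_log hn]
    rw [← Real.exp_nat_mul, ← Real.exp_nat_mul, ← Real.exp_add, Real.exp_lt_one_iff]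
    have hlog : 2 * Real.log n < m * (1 / R) := by
      rw [mul_one_div, lt_div_iff₀ hR]
      linarith
    push_cast
    linarith
  calc n ^ 2 * (N - r) ^ m ≤ n ^ 2 * (N * Real.exp (-(1 / R))) ^ m := by
        gcongr
    _ = N ^ m * (n ^ 2 * Real.exp (-(1 / R)) ^ m) := by ring
    _ < N ^ m * 1 := by gcongr
    _ = N ^ m := mul_one _

theorem le_pow_of_le_mul_log_pow {n R : ℝ} {d : ℕ} (hn : 1 ≤ n) (hR : 1 ≤ R)
    (hnd : n ≤ (R * (2 * Real.log n) + 2) ^ d) : n ≤ ((4 * d + 6) * R) ^ (2 * d) := by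
  have hn0 : 0 < n := by linarith
  set y : ℝ := n ^ (1 / (2 * d + 2) : ℝ) with hy
  have hy1 : 1 ≤ y := Real.one_le_rpow hn (by positivity)
  have hyn : y ^ (2 * d + 2) = n := by
    rw [hy, ← Real.rpow_natCast, ← Real.rpow_mul hn0.le]
    push_cast
    rw [one_div, inv_mul_cancel₀ (by positivity), Real.rpow_one]
  have hlog : Real.log n ≤ y * (2 * d + 2) := by
    simpa [hy] using Real.log_le_rpow_div hn0.le (show (0 : ℝ) < 1 / (2 * d + 2) by positivity)
  have hny : n ≤ ((4 * d + 6) * R * y) ^ d := by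
    have hlog0 : 0 ≤ Real.log n := Real.log_nonneg hn
    refine hnd.trans (pow_le_pow_left₀ (by positivity) ?_ d)
    calc R * (2 * Real.log n) + 2 ≤ R * (2 * (y * (2 * d + 2))) + 2 * (R * y) := by
          gcongr
          linarith [one_le_mul_of_one_le_of_one_le hR hy1]
      _ = (4 * d + 6) * R * y := by ring
  refine le_of_mul_le_mul_right ?_ hn0
  calc n * n ≤ ((4 * d + 6) * R * y) ^ d * ((4 * d + 6) * R * y) ^ d := by gcongr
    _ = ((4 * d + 6) * R) ^ (2 * d) * y ^ (2 * d) := by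
        rw [← pow_add, ← two_mul, mul_pow]
    _ ≤ ((4 * d + 6) * R) ^ (2 * d) * y ^ (2 * d + 2) := by
        gcongr
        omega
    _ = ((4 * d + 6) * R) ^ (2 * d) * n := by rw [hyn]

theorem card_le_pow_of_card_symmDiff_le {Ω : Finset α} {𝒜 : Finset (Finset α)} {d r : ℕ} {R : ℝ}
    (hR : 1 ≤ R) (hΩ : Ω.Nonempty) (hΩr : (Ω.card : ℝ) ≤ R * r) (hr : r ≤ Ω.card)
    (h𝒜 : ∀ S ∈ 𝒜, S ⊆ Ω) (hsep : ∀ S ∈ 𝒜, ∀ S' ∈ 𝒜, S ≠ S' → r ≤ (S ∆ S').card)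
    (hd : 𝒜.vcDim ≤ d) : (𝒜.card : ℝ) ≤ ((4 * d + 6) * R) ^ (2 * d) := by
  rcases 𝒜.eq_empty_or_nonempty with rfl | hne
  · rw [Finset.card_empty, Nat.cast_zero]
    positivity
  have hn : (1 : ℝ) ≤ 𝒜.card := by exact_mod_cast hne.card_pos
  set m := ⌊R * (2 * Real.log 𝒜.card)⌋₊ + 1 with hm
  have hcount := sq_mul_sub_pow_lt_pow (n := 𝒜.card) (m := m) (by linarith)
    (Nat.cast_pos.2 hΩ.card_pos) (Nat.cast_le.2 hr) (by linarith) hΩr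
    (by exact_mod_cast Nat.lt_floor_add_one _)
  obtain ⟨T, hTm, hinj⟩ := exists_injOn_inter_of_card_symmDiff_le h𝒜 hsep (m := m) (by
    rw [← Nat.cast_sub hr] at hcount
    exact_mod_cast hcount)
  refine le_pow_of_le_mul_log_pow hn hR ?_
  have htrace : 𝒜.card ≤ (m + 1) ^ d := calc
    𝒜.card = (𝒜.image (· ∩ T)).card := (Finset.card_image_of_injOn hinj).symm
    _ ≤ (T.card + 1) ^ (𝒜.image (· ∩ T)).vcDim :=
      card_le_card_add_one_pow_vcDim fun S hS => by
        obtain ⟨S, -, rfl⟩ := Finset.mem_image.1 hS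
        exact Finset.inter_subset_right
    _ ≤ (m + 1) ^ d := pow_le_pow (by omega) (by omega) ((vcDim_image_inter_le 𝒜 T).trans hd)
  have hm2 : (m : ℝ) + 1 ≤ R * (2 * Real.log 𝒜.card) + 2 := by
    have := Nat.floor_le <|
      mul_nonneg (zero_le_one.trans hR) (mul_nonneg zero_le_two (Real.log_nonneg hn))
    rw [hm]
    push_cast
    linarith
  calc (𝒜.card : ℝ) ≤ ((m : ℝ) + 1) ^ d := by exact_mod_cast htrace
    _ ≤ (R * (2 * Real.log 𝒜.card) + 2) ^ d := by gcongr

end Packing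

section RightRegularRepresentation

open scoped lp

variable {G : Type*} [Group G]

theorem norm_sq_eq_tsum_sq {ι : Type*} (f : ℓ²(ι, ℝ)) : ‖f‖ ^ 2 = ∑' i, f i ^ 2 := by
  rw [← real_inner_self_eq_norm_sq, lp.inner_eq_tsum]
  simp only [real_inner_self_eq_norm_sq, Real.norm_eq_abs, sq_abs]

/-- The right regular representation of `G` on `ℓ²(G)`, `(ρ x f) g = f (g * x)`. -/
noncomputable def rightRegular : G →* (ℓ²(G, ℝ) ≃ₗᵢ[ℝ] ℓ²(G, ℝ)) where
  toFun x :=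
    let translate (y : G) (f : ℓ²(G, ℝ)) : ℓ²(G, ℝ) :=
      ⟨fun g => f (g * y), memℓp_gen <|
        (Equiv.mulRight y).summable_iff.2 ((memℓp_gen_iff (by norm_num)).1 f.2)⟩
    { toFun := translate x
      invFun := translate x⁻¹
      map_add' := fun _ _ => rfl
      map_smul' := fun _ _ => rfl
      left_inv := fun f => by ext g; exact congrArg f (inv_mul_cancel_right g x)
      right_inv := fun f => by ext g; exact congrArg f (mul_inv_cancel_right g x)
      norm_map' := fun f => by
        rw [← sq_eq_sq₀ (norm_nonneg _) (norm_nonneg _), norm_sq_eq_tsum_sq, norm_sq_eq_tsum_sq]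
        exact (Equiv.mulRight x).tsum_eq fun g => f g ^ 2 }
  map_one' := by ext f g; exact congrArg f (mul_one g)
  map_mul' x y := by ext f g; exact congrArg f (mul_assoc g x y).symm

theorem rightRegular_apply (x : G) (f : ℓ²(G, ℝ)) (g : G) : rightRegular x f g = f (g * x) := rfl

/-- The indicator function of a finite set `S`, as an element of `ℓ²`. -/
noncomputable def indicatorL2 {ι : Type*} (S : Finset ι) : ℓ²(ι, ℝ) :=
  ⟨(S : Set ι).indicator 1, (memℓp_zero
    (S.finite_toSet.subset fun _ h => Set.mem_of_indicator_ne_zero h)).of_exponent_ge zero_le⟩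

theorem indicatorL2_apply {ι : Type*} [DecidableEq ι] (S : Finset ι) (i : ι) :
    indicatorL2 S i = if i ∈ S then 1 else 0 := by
  simp [indicatorL2, Set.indicator_apply]

theorem norm_indicatorL2_sub_sq {ι : Type*} [DecidableEq ι] (S T : Finset ι) :
    ‖indicatorL2 S - indicatorL2 T‖ ^ 2 = ((S ∆ T).card : ℝ) := by
  have hsq (i : ι) : (indicatorL2 S - indicatorL2 T) i ^ 2 = if i ∈ S ∆ T then 1 else 0 := by
    rw [lp.coeFn_sub, Pi.sub_apply, indicatorL2_apply, indicatorL2_apply]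
    by_cases hS : i ∈ S <;> by_cases hT : i ∈ T <;> simp [Finset.mem_symmDiff, hS, hT]
  rw [norm_sq_eq_tsum_sq, tsum_congr hsq, tsum_eq_sum (s := S ∆ T) fun i hi => if_neg hi,
    Finset.sum_boole, Finset.filter_mem_eq_inter, Finset.inter_self]

theorem rightRegular_inv_indicatorL2 [DecidableEq G] (x : G) (S : Finset G) :
    rightRegular x⁻¹ (indicatorL2 S) = indicatorL2 (S * {x}) := by
  ext g
  rw [rightRegular_apply, indicatorL2_apply, indicatorL2_apply]
  simp [Finset.mem_mul, ← eq_mul_inv_iff_mul_eq]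

theorem displacement_rightRegular_sq [DecidableEq G] (S : Finset G) (c : ℝ) (x : G) :
    displacement rightRegular (c • indicatorL2 S) x ^ 2 = c ^ 2 * ((S * {x}) ∆ S).card := by
  rw [← map_inv_eq_map, displacement_apply, map_smul, rightRegular_inv_indicatorL2, ← smul_sub,
    norm_smul, mul_pow, norm_indicatorL2_sub_sq, Real.norm_eq_abs, sq_abs]

theorem mem_stR_coe [DecidableEq G] {S : Finset G} {δ : ℝ} {x : G} :
    x ∈ stR (S : Set G) δ ↔ (((S * {x}) ∆ S).card : ℝ) ≤ δ * S.card := by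
  rw [← Set.ncard_coe_finset S, ← Set.ncard_coe_finset (_ ∆ _), Finset.coe_symmDiff,
    Finset.coe_mul, Finset.coe_singleton]
  rfl

/- The amplitude is chosen so that the ball of radius `8` is exactly `stR S δ`; since the length is
the square root of a cardinality, halving the radius divides `δ` by `4`. -/
theorem displacement_rightRegular_le_iff {S : Finset G} (hS : S.Nonempty) {δ : ℝ} (hδ : 0 < δ)
    (j : ℕ) (x : G) :
    displacement rightRegular ((8 / √(δ * S.card)) • indicatorL2 S) x ≤ 8 / 2 ^ j ↔
      x ∈ stR (S : Set G) (δ / 4 ^ j) := by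
  classical
  have hδS : 0 < δ * S.card := mul_pos hδ (Nat.cast_pos.2 hS.card_pos)
  rw [mem_stR_coe, ← sq_le_sq₀ (apply_nonneg _ _) (by positivity), displacement_rightRegular_sq,
    div_pow, div_pow, Real.sq_sqrt hδS.le, pow_right_comm,
    show ((2 : ℝ) ^ 2) = 4 by norm_num, div_mul_eq_mul_div, div_mul_eq_mul_div,
    div_le_div_iff₀ hδS (by positivity), le_div_iff₀ (by positivity), mul_assoc,
    mul_le_mul_iff_right₀ (by norm_num)]

end RightRegularRepresentation

section AlmostStabilizer

variable {G : Type*} [Group G]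

theorem stR_mono {A : Set G} {δ ε : ℝ} (h : δ ≤ ε) : stR A δ ⊆ stR A ε := fun _ hx =>
  le_trans (Set.mem_ofPred_eq ▸ hx) (by gcongr)

variable {S : Finset G}

theorem stR_subset_inv_mul (hS : S.Nonempty) {δ : ℝ} (hδ : δ < 2) :
    stR (S : Set G) δ ⊆ (S : Set G)⁻¹ * S := by
  classical
  intro x hx
  by_contra hxS
  have hdisj : Disjoint (S * {x}) S := by
    rw [Finset.disjoint_left]
    intro _ hax hb
    obtain ⟨a, ha, _, hy, rfl⟩ := Finset.mem_mul.1 hax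
    rw [Finset.mem_singleton.1 hy] at hb
    exact hxS ⟨a⁻¹, Set.inv_mem_inv.2 ha, a * x, hb, inv_mul_cancel_left a x⟩
  rw [mem_stR_coe, hdisj.symmDiff_eq_sup, Finset.sup_eq_union, Finset.card_union_of_disjoint hdisj,
    Finset.card_mul_singleton] at hx
  have hS0 : (0 : ℝ) < S.card := Nat.cast_pos.2 hS.card_pos
  push_cast at hx
  nlinarith

theorem finite_stR (hS : S.Nonempty) {δ : ℝ} (hδ : δ < 2) : (stR (S : Set G) δ).Finite :=
  (S.finite_toSet.inv.mul S.finite_toSet).subset (stR_subset_inv_mul hS hδ)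

variable [DecidableEq G]

theorem card_mul_inv_mul_le {k : ℝ} (hk : ((S ^ 3).card : ℝ) ≤ k * S.card) :
    ((S * S⁻¹ * S).card : ℝ) ≤ k ^ 3 * S.card := by
  simpa [List.finRange_succ, mul_assoc] using
    Finset.small_alternating_pow_of_small_tripling le_rfl hk ![1, -1, 1]
      (by intro i; fin_cases i <;> simp)

theorem card_mul_singleton_symmDiff (S : Finset G) (x y : G) :
    ((S * {x}) ∆ (S * {y})).card = ((S * {x * y⁻¹}) ∆ S).card := by
  rw [← Finset.card_smul_finset (MulOpposite.op y) ((S * {x * y⁻¹}) ∆ S),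
    Finset.smul_finset_symmDiff, ← Finset.mul_singleton, ← Finset.mul_singleton, mul_assoc,
    Finset.singleton_mul_singleton, inv_mul_cancel_right]

theorem exists_separated_translates (hS : S.Nonempty) {δ : ℝ} (hδ0 : 0 ≤ δ) (hδ : δ < 2) :
    ∃ X ⊆ S, (∀ x ∈ X, ∀ y ∈ X, x ≠ y → δ * S.card < ((S * {x}) ∆ (S * {y})).card) ∧
      S.card ≤ X.card * (stR (S : Set G) δ).ncard := by
  let U : SetRel G G := {p | (((S * {p.1}) ∆ (S * {p.2})).card : ℝ) ≤ δ * S.card}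
  have : U.IsRefl := ⟨fun x => by simpa [U] using by positivity⟩
  have : U.IsSymm := ⟨fun x y h => by simpa [U, symmDiff_comm] using h⟩
  obtain ⟨X, hXS, hsep, hcov⟩ := exists_isSeparated_isCover U S
  refine ⟨X, hXS, fun x hx y hy hxy => not_le.1 (hsep hx hy hxy), ?_⟩
  have hsub : S ⊆ (finite_stR hS hδ).toFinset * X := fun x hx => by
    obtain ⟨z, hz, hxz⟩ := hcov hx
    refine Finset.mem_mul.2 ⟨x * z⁻¹, ?_, z, hz, inv_mul_cancel_right x z⟩
    rw [Set.Finite.mem_toFinset, mem_stR_coe, ← card_mul_singleton_symmDiff]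
    exact hxz
  rw [Set.ncard_eq_toFinset_card _ (finite_stR hS hδ), mul_comm]
  exact (Finset.card_le_card hsub).trans Finset.card_mul_le

theorem card_le_pow_mul_ncard_stR (hS : S.Nonempty) {d : ℕ}
    (hd : vcDim (rightFam (S : Set G) S) ≤ d) {k : ℝ} (hk1 : 1 ≤ k)
    (hk : ((S * S).card : ℝ) ≤ k * S.card) {δ : ℝ} (hδ0 : 0 < δ) (hδ1 : δ ≤ 1) :
    (S.card : ℝ) ≤ ((4 * d + 6) * (k / δ)) ^ (2 * d) * (stR (S : Set G) δ).ncard := by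
  obtain ⟨X, hXS, hsep, hcard⟩ := exists_separated_translates hS hδ0.le (hδ1.trans_lt one_lt_two)
  have hinj : Set.InjOn (fun x => S * {x}) (X : Set G) := fun x hx y hy hxy => by
    by_contra hne
    have hlt := hsep x hx y hy hne
    rw [show S * {x} = S * {y} from hxy, symmDiff_self, Finset.bot_eq_empty, Finset.card_empty,
      Nat.cast_zero] at hlt
    exact hlt.not_ge (by positivity)
  have hX : (X.card : ℝ) ≤ ((4 * d + 6) * (k / δ)) ^ (2 * d) := by
    rw [← Finset.card_image_of_injOn hinj]
    refine card_le_pow_of_card_symmDiff_le (Ω := S * S) (r := ⌈δ * S.card⌉₊) ?_ (hS.mul hS) ?_ ?_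
      ?_ ?_ ?_
    · exact (one_le_div₀ hδ0).2 (hδ1.trans hk1)
    · calc ((S * S).card : ℝ) ≤ k / δ * (δ * S.card) := by
            rwa [← mul_assoc, div_mul_cancel₀ _ hδ0.ne']
        _ ≤ k / δ * ⌈δ * S.card⌉₊ := by
            gcongr
            exact Nat.le_ceil _
    · exact Nat.ceil_le.2 <| (mul_le_of_le_one_left (Nat.cast_nonneg _) hδ1).trans <|
        Nat.cast_le.2 (Finset.card_le_card_mul_left hS)
    · rw [Finset.forall_mem_image]
      exact fun x hx => Finset.mul_subset_mul_left (Finset.singleton_subset_iff.2 (hXS hx))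
    · rw [Finset.forall_mem_image]
      intro x hx
      rw [Finset.forall_mem_image]
      exact fun y hy hne => Nat.ceil_le.2 (hsep x hx y hy fun h => hne (h ▸ rfl)).le
    · refine Nat.cast_le.1 ((natCast_vcDim_le_vcDim ?_).trans hd)
      rw [Finset.forall_mem_image]
      exact fun x hx => ⟨x, hXS hx, by rw [Finset.coe_mul, Finset.coe_singleton]⟩
  calc (S.card : ℝ) ≤ X.card * (stR (S : Set G) δ).ncard := by exact_mod_cast hcard
    _ ≤ _ := by gcongr

end AlmostStabilizer

section LargeSubgroup

theorem exists_doubling_scale (b : ℕ → ℕ) {K : ℕ} (hK : 0 < K) :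
    ∃ i, (∀ j, b i ≤ K ^ j * b (i + j)) ∧ b i * K ^ i ≤ b 0 := by
  let g : ℕ → ℕ := fun i => b i * K ^ i
  refine ⟨Function.argmin g, fun j => ?_, by simpa [g] using Function.argmin_le g 0⟩
  refine Nat.le_of_mul_le_mul_right ?_ (pow_pos hK (Function.argmin g))
  calc g (Function.argmin g) ≤ g (Function.argmin g + j) := Function.argmin_le g _
    _ = K ^ j * b (Function.argmin g + j) * K ^ Function.argmin g := by
        simp only [g, pow_add]
        ring

theorem one_le_of_card_pow_le {G : Type*} [Group G] [DecidableEq G] {S : Finset G}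
    (hS : S.Nonempty) {n : ℕ} (hn : 1 ≤ n) {k : ℝ} (hk : ((S ^ n).card : ℝ) ≤ k * S.card) :
    1 ≤ k := by
  have hcard : S.card ≤ (S ^ n).card := by simpa only [pow_one] using hS.card_pow_mono hn
  exact (le_mul_iff_one_le_left (Nat.cast_pos.2 hS.card_pos)).1 ((Nat.cast_le.2 hcard).trans hk)

theorem le_mul_pow_of_le_mul_pow_mul {N n y P κ : ℝ} {m : ℕ} (hN : 0 < N) (hy : 0 < y)
    (hP : 0 ≤ P) (hlow : N ≤ (P * y) ^ m * n) (hup : n * y ^ (m + 1) ≤ κ * N) :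
    y ≤ κ * P ^ m := by
  refine le_of_mul_le_mul_left ?_ hN
  calc N * y ≤ (P * y) ^ m * n * y := by gcongr
    _ = P ^ m * (n * y ^ (m + 1)) := by ring
    _ ≤ P ^ m * (κ * N) := by gcongr
    _ = N * (κ * P ^ m) := by ring

variable {G : Type*} [Group G] {S : Finset G}

theorem exists_subgroup_of_stR_doubling (hS : S.Nonempty) {δ : ℝ} (hδ0 : 0 < δ) (hδ1 : δ ≤ 1)
    {K : ℝ} (hK : 1 ≤ K)
    (hdbl : ∀ j : ℕ,
      ((stR (S : Set G) δ).ncard : ℝ) ≤ K ^ j * (stR (S : Set G) (δ / 4 ^ j)).ncard)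
    {q : ℕ} (hq : 0 < q) (hexp : ∀ x ∈ (S : Set G)⁻¹ * S, x ^ q = 1) {J M : ℕ}
    (hJ : 2 ^ 50 * q ^ 2 * K ^ 64 ≤ 2 ^ J) (hM : K ^ J ≤ M) :
    ∃ H : Subgroup G, (H : Set G) ⊆ stR S δ ∧
      ((stR (S : Set G) δ).ncard : ℝ) ≤ K ^ 3 * M ^ M * (H : Set G).ncard := by
  have hfin (j : ℕ) : (stR (S : Set G) (δ / 4 ^ j)).Finite := finite_stR hS <|
    ((div_le_self hδ0.le (one_le_pow₀ (by norm_num))).trans hδ1).trans_lt one_lt_two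
  have hball (j : ℕ) : IsLengthBall (displacement rightRegular
      ((8 / √(δ * S.card)) • indicatorL2 S)) (8 / 2 ^ j) (hfin j).toFinset := fun x => by
    rw [Set.Finite.mem_toFinset, displacement_rightRegular_le_iff hS hδ0]
  have hzero : stR (S : Set G) (δ / 4 ^ 0) = stR S δ := by rw [pow_zero, div_one]
  have hcard (j : ℕ) : (hfin j).toFinset.card = (stR (S : Set G) (δ / 4 ^ j)).ncard :=
    (Set.ncard_eq_toFinset_card _ _).symm
  obtain ⟨H, hHle, hHcard⟩ := exists_subgroup_of_doubling hball hK
    (fun j => by rw [hcard, hcard, hzero]; exact hdbl j) hq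
    (fun x hx => hexp x <| stR_subset_inv_mul hS (hδ1.trans_lt one_lt_two) <|
      hzero ▸ (hfin 0).mem_toFinset.1 hx) hJ hM
  rw [hcard, hzero] at hHcard
  refine ⟨H, fun x hx => hzero ▸ ?_, hHcard⟩
  exact (displacement_rightRegular_le_iff hS hδ0 0 x).1 ((hHle x hx).trans (by norm_num))

theorem exists_subgroup_subset_stR_of_le [DecidableEq G] (hS : S.Nonempty) {d q : ℕ} (hq : 0 < q)
    (hexp : ∀ x ∈ (S : Set G)⁻¹ * S, x ^ q = 1) (hd : vcDim (rightFam (S : Set G) S) ≤ d)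
    {k : ℝ} (hk1 : 1 ≤ k) (hk2 : ((S * S).card : ℝ) ≤ k * S.card)
    (hk3 : ((S⁻¹ * S).card : ℝ) ≤ k ^ 3 * S.card) {ε : ℝ} (hε0 : 0 < ε) (hε1 : ε ≤ 1)
    {J M : ℕ} (hJ : 2 ^ 50 * q ^ 2 * (4 ^ (2 * d + 1) : ℝ) ^ 64 ≤ 2 ^ J)
    (hM : (4 ^ (2 * d + 1) : ℝ) ^ J ≤ M) :
    ∃ H : Subgroup G, (H : Set G) ⊆ stR S ε ∧
      (S.card : ℝ) ≤ ((4 * d + 6) ^ (2 * d + 1) * (k / ε) ^ (2 * d + 4)) ^ (2 * d) *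
        ((4 ^ (2 * d + 1)) ^ 3 * M ^ M * (H : Set G).ncard) := by
  obtain ⟨i, hdbl, hi⟩ := exists_doubling_scale (K := 4 ^ (2 * d + 1))
    (fun i => (stR (S : Set G) (ε / 4 ^ i)).ncard) (by positivity)
  rw [pow_zero, div_one] at hi
  set δ : ℝ := ε / 4 ^ i with hδ
  have hδ0 : 0 < δ := by positivity
  have hδε : δ ≤ ε := div_le_self hε0.le (one_le_pow₀ (by norm_num))
  obtain ⟨H, hHδ, hHcard⟩ := exists_subgroup_of_stR_doubling hS hδ0 (hδε.trans hε1)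
    (one_le_pow₀ (by norm_num)) (fun j => by
      rw [show δ / 4 ^ j = ε / 4 ^ (i + j) by rw [hδ, div_div, pow_add]]
      exact_mod_cast hdbl j) hq hexp hJ hM
  refine ⟨H, hHδ.trans (stR_mono hδε), ?_⟩
  have hlow : (S.card : ℝ) ≤
      ((4 * d + 6) * (k / ε) * 4 ^ i) ^ (2 * d) * (stR (S : Set G) δ).ncard := by
    have h := card_le_pow_mul_ncard_stR hS hd hk1 hk2 hδ0 (hδε.trans hε1)
    rwa [hδ, div_div_eq_mul_div, mul_div_right_comm, ← mul_assoc] at h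
  have hup : ((stR (S : Set G) δ).ncard : ℝ) * (4 ^ i) ^ (2 * d + 1) ≤ (k / ε) ^ 3 * S.card := by
    have hsub : (stR (S : Set G) ε).ncard ≤ (S⁻¹ * S).card := by
      rw [← Set.ncard_coe_finset, Finset.coe_mul, Finset.coe_inv]
      exact Set.ncard_le_ncard (stR_subset_inv_mul hS (hε1.trans_lt one_lt_two))
        (S.finite_toSet.inv.mul S.finite_toSet)
    calc ((stR (S : Set G) δ).ncard : ℝ) * (4 ^ i) ^ (2 * d + 1)
        ≤ (S⁻¹ * S).card := by
          rw [pow_right_comm]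
          exact_mod_cast hi.trans hsub
      _ ≤ k ^ 3 * S.card := hk3
      _ ≤ (k / ε) ^ 3 * S.card := by
          gcongr
          exact le_div_self (zero_le_one.trans hk1) hε0 hε1
  have h4i := le_mul_pow_of_le_mul_pow_mul (Nat.cast_pos.2 hS.card_pos) (by positivity)
    (by positivity) hlow hup
  calc (S.card : ℝ)
      ≤ ((4 * d + 6) * (k / ε) * 4 ^ i) ^ (2 * d) * (stR (S : Set G) δ).ncard := hlow
    _ ≤ ((4 * d + 6) * (k / ε) * ((k / ε) ^ 3 * ((4 * d + 6) * (k / ε)) ^ (2 * d))) ^ (2 * d) *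
          ((4 ^ (2 * d + 1)) ^ 3 * M ^ M * (H : Set G).ncard) := by gcongr
    _ = _ := by
        rw [mul_pow _ (k / ε) (2 * d)]
        congr 2
        ring

theorem exists_subgroup_subset_stR (d : ℕ) {q : ℕ} (hq : 0 < q) :
    ∃ c : ℝ, ∀ (G : Type*) [Group G] [DecidableEq G] (S : Finset G), S.Nonempty →
      (∀ x ∈ (S : Set G)⁻¹ * S, x ^ q = 1) → vcDim (rightFam (S : Set G) S) ≤ d →
      ∀ k : ℝ, ((S ^ 3).card : ℝ) ≤ k * S.card → ∀ ε : ℝ, 0 < ε → ε ≤ 1 →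
      ∃ H : Subgroup G, (H : Set G) ⊆ stR S ε ∧
        (S.card : ℝ) ≤ c * (k / ε) ^ ((2 * d + 4) * (2 * d)) * (H : Set G).ncard := by
  obtain ⟨J, hJ⟩ := pow_unbounded_of_one_lt (2 ^ 50 * q ^ 2 * (4 ^ (2 * d + 1) : ℝ) ^ 64)
    one_lt_two
  obtain ⟨M, hM⟩ := exists_nat_ge ((4 ^ (2 * d + 1) : ℝ) ^ J)
  refine ⟨((4 * d + 6) ^ (2 * d + 1)) ^ (2 * d) * ((4 ^ (2 * d + 1)) ^ 3 * M ^ M),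
    fun G _ _ S hS hexp hd k hk ε hε0 hε1 => ?_⟩
  have hk1 : 1 ≤ k := one_le_of_card_pow_le hS (by norm_num) hk
  have hk2 : ((S * S).card : ℝ) ≤ k * S.card := by
    rw [← sq]
    exact (Nat.cast_le.2 (hS.card_pow_mono (by norm_num : 2 ≤ 3))).trans hk
  have hk3 : ((S⁻¹ * S).card : ℝ) ≤ k ^ 3 * S.card := by
    refine le_trans (Nat.cast_le.2 ?_) (card_mul_inv_mul_le hk)
    rw [mul_assoc]
    exact Finset.card_le_card_mul_left hS
  obtain ⟨H, hHε, hcard⟩ :=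
    exists_subgroup_subset_stR_of_le hS hq hexp hd hk1 hk2 hk3 hε0 hε1 hJ.le hM
  exact ⟨H, hHε, hcard.trans_eq (by rw [mul_pow, ← pow_mul (k / ε)]; ring)⟩

end LargeSubgroup

section CosetCounting

variable {G : Type*} [Group G] [DecidableEq G] {S : Finset G}

theorem card_symmDiff_of_card_eq {α : Type*} [DecidableEq α] {s t : Finset α}
    (h : s.card = t.card) : (s ∆ t).card = 2 * (s \ t).card := by
  rw [symmDiff_def, Finset.sup_eq_union, Finset.card_union_of_disjoint disjoint_sdiff_sdiff,
    Finset.card_sdiff_comm h, two_mul]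

theorem sum_card_smul_sdiff_eq (S T : Finset G) :
    ∑ x ∈ S, (x • T \ S).card = ∑ t ∈ T, ((S * {t}) \ S).card := by
  have hleft (x : G) : (x • T \ S).card = (T.filter fun t => x * t ∉ S).card := by
    rw [Finset.sdiff_eq_filter, ← Finset.image_smul, Finset.filter_image,
      Finset.card_image_of_injective _ (MulAction.injective x)]
    rfl
  have hright (t : G) : ((S * {t}) \ S).card = (S.filter fun x => x * t ∉ S).card := by
    rw [Finset.mul_singleton, Finset.sdiff_eq_filter, ← Finset.image_smul, Finset.filter_image,
      Finset.card_image_of_injective _ (MulAction.injective (MulOpposite.op t))]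
    rfl
  simp_rw [hleft, hright]
  exact Finset.sum_card_bipartiteAbove_eq_sum_card_bipartiteBelow fun x t => x * t ∉ S

theorem two_mul_sum_card_smul_sdiff_le {T : Finset G} {ε : ℝ} (hTS : (T : Set G) ⊆ stR S ε) :
    2 * ((∑ x ∈ S, (x • T \ S).card : ℕ) : ℝ) ≤ ε * S.card * T.card := by
  rw [sum_card_smul_sdiff_eq, Nat.cast_sum, Finset.mul_sum, mul_comm _ (T.card : ℝ), ← nsmul_eq_mul]
  refine Finset.sum_le_card_nsmul _ _ _ fun t ht => ?_
  have h := mem_stR_coe.1 (hTS ht)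
  rw [card_symmDiff_of_card_eq (Finset.card_mul_singleton S t)] at h
  exact_mod_cast h

variable {H : Subgroup G} {T : Finset G}

theorem nonempty_of_coe_eq {G : Type*} [Group G] {H : Subgroup G} {T : Finset G}
    (hT : (T : Set G) = H) : T.Nonempty :=
  ⟨1, Finset.mem_coe.1 (hT ▸ H.one_mem)⟩

theorem mem_smul_finset_iff_inv_mul_mem (hT : (T : Set G) = H) {x y : G} :
    y ∈ x • T ↔ x⁻¹ * y ∈ H := by
  rw [← Finset.inv_smul_mem_iff, ← Finset.mem_coe, hT, SetLike.mem_coe, smul_eq_mul]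

theorem mem_smul_finset_comm (hT : (T : Set G) = H) {x y : G} : y ∈ x • T ↔ x ∈ y • T := by
  rw [mem_smul_finset_iff_inv_mul_mem hT, mem_smul_finset_iff_inv_mul_mem hT, ← inv_mem_iff,
    mul_inv_rev, inv_inv]

theorem smul_finset_eq_of_mem (hT : (T : Set G) = H) {x y : G} (hy : y ∈ x • T) :
    y • T = x • T := by
  rw [← Finset.coe_inj, Finset.coe_smul_finset, Finset.coe_smul_finset, hT, eq_comm]
  exact (leftCoset_eq_iff H).2 ((mem_smul_finset_iff_inv_mul_mem hT).1 hy)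

theorem sum_card_smul_inter_comm (hT : (T : Set G) = H) (X Y : Finset G) :
    ∑ x ∈ X, (x • T ∩ Y).card = ∑ y ∈ Y, (y • T ∩ X).card := by
  have hfilter (x : G) (Y : Finset G) : x • T ∩ Y = Y.filter fun y => y ∈ x • T := by
    rw [Finset.inter_comm, Finset.filter_mem_eq_inter]
  calc ∑ x ∈ X, (x • T ∩ Y).card = ∑ x ∈ X, (Y.filter fun y => y ∈ x • T).card := by
        simp_rw [hfilter]
    _ = ∑ y ∈ Y, (X.filter fun x => y ∈ x • T).card :=
        Finset.sum_card_bipartiteAbove_eq_sum_card_bipartiteBelow fun x y => y ∈ x • T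
    _ = ∑ y ∈ Y, (y • T ∩ X).card := Finset.sum_congr rfl fun y _ => by
        rw [hfilter, Finset.filter_congr fun x _ => mem_smul_finset_comm hT]

theorem sum_card_smul_inter_le (hT : (T : Set G) = H) {W X : Finset G} (hW : Disjoint W S) :
    ∑ y ∈ W, (y • T ∩ X).card ≤ ∑ x ∈ X, (x • T \ S).card := by
  rw [sum_card_smul_inter_comm hT]
  refine Finset.sum_le_sum fun x _ => Finset.card_le_card fun y hy => ?_
  rw [Finset.mem_inter] at hy
  exact Finset.mem_sdiff.2 ⟨hy.1, Finset.disjoint_left.1 hW hy.2⟩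

theorem exists_transversal (hT : (T : Set G) = H) (B : Finset G) :
    ∃ F ⊆ B, B ⊆ F * T ∧ F.card * T.card = (F * T).card := by
  let U : SetRel G G := {p | p.1⁻¹ * p.2 ∈ H}
  have : U.IsRefl := ⟨fun x => by simp [U]⟩
  have : U.IsSymm := ⟨fun x y h => by simpa [U] using H.inv_mem h⟩
  obtain ⟨F, hFB, hsep, hcov⟩ := exists_isSeparated_isCover U B
  refine ⟨F, hFB, fun y hy => ?_, (Finset.card_mul_iff.2 ?_).symm⟩
  · obtain ⟨x, hx, hyx⟩ := hcov hy
    exact Finset.mem_mul.2 ⟨x, hx, x⁻¹ * y, by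
      rw [← Finset.mem_coe, hT]
      exact U.symm hyx, mul_inv_cancel_left x y⟩
  · rintro ⟨x, s⟩ ⟨hx, hs⟩ ⟨y, t⟩ ⟨hy, ht⟩ (hxy : x * s = y * t)
    rw [hT] at hs ht
    obtain rfl : x = y := by
      by_contra hne
      refine hsep hx hy hne (show x⁻¹ * y ∈ H from ?_)
      rw [show x⁻¹ * y = s * t⁻¹ by rw [eq_mul_inv_iff_mul_eq, mul_assoc, ← hxy,
        inv_mul_cancel_left]]
      exact H.mul_mem hs (H.inv_mem ht)
    rw [mul_left_cancel hxy]

theorem card_symmDiff_mul_card_le (hT : (T : Set G) = H) {U : Finset G}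
    (hUT : ∀ x ∈ U, x • T ⊆ U) (hU : ∀ x ∈ U, T.card ≤ 2 * (x • T ∩ S).card)
    (hSU : ∀ x ∈ S \ U, T.card ≤ 2 * (x • T \ S).card) :
    (S ∆ U).card * T.card ≤ 2 * ∑ x ∈ S, (x • T \ S).card := by
  have hSU' : (S \ U).card * T.card ≤ 2 * ∑ x ∈ S \ U, (x • T \ S).card := by
    rw [Finset.mul_sum]
    exact Finset.card_nsmul_le_sum _ _ _ hSU
  have hUS : (U \ S).card * T.card ≤ 2 * ∑ x ∈ S ∩ U, (x • T \ S).card := by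
    refine le_trans ?_ (Nat.mul_le_mul_left 2
      (sum_card_smul_inter_le hT (Finset.sdiff_disjoint (t := U))))
    rw [Finset.mul_sum]
    refine Finset.card_nsmul_le_sum _ _ _ fun y hy => ?_
    have hyU := (Finset.mem_sdiff.1 hy).1
    rw [← Finset.inter_assoc, Finset.inter_right_comm, Finset.inter_eq_left.2 (hUT y hyU)]
    exact hU y hyU
  calc (S ∆ U).card * T.card ≤ ((S \ U).card + (U \ S).card) * T.card :=
        Nat.mul_le_mul_right _ (Finset.card_union_le _ _)
    _ ≤ 2 * (∑ x ∈ S ∩ U, (x • T \ S).card + ∑ x ∈ S \ U, (x • T \ S).card) := by linarith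
    _ = 2 * ∑ x ∈ S, (x • T \ S).card := by rw [Finset.sum_inter_add_sum_sdiff]

/- The cosets kept are those at least half of which lies in `S`. -/
theorem exists_card_symmDiff_mul_le (hT : (T : Set G) = H) {ε : ℝ}
    (hTS : (T : Set G) ⊆ stR S ε) :
    ∃ F ⊆ S, F.card * T.card = (F * T).card ∧ ((S ∆ (F * T)).card : ℝ) ≤ ε * S.card := by
  obtain ⟨F, hFB, hBF, hFT⟩ :=
    exists_transversal hT (S.filter fun x => T.card ≤ 2 * (x • T ∩ S).card)
  have hcoset {x : G} (hx : x ∈ F * T) : ∃ f ∈ F, x • T = f • T := by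
    obtain ⟨f, hf, t, ht, rfl⟩ := Finset.mem_mul.1 hx
    exact ⟨f, hf, smul_finset_eq_of_mem hT (Finset.smul_mem_smul_finset ht)⟩
  have hT0 : (0 : ℝ) < T.card := Nat.cast_pos.2 (nonempty_of_coe_eq hT).card_pos
  refine ⟨F, hFB.trans (Finset.filter_subset _ _), hFT, le_of_mul_le_mul_right ?_ hT0⟩
  refine le_trans ?_ (two_mul_sum_card_smul_sdiff_le hTS)
  refine mod_cast card_symmDiff_mul_card_le hT ?_ ?_ ?_
  · intro x hx
    obtain ⟨f, hf, hxf⟩ := hcoset hx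
    exact hxf ▸ Finset.smul_finset_subset_mul hf
  · intro x hx
    obtain ⟨f, hf, hxf⟩ := hcoset hx
    exact hxf ▸ (Finset.mem_filter.1 (hFB hf)).2
  · intro x hx
    rw [Finset.mem_sdiff] at hx
    have hminority : ¬T.card ≤ 2 * (x • T ∩ S).card := fun h =>
      hx.2 (hBF (Finset.mem_filter.2 ⟨hx.1, h⟩))
    have hsplit := Finset.card_inter_add_card_sdiff (x • T) S
    rw [Finset.card_smul_finset] at hsplit
    lia

theorem card_mul_le_of_le_card_smul_inter (hT : (T : Set G) = H) {ε s : ℝ}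
    (hTS : (T : Set G) ⊆ stR S ε) {Z : Finset G}
    (hinter : ∀ z ∈ Z, s * T.card ≤ (z • T ∩ S).card)
    (hsdiff : ∀ z ∈ Z, s * T.card ≤ (z • T \ S).card) :
    Z.card * s ≤ ε * S.card := by
  have hT0 : (0 : ℝ) < T.card := Nat.cast_pos.2 (nonempty_of_coe_eq hT).card_pos
  have hin : (Z ∩ S).card * (s * T.card) ≤ ((∑ x ∈ S, (x • T \ S).card : ℕ) : ℝ) := by
    refine le_trans ?_ (Nat.cast_le.2
      (Finset.sum_le_sum_of_subset (Finset.inter_subset_right (s₁ := Z))))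
    rw [← nsmul_eq_mul, Nat.cast_sum]
    exact Finset.card_nsmul_le_sum _ _ _ fun z hz => hsdiff z (Finset.mem_inter.1 hz).1
  have hout : (Z \ S).card * (s * T.card) ≤ ((∑ x ∈ S, (x • T \ S).card : ℕ) : ℝ) := by
    refine le_trans ?_ (Nat.cast_le.2
      (sum_card_smul_inter_le hT (Finset.sdiff_disjoint (t := Z))))
    rw [← nsmul_eq_mul, Nat.cast_sum]
    exact Finset.card_nsmul_le_sum _ _ _ fun z hz => hinter z (Finset.mem_sdiff.1 hz).1
  have hZ : (Z.card : ℝ) = (Z ∩ S).card + (Z \ S).card :=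
    mod_cast (Finset.card_inter_add_card_sdiff Z S).symm
  refine le_of_mul_le_mul_right ?_ hT0
  rw [hZ]
  linarith [two_mul_sum_card_smul_sdiff_le hTS]

theorem ncard_Zl_mul_le {G : Type*} [Group G] {S T : Finset G} {H : Subgroup G}
    (hT : (T : Set G) = H) {ε s : ℝ} (hTS : (T : Set G) ⊆ stR S ε) (hs : 0 < s) :
    (Zl (S : Set G) (H : Set G) s).ncard * s ≤ ε * S.card := by
  classical
  have hmem {z : G} (hz : z ∈ Zl (S : Set G) (H : Set G) s) :
      s * T.card ≤ (z • T ∩ S).card ∧ s * T.card ≤ (z • T \ S).card := by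
    rwa [Zl, Set.mem_ofPred_eq, le_min_iff, ← hT, ← Finset.coe_smul_finset, ← Finset.coe_inter,
      ← Finset.coe_sdiff, Set.ncard_coe_finset, Set.ncard_coe_finset, Set.ncard_coe_finset] at hz
  have hfin : (Zl (S : Set G) (H : Set G) s).Finite := by
    refine (S * T).finite_toSet.subset fun z hz => ?_
    have hT0 : (0 : ℝ) < T.card := Nat.cast_pos.2 (nonempty_of_coe_eq hT).card_pos
    obtain ⟨y, hy⟩ := Finset.card_pos.1 (Nat.cast_pos.1 ((mul_pos hs hT0).trans_le (hmem hz).1))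
    rw [Finset.mem_inter, mem_smul_finset_comm hT] at hy
    exact Finset.smul_finset_subset_mul hy.2 hy.1
  rw [Set.ncard_eq_toFinset_card _ hfin]
  exact card_mul_le_of_le_card_smul_inter hT hTS (fun z hz => (hmem (hfin.mem_toFinset.1 hz)).1)
    fun z hz => (hmem (hfin.mem_toFinset.1 hz)).2

theorem ncard_Zl_sqrt_le {G : Type*} [Group G] {S T : Finset G} {H : Subgroup G}
    (hT : (T : Set G) = H) {ε : ℝ} (hTS : (T : Set G) ⊆ stR S ε) (hε : 0 < ε) :
    (Zl (S : Set G) (H : Set G) √ε).ncard ≤ √ε * S.card := by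
  refine le_of_mul_le_mul_right ?_ (Real.sqrt_pos.2 hε)
  rw [mul_right_comm, Real.mul_self_sqrt hε.le]
  exact ncard_Zl_mul_le hT hTS (Real.sqrt_pos.2 hε)

theorem card_transversal_le {F T : Finset G} (hFS : F ⊆ S) (hFT : F.card * T.card = (F * T).card)
    (hTS : T ⊆ S⁻¹ * S) (hT : T.Nonempty) {k : ℝ} (hk0 : 0 ≤ k)
    (hk : ((S ^ 3).card : ℝ) ≤ k * S.card) {c : ℝ} (hc : (S.card : ℝ) ≤ c * T.card) :
    F.card ≤ k ^ 3 * c := by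
  refine le_of_mul_le_mul_right ?_ (Nat.cast_pos.2 hT.card_pos : (0 : ℝ) < T.card)
  calc (F.card : ℝ) * T.card = (F * T).card := mod_cast hFT
    _ ≤ (S * S⁻¹ * S).card := by
        rw [mul_assoc]
        exact Nat.cast_le.2 (Finset.card_le_card (Finset.mul_subset_mul hFS hTS))
    _ ≤ k ^ 3 * S.card := card_mul_inv_mul_le hk
    _ ≤ k ^ 3 * (c * T.card) := by gcongr
    _ = k ^ 3 * c * T.card := (mul_assoc _ _ _).symm

theorem cube_mul_pow_le_rpow {k ε c C b : ℝ} {m : ℕ} (hk : 1 ≤ k) (hε0 : 0 < ε) (hε1 : ε ≤ 1)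
    (hb : 0 ≤ b) (hc : c ≤ C) (hm : (m + 3 : ℕ) ≤ C) :
    k ^ 3 * (c * (k / ε) ^ m) ≤ C * (k / ε) ^ (b + C) := by
  have hC : 0 ≤ C := (Nat.cast_nonneg _).trans hm
  have hkε : k ≤ k / ε := le_div_self (zero_le_one.trans hk) hε0 hε1
  calc k ^ 3 * (c * (k / ε) ^ m) ≤ k ^ 3 * (C * (k / ε) ^ m) := by gcongr
    _ ≤ (k / ε) ^ 3 * (C * (k / ε) ^ m) := by gcongr
    _ = C * (k / ε) ^ ((m + 3 : ℕ) : ℝ) := by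
        rw [Real.rpow_natCast, pow_add]
        ring
    _ ≤ C * (k / ε) ^ (b + C) := by
        gcongr
        · exact hk.trans hkε
        · exact le_add_of_nonneg_of_le hb hm

theorem card_transversal_le_rpow (hS : S.Nonempty) {k : ℝ} (hk : ((S ^ 3).card : ℝ) ≤ k * S.card)
    {ε : ℝ} (hε0 : 0 < ε) (hε1 : ε ≤ 1) (hT : (T : Set G) = H) (hTS : (T : Set G) ⊆ stR S ε)
    {c : ℝ} {m : ℕ} (hST : (S.card : ℝ) ≤ c * (k / ε) ^ m * T.card) {F : Finset G} (hFS : F ⊆ S)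
    (hFT : F.card * T.card = (F * T).card) {b C : ℝ} (hb : 0 ≤ b) (hc : c ≤ C)
    (hm : (m + 3 : ℕ) ≤ C) : F.card ≤ C * (k / ε) ^ (b + C) := by
  have hk1 : 1 ≤ k := one_le_of_card_pow_le hS (by norm_num) hk
  have hTinv : (T : Set G) ⊆ (S : Set G)⁻¹ * S :=
    hTS.trans (stR_subset_inv_mul hS (hε1.trans_lt one_lt_two))
  exact (card_transversal_le hFS hFT (mod_cast hTinv) (nonempty_of_coe_eq hT)
    (zero_le_one.trans hk1) hk hST).trans (cube_mul_pow_le_rpow hk1 hε0 hε1 hb hc hm)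

end CosetCounting

/-- Theorem 6.4 of the paper, case (1): for `d ≥ 0` and `q ≥ 1` there is `C`
such that for every group `G` and nonempty finite `A ⊆ G` with `A⁻¹A` of exponent `q` and
`VC^r_A(A) = d`, setting `k = |A³|/|A|`, for every `ε ∈ (0,1)` there is a subgroup
`H ⊆ St^r_ε(A)` with `cov(A:H) ≤ C(k/ε)^{2d+C}`, an `F ⊆ A` with `|F| ≤ C(k/ε)^{2d+C}` and
`|A △ FH| ≤ ε|A|`, and `|Z^ℓ_{√ε}(A,H)| ≤ 2√ε|A|`. -/
theorem nip_tripling_bounded_exponent (d q : ℕ) (hq : 1 ≤ q) :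
    ∃ C : ℝ, ∀ (G : Type*) [Group G] (A : Set G), A.Finite → A.Nonempty →
      (∀ x ∈ A⁻¹ * A, x ^ q = 1) →
      vcDim (rightFam A A) = (d : ℕ∞) →
      ∀ ε : ℝ, 0 < ε → ε < 1 →
      ∃ H : Subgroup G,
        (H : Set G) ⊆ stR A ε ∧
        (∃ F ⊆ A, F.Finite ∧
          (F.ncard : ℝ) ≤ C * ((((A ^ 3).ncard : ℝ) / A.ncard) / ε) ^ (2 * (d : ℝ) + C) ∧
          A ⊆ F * (H : Set G)) ∧
        (∃ F ⊆ A, F.Finite ∧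
          (F.ncard : ℝ) ≤ C * ((((A ^ 3).ncard : ℝ) / A.ncard) / ε) ^ (2 * (d : ℝ) + C) ∧
          ((A ∆ (F * (H : Set G))).ncard : ℝ) ≤ ε * A.ncard) ∧
        ((Zl A (H : Set G) (Real.sqrt ε)).ncard : ℝ) ≤ 2 * Real.sqrt ε * A.ncard := by
  classical
  obtain ⟨c, hlarge⟩ := exists_subgroup_subset_stR d hq
  refine ⟨max c ((2 * d + 4) * (2 * d) + 3 : ℕ), fun G _ A hA hne hexp hd ε hε0 hε1 => ?_⟩
  lift A to Finset G using hA
  simp only [← Finset.coe_pow, Set.ncard_coe_finset]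
  set k : ℝ := ((A ^ 3).card : ℝ) / A.card
  have hk : ((A ^ 3).card : ℝ) ≤ k * A.card :=
    (div_mul_cancel₀ _ (Nat.cast_ne_zero.2 (Finset.card_ne_zero.2 hne))).ge
  obtain ⟨H, hHA, hcard⟩ := hlarge G A hne hexp hd.le k hk ε hε0 hε1.le
  obtain ⟨T, hT⟩ := ((finite_stR hne (hε1.trans one_lt_two)).subset hHA).exists_finset_coe
  have hTA : (T : Set G) ⊆ stR A ε := hT ▸ hHA
  rw [← hT, Set.ncard_coe_finset] at hcard
  have hF {F : Finset G} (hFA : F ⊆ A) (hFT : F.card * T.card = (F * T).card) :=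
    (congrArg Nat.cast (Set.ncard_coe_finset F)).trans_le <| card_transversal_le_rpow hne hk hε0
      hε1.le hT hTA hcard hFA hFT (b := 2 * d) (by positivity) (le_max_left _ _)
      (le_max_right _ _)
  obtain ⟨F₁, hF₁A, hcov, hF₁T⟩ := exists_transversal hT A
  obtain ⟨F₂, hF₂A, hF₂T, happrox⟩ := exists_card_symmDiff_mul_le hT hTA
  refine ⟨H, hHA, ⟨F₁, mod_cast hF₁A, F₁.finite_toSet, hF hF₁A hF₁T, hT ▸ mod_cast hcov⟩,
    ⟨F₂, mod_cast hF₂A, F₂.finite_toSet, hF hF₂A hF₂T, ?_⟩, ?_⟩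
  · rwa [← hT, ← Finset.coe_mul, ← Finset.coe_symmDiff, Set.ncard_coe_finset]
  · refine (ncard_Zl_sqrt_le hT hTA hε0).trans ?_
    gcongr
    exact le_mul_of_one_le_left (Real.sqrt_nonneg ε) one_le_two
end

section
/- For every integer q ≥ 1 there is a constant C = C(q) such that the following holds. Let G be an abelian group of exponent q and A ⊆ G a nonempty finite set; let d = VC_A(A) and k = |A+A|/|A|. Then for any ε ∈ (0,1) there is a subgroup H ≤ G and an integer N ≤ exp(C·d⁸)·(k/ε)^{d+C} satisfying: (i) H ⊆ St_ε(A) and cov(A:H) ≤ N; (ii) |A △ (F+H)| ≤ ε|A| for some F ⊆ A with |F| ≤ N; and (iii) |Z_{√ε}(A,H)| ≤ 2√ε·|A|. -/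
open scoped Pointwise symmDiff

/-- `Stab_N(A) = {x : |(x + A) △ A| ≤ N}` in an abelian group (written additively). -/
def stabAdd {G : Type*} [AddCommGroup G] (A : Set G) (N : ℝ) : Set G :=
  {x : G | (((x +ᵥ A) ∆ A).ncard : ℝ) ≤ N}

/-- `St_ε(A) = Stab_{ε|A|}(A)`. -/
def stAdd {G : Type*} [AddCommGroup G] (A : Set G) (ε : ℝ) : Set G := stabAdd A (ε * A.ncard)

/-- `Z_ε(A,X) = {g : min(|(g+X) ∩ A|, |(g+X) \ A|) ≥ ε|X|}`. -/
def ZAdd {G : Type*} [AddCommGroup G] (A X : Set G) (ε : ℝ) : Set G :=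
  {g : G | ε * X.ncard ≤ min (((g +ᵥ X) ∩ A).ncard : ℝ) (((g +ᵥ X) \ A).ncard : ℝ)}

/-- The family of translates `{x + A : x ∈ B}`. -/
def transFam {G : Type*} [AddCommGroup G] (A B : Set G) : Set (Set G) :=
  (fun x => x +ᵥ A) '' B

/-! The map `x ↦ |(x + A) ∆ A|` is a group seminorm whose balls are the sets `stabAdd A r`. Since
bounded VC-dimension bounds the size of separated families of translates (Haussler's packing
argument), `A` is covered by `O(|A + A| / r) ^ (d + 1)` translates of the ball of radius `r`. These
bounds at geometrically decreasing radii, together with `|stabAdd A r| ≤ 2|A|`, produce two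
consecutive radii between which the ball shrinks by a bounded factor only. In a group of exponent
`q` this forces the subgroup generated by the smaller ball to stay inside the larger one: otherwise
one could adjoin elements of small seminorm to a subgroup `W` one at a time, each of them doubling
the size of `W` plus the small ball while enlarging the seminorm on `W` by a bounded amount only.
Finally, double counting over `h ∈ H ⊆ stabAdd A η` shows that few points lie in a coset of `H` that
is split evenly by `A`. -/

section GroupSeminorm

variable {G : Type*} [AddCommGroup G] {f : AddGroupSeminorm G} {W : AddSubgroup G} {x : G}
  {q : ℕ} {r R : ℝ}

/-- The closed ball of radius `r` around `0` for a group seminorm. -/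
def seminormBall (f : AddGroupSeminorm G) (r : ℝ) : Set G := {x | f x ≤ r}

lemma seminormBall_mono (h : r ≤ R) : seminormBall f r ⊆ seminormBall f R :=
  fun _ hx ↦ hx.trans h

lemma add_seminormBall_subset {S : Set G} (hS : S ⊆ seminormBall f R) :
    S + seminormBall f r ⊆ seminormBall f (R + r) := by
  rintro _ ⟨s, hs, b, hb, rfl⟩
  exact (map_add_le_add f s b).trans (add_le_add (hS hs) hb)

lemma map_zsmul_le_of_nsmul_eq_zero (f : AddGroupSeminorm G) (hq : q ≠ 0) (hx : q • x = 0)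
    (n : ℤ) : f (n • x) ≤ q * f x := by
  have map_nsmul_le (j : ℕ) : f (j • x) ≤ j * f x := by
    induction j with
    | zero => simp
    | succ j ih =>
      rw [succ_nsmul]
      push_cast
      linarith [map_add_le_add f (j • x) x]
  have hq' : (0 : ℤ) < q := by positivity
  obtain ⟨j, hj⟩ := Int.eq_ofNat_of_zero_le (Int.emod_nonneg n hq'.ne')
  have hjq : j ≤ q := by have := Int.emod_lt_of_pos n hq'; omega
  have hnj : n • x = j • x := by
    rw [← Int.mul_ediv_add_emod n q, hj, add_zsmul, mul_comm, mul_zsmul, natCast_zsmul, hx,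
      zsmul_zero, zero_add, natCast_zsmul]
  rw [hnj]
  exact (map_nsmul_le j).trans (by gcongr)

lemma sup_zmultiples_subset_seminormBall (hq : q ≠ 0) (hx : q • x = 0)
    (hW : (W : Set G) ⊆ seminormBall f R) :
    ((W ⊔ AddSubgroup.zmultiples x : AddSubgroup G) : Set G) ⊆ seminormBall f (R + q * f x) := by
  intro y hy
  obtain ⟨w, hw, _, hz, rfl⟩ := AddSubgroup.mem_sup.1 hy
  obtain ⟨n, rfl⟩ := AddSubgroup.mem_zmultiples_iff.1 hz
  exact (map_add_le_add f w (n • x)).trans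
    (add_le_add (hW hw) (map_zsmul_le_of_nsmul_eq_zero f hq hx n))

lemma closure_seminormBall_subset_add (hr : 0 ≤ r)
    (h : seminormBall f (3 * r) ⊆ W + seminormBall f (2 * r)) :
    (AddSubgroup.closure (seminormBall f r) : Set G) ⊆ W + seminormBall f (2 * r) := by
  have add_mem {x y : G} (hx : x ∈ (W : Set G) + seminormBall f (2 * r)) (hy : f y ≤ r) :
      x + y ∈ (W : Set G) + seminormBall f (2 * r) := by
    obtain ⟨w, hw, b, hb : f b ≤ 2 * r, rfl⟩ := hx
    have hby : b + y ∈ seminormBall f (3 * r) :=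
      (map_add_le_add f b y).trans (by linarith)
    obtain ⟨w', hw', b', hb', hsum⟩ := h hby
    exact ⟨w + w', W.add_mem hw hw', b', hb', by
      simpa only [add_assoc, add_right_inj] using hsum⟩
  intro x hx
  induction hx using AddSubgroup.closure_induction_right with
  | zero => exact ⟨0, W.zero_mem, 0, by simpa [seminormBall] using hr, add_zero 0⟩
  | add_right x _ y hy ih => exact add_mem ih hy
  | add_neg_cancel x _ y hy ih => exact add_mem ih ((map_neg_eq_map f y).trans_le hy)

lemma two_mul_ncard_add_seminormBall_le (hx : x ∉ (W : Set G) + seminormBall f (2 * r))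
    (hfin : (((W ⊔ AddSubgroup.zmultiples x : AddSubgroup G) : Set G)
      + seminormBall f r).Finite) :
    2 * ((W : Set G) + seminormBall f r).ncard ≤
      (((W ⊔ AddSubgroup.zmultiples x : AddSubgroup G) : Set G) + seminormBall f r).ncard := by
  set S := (W : Set G) + seminormBall f r
  set T := ((W ⊔ AddSubgroup.zmultiples x : AddSubgroup G) : Set G) + seminormBall f r
  have hST : S ⊆ T := Set.add_subset_add_right (SetLike.coe_subset_coe.2 le_sup_left)
  have hxST : x +ᵥ S ⊆ T := by
    rintro _ ⟨_, ⟨w, hw, b, hb, rfl⟩, rfl⟩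
    exact ⟨x + w, add_mem (AddSubgroup.mem_sup_right (AddSubgroup.mem_zmultiples x))
      (AddSubgroup.mem_sup_left hw), b, hb, add_assoc x w b⟩
  have hdisj : Disjoint S (x +ᵥ S) := by
    rw [Set.disjoint_left]
    rintro _ ⟨w, hw, b, hb, rfl⟩ ⟨_, ⟨w', hw', b', hb', rfl⟩, h⟩
    refine hx ⟨w - w', W.sub_mem hw hw', b - b', ?_, ?_⟩
    · exact (map_sub_le_add f b b').trans ((add_le_add hb hb').trans_eq (two_mul r).symm)
    · simp only [vadd_eq_add] at h ⊢
      rw [sub_add_sub_comm, ← h, add_sub_cancel_right]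
  calc 2 * S.ncard = S.ncard + (x +ᵥ S).ncard := by rw [Set.ncard_vadd_set, two_mul]
    _ = (S ∪ (x +ᵥ S)).ncard :=
      (Set.ncard_union_eq hdisj (hfin.subset hST) (hfin.subset hxST)).symm
    _ ≤ T.ncard := Set.ncard_le_ncard (Set.union_subset hST hxST) hfin

lemma exists_addSubgroup_two_pow_mul_ncard_le (hq : q ≠ 0) (hG : ∀ x : G, q • x = 0)
    (hr : 0 ≤ r) {t : ℕ} (hR : (3 * q * t + 2) * r ≤ R) (hfin : (seminormBall f R).Finite)
    (hgen : ¬ (AddSubgroup.closure (seminormBall f r) : Set G) ⊆ seminormBall f R)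
    {i : ℕ} (hi : i ≤ t) :
    ∃ W : AddSubgroup G, (W : Set G) ⊆ seminormBall f (3 * q * i * r) ∧
      2 ^ i * (seminormBall f r).ncard ≤ ((W : Set G) + seminormBall f r).ncard := by
  induction i with
  | zero => exact ⟨⊥, by simp [seminormBall], by simp⟩
  | succ i ih =>
    obtain ⟨W, hW, hWcard⟩ := ih (by omega)
    have hit : 3 * (q : ℝ) * (i + 1) * r ≤ 3 * q * t * r := by
      gcongr
      exact_mod_cast hi
    have hqr : 0 ≤ (q : ℝ) * r := by positivity
    have hball : ¬ seminormBall f (3 * r) ⊆ W + seminormBall f (2 * r) := fun h ↦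
      hgen fun _ hx ↦ seminormBall_mono (by linarith)
        (add_seminormBall_subset hW (closure_seminormBall_subset_add hr h hx))
    obtain ⟨x, hx : f x ≤ 3 * r, hxW⟩ := Set.not_subset.1 hball
    have hsup : ((W ⊔ AddSubgroup.zmultiples x : AddSubgroup G) : Set G) ⊆
        seminormBall f (3 * q * (i + 1 : ℕ) * r) := by
      refine (sup_zmultiples_subset_seminormBall hq (hG x) hW).trans (seminormBall_mono ?_)
      push_cast
      linarith [mul_le_mul_of_nonneg_left hx (Nat.cast_nonneg (α := ℝ) q)]
    have hsup_fin : (((W ⊔ AddSubgroup.zmultiples x : AddSubgroup G) : Set G)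
        + seminormBall f r).Finite :=
      hfin.subset ((add_seminormBall_subset hsup).trans
        (seminormBall_mono (by push_cast; linarith)))
    refine ⟨_, hsup, ?_⟩
    calc 2 ^ (i + 1) * (seminormBall f r).ncard
        = 2 * (2 ^ i * (seminormBall f r).ncard) := by ring
      _ ≤ 2 * ((W : Set G) + seminormBall f r).ncard := by gcongr
      _ ≤ _ := two_mul_ncard_add_seminormBall_le hxW hsup_fin

theorem closure_seminormBall_subset (hq : q ≠ 0) (hG : ∀ x : G, q • x = 0) (hr : 0 ≤ r)
    {t : ℕ} (hR : (3 * q * t + 2) * r ≤ R) (hfin : (seminormBall f R).Finite)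
    (hcard : (seminormBall f R).ncard < 2 ^ t * (seminormBall f r).ncard) :
    (AddSubgroup.closure (seminormBall f r) : Set G) ⊆ seminormBall f R := by
  by_contra hgen
  obtain ⟨W, hW, hWcard⟩ :=
    exists_addSubgroup_two_pow_mul_ncard_le hq hG hr hR hfin hgen le_rfl
  have hsub : (W : Set G) + seminormBall f r ⊆ seminormBall f R :=
    (add_seminormBall_subset hW).trans (seminormBall_mono (by linarith))
  exact (hWcard.trans (Set.ncard_le_ncard hsub hfin)).not_gt hcard

lemma exists_separated_subset_add_seminormBall (f : AddGroupSeminorm G) {A : Set G}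
    (hA : A.Finite) (hr : 0 ≤ r) :
    ∃ P ⊆ A, P.Pairwise (fun a b ↦ r < f (a - b)) ∧ A ⊆ P + seminormBall f r := by
  have hfin : {P | P ⊆ A ∧ P.Pairwise (fun a b ↦ r < f (a - b))}.Finite :=
    hA.finite_subsets.subset fun _ hP ↦ hP.1
  obtain ⟨P, -, hP⟩ := hfin.exists_le_maximal ⟨Set.empty_subset A, Set.pairwise_empty _⟩
  refine ⟨P, hP.prop.1, hP.prop.2, fun a ha ↦ ?_⟩
  by_contra hfar
  have hfar' (b : G) (hb : b ∈ P) : r < f (a - b) :=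
    not_le.1 fun h ↦ hfar ⟨b, hb, a - b, h, add_sub_cancel b a⟩
  have hinsert : (insert a P).Pairwise (fun a b ↦ r < f (a - b)) :=
    hP.prop.2.insert fun b hb _ ↦ ⟨hfar' b hb, (map_sub_rev f b a).symm ▸ hfar' b hb⟩
  have haP : a ∈ P :=
    hP.le_of_ge ⟨Set.insert_subset ha hP.prop.1, hinsert⟩ (Set.subset_insert a P)
      (Set.mem_insert a P)
  exact hfar ⟨a, haP, 0, by simpa [seminormBall] using hr, add_zero a⟩

end GroupSeminorm

section VCDim

variable {α β : Type*} {F : Set (Set α)} {d : ℕ}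

lemma Shatters.card_le {S : Finset α} (hS : Shatters F S) (hF : vcDim F ≤ d) : S.card ≤ d := by
  exact_mod_cast (le_iSup₂_of_le S hS le_rfl).trans hF

lemma subsingleton_of_vcDim_eq_zero (hF : vcDim F = 0) : F.Subsingleton := by
  have subset_of_mem {s t : Set α} (hs : s ∈ F) (ht : t ∈ F) : s ⊆ t := by
    intro z hzs
    by_contra hzt
    have hz : Shatters F ({z} : Finset α) := by
      intro T hT
      rw [Finset.coe_singleton] at hT ⊢
      rcases Set.subset_singleton_iff_eq.1 hT with rfl | rfl
      · exact ⟨t, ht, by simpa using hzt⟩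
      · exact ⟨s, hs, by simpa using hzs⟩
    simpa using hz.card_le (d := 0) hF.le
  exact fun s hs t ht ↦ (subset_of_mem hs ht).antisymm (subset_of_mem ht hs)

lemma sum_range_choose_le_pow (m d : ℕ) :
    ∑ i ∈ Finset.range (d + 1), m.choose i ≤ (m + 1) ^ d := by
  rw [add_pow]
  refine Finset.sum_le_sum fun i hi ↦ ?_
  have hdi : 0 < d.choose i := Nat.choose_pos (Finset.mem_range_succ_iff.1 hi)
  rw [one_pow, mul_one]
  exact (Nat.choose_le_pow m i).trans (Nat.le_mul_of_pos_right _ hdi)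

lemma card_traces_le_of_vcDim_le (hF : vcDim F ≤ d) {W : Finset α} {𝒜 : Finset (Finset α)}
    (h𝒜 : ∀ u ∈ 𝒜, ∃ s ∈ F, (W : Set α) ∩ s = u) : 𝒜.card ≤ (W.card + 1) ^ d := by
  classical
  have hsub : 𝒜.shatterer ⊆ (Finset.range (d + 1)).biUnion fun i ↦ W.powersetCard i := by
    intro S hS
    rw [Finset.mem_shatterer] at hS
    have hSW : S ⊆ W := by
      obtain ⟨u, hu, hSu⟩ := hS.exists_superset
      obtain ⟨s, -, hs⟩ := h𝒜 u hu
      exact_mod_cast (Finset.coe_subset.2 hSu).trans (hs ▸ Set.inter_subset_left)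
    have hSF : Shatters F S := by
      intro T hT
      lift T to Finset α using S.finite_toSet.subset hT
      obtain ⟨u, hu, rfl⟩ := hS (Finset.coe_subset.1 hT)
      obtain ⟨s, hs, hsu⟩ := h𝒜 u hu
      refine ⟨s, hs, ?_⟩
      rw [Finset.coe_inter, ← hsu, ← Set.inter_assoc,
        Set.inter_eq_left.2 (Finset.coe_subset.2 hSW)]
    exact Finset.mem_biUnion.2 ⟨S.card, Finset.mem_range_succ_iff.2 (hSF.card_le hF),
      Finset.mem_powersetCard.2 ⟨hSW, rfl⟩⟩
  calc 𝒜.card ≤ 𝒜.shatterer.card := 𝒜.card_le_card_shatterer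
    _ ≤ ((Finset.range (d + 1)).biUnion fun i ↦ W.powersetCard i).card := Finset.card_le_card hsub
    _ ≤ ∑ i ∈ Finset.range (d + 1), (W.powersetCard i).card := Finset.card_biUnion_le
    _ = ∑ i ∈ Finset.range (d + 1), W.card.choose i := by simp only [Finset.card_powersetCard]
    _ ≤ (W.card + 1) ^ d := sum_range_choose_le_pow _ _

variable [DecidableEq α]

-- A union bound over all `m`-tuples of elements of `U`.
lemma exists_card_le_forall_inter_nonempty {U : Finset α} (hU : U.Nonempty) {Q : Finset β}
    {D : β → Finset α} (hDU : ∀ b ∈ Q, D b ⊆ U) {r : ℝ} (hr : ∀ b ∈ Q, r ≤ (D b).card) {m : ℕ}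
    (hm : (Q.card : ℝ) * (1 - r / U.card) ^ m < 1) :
    ∃ W : Finset α, W.card ≤ m ∧ ∀ b ∈ Q, (W ∩ D b).Nonempty := by
  by_contra! hno
  have hU0 : (0 : ℝ) < U.card := by exact_mod_cast hU.card_pos
  have hcover : Fintype.piFinset (fun _ : Fin m ↦ U) ⊆
      Q.biUnion fun b ↦ Fintype.piFinset fun _ : Fin m ↦ U \ D b := by
    intro w hw
    obtain ⟨b, hb, hdisj⟩ := hno (Finset.univ.image w) (Finset.card_image_le.trans (by simp))
    refine Finset.mem_biUnion.2 ⟨b, hb, Fintype.mem_piFinset.2 fun i ↦ Finset.mem_sdiff.2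
      ⟨Fintype.mem_piFinset.1 hw i, fun hi ↦ ?_⟩⟩
    have : w i ∈ Finset.univ.image w ∩ D b :=
      Finset.mem_inter.2 ⟨Finset.mem_image_of_mem w (Finset.mem_univ i), hi⟩
    simp [hdisj] at this
  have hcard : U.card ^ m ≤ ∑ b ∈ Q, (U \ D b).card ^ m := by
    simpa only [Fintype.card_piFinset, Finset.prod_const, Finset.card_univ, Fintype.card_fin]
      using (Finset.card_le_card hcover).trans Finset.card_biUnion_le
  have hsdiff (b : β) (hb : b ∈ Q) : ((U \ D b).card : ℝ) ≤ U.card * (1 - r / U.card) := by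
    rw [mul_sub, mul_one, mul_div_cancel₀ r hU0.ne', Finset.cast_card_sdiff (hDU b hb)]
    exact sub_le_sub_left (hr b hb) _
  have hUm : (U.card : ℝ) ^ m < U.card ^ m := by
    calc (U.card : ℝ) ^ m ≤ ∑ b ∈ Q, ((U \ D b).card : ℝ) ^ m := by exact_mod_cast hcard
      _ ≤ ∑ b ∈ Q, (U.card * (1 - r / U.card)) ^ m := by
        gcongr with b hb
        exact hsdiff b hb
      _ = U.card ^ m * (Q.card * (1 - r / U.card) ^ m) := by
        rw [Finset.sum_const, nsmul_eq_mul, mul_pow]; ring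
      _ < U.card ^ m := mul_lt_of_lt_one_right (by positivity) hm
  exact hUm.false

lemma card_le_pow_of_separated_of_vcDim_le (hF : vcDim F ≤ d) {U : Finset α} (hU : U.Nonempty)
    {P : Finset β} {s : β → Finset α} (hsF : ∀ b ∈ P, (s b : Set α) ∈ F)
    (hsU : ∀ b ∈ P, s b ⊆ U) {r : ℝ}
    (hsep : (P : Set β).Pairwise fun a b ↦ r ≤ (symmDiff (s a) (s b)).card) {m : ℕ}
    (hm : (P.card : ℝ) ^ 2 * (1 - r / U.card) ^ m < 1) (hrU : r ≤ U.card) :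
    P.card ≤ (m + 1) ^ d := by
  classical
  have hoffDiag : (P.offDiag.card : ℝ) ≤ P.card ^ 2 := by
    rw [Finset.offDiag_card, sq]
    exact_mod_cast Nat.sub_le _ _
  have hnonneg : 0 ≤ 1 - r / U.card := sub_nonneg.2 (div_le_one_of_le₀ hrU (by positivity))
  obtain ⟨W, hWm, hW⟩ := exists_card_le_forall_inter_nonempty hU (Q := P.offDiag)
    (D := fun b ↦ symmDiff (s b.1) (s b.2))
    (fun b hb ↦ by
      obtain ⟨h1, h2, -⟩ := Finset.mem_offDiag.1 hb
      exact symmDiff_le_sup.trans (Finset.union_subset (hsU _ h1) (hsU _ h2)))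
    (fun b hb ↦ by
      obtain ⟨h1, h2, hne⟩ := Finset.mem_offDiag.1 hb
      exact hsep h1 h2 hne)
    ((mul_le_mul_of_nonneg_right hoffDiag (pow_nonneg hnonneg m)).trans_lt hm)
  have hinj : Set.InjOn (fun b ↦ W ∩ s b) P := by
    intro a ha b hb hab
    by_contra hne
    obtain ⟨z, hz⟩ := hW (a, b) (Finset.mem_offDiag.2 ⟨ha, hb, hne⟩)
    have := Finset.ext_iff.1 hab z
    simp only [Finset.mem_inter, Finset.mem_symmDiff] at hz this
    tauto
  calc P.card = (P.image fun b ↦ W ∩ s b).card := (Finset.card_image_of_injOn hinj).symm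
    _ ≤ (W.card + 1) ^ d := card_traces_le_of_vcDim_le hF <| by
      simp only [Finset.mem_image, forall_exists_index, and_imp, forall_apply_eq_imp_iff₂]
      exact fun b hb ↦ ⟨s b, hsF b hb, (Finset.coe_inter _ _).symm⟩
    _ ≤ (m + 1) ^ d := by gcongr

-- With `z = p ^ (1 / (d + 1) ^ 2)`, bound `log p = (d + 1) ^ 2 * log z ≤ (d + 1) ^ 2 * (z - 1)`.
lemma le_pow_of_le_log_pow {p x : ℝ} (hp : 1 ≤ p) (hx : 1 ≤ x)
    (h : p ≤ (2 * x * Real.log p + 2) ^ d) : p ≤ (2 * (d + 1) ^ 2 * x) ^ (d + 1) := by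
  set B : ℝ := 2 * (d + 1) ^ 2 * x with hB
  have hBx : 2 * x ≤ B := by
    rw [hB, mul_right_comm]
    exact le_mul_of_one_le_right (by positivity) (one_le_pow₀ (by simp))
  rcases eq_or_ne d 0 with rfl | hd
  · rw [pow_zero] at h
    rw [zero_add, pow_one]
    linarith
  set z : ℝ := p ^ ((((d + 1) ^ 2 : ℕ) : ℝ)⁻¹)
  have hz1 : 1 ≤ z := Real.one_le_rpow hp (by positivity)
  have hzp : z ^ ((d + 1) ^ 2) = p := Real.rpow_inv_natCast_pow (by positivity) (by positivity)
  have hlog : Real.log p ≤ (d + 1) ^ 2 * (z - 1) := by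
    rw [← hzp, Real.log_pow]
    push_cast
    gcongr
    exact Real.log_le_sub_one_of_pos (by positivity)
  have hbase : 2 * x * Real.log p + 2 ≤ B * z := by
    calc 2 * x * Real.log p + 2 ≤ 2 * x * ((d + 1) ^ 2 * (z - 1)) + B := by
          gcongr
          linarith
      _ = B * z := by rw [hB]; ring
  have hzB : z ^ (d + 1) ≤ B := by
    have hmul : (z ^ (d + 1)) ^ d * z ^ d ≤ B ^ d * z ^ d := by
      calc (z ^ (d + 1)) ^ d * z ^ d = z ^ ((d + 1) * d + d) := by rw [← pow_mul, pow_add]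
        _ ≤ z ^ ((d + 1) ^ 2) := pow_le_pow_right₀ hz1 (by nlinarith)
        _ ≤ (B * z) ^ d := by
          rw [hzp]
          exact h.trans (pow_le_pow_left₀ (by positivity [Real.log_nonneg hp]) hbase d)
        _ = B ^ d * z ^ d := mul_pow _ _ _
    exact le_of_pow_le_pow_left₀ hd (by positivity) (le_of_mul_le_mul_right hmul (by positivity))
  calc p = (z ^ (d + 1)) ^ (d + 1) := by rw [← hzp, sq, pow_mul]
    _ ≤ B ^ (d + 1) := by gcongr

theorem card_le_of_separated_of_vcDim_le (hF : vcDim F ≤ d) {U : Finset α}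
    {P : Finset β} {s : β → Finset α} (hsF : ∀ b ∈ P, (s b : Set α) ∈ F)
    (hsU : ∀ b ∈ P, s b ⊆ U) {r : ℝ} (hr : 0 < r) (hrU : r ≤ U.card)
    (hsep : (P : Set β).Pairwise fun a b ↦ r ≤ (symmDiff (s a) (s b)).card) :
    (P.card : ℝ) ≤ (2 * (d + 1) ^ 2 * (U.card / r)) ^ (d + 1) := by
  rcases P.eq_empty_or_nonempty with rfl | hP
  · simp only [Finset.card_empty, Nat.cast_zero]; positivity
  have hU : U.Nonempty := Finset.card_pos.1 (by exact_mod_cast hr.trans_le hrU)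
  have hP1 : (1 : ℝ) ≤ P.card := by exact_mod_cast hP.card_pos
  set x : ℝ := U.card / r with hx
  have hx1 : 1 ≤ x := (one_le_div hr).2 hrU
  have hL : 0 ≤ 2 * x * Real.log P.card := by positivity [Real.log_nonneg hP1]
  obtain ⟨m, hLm, hmL⟩ :
      ∃ m : ℕ, 2 * x * Real.log P.card < m ∧ m ≤ 2 * x * Real.log P.card + 1 :=
    ⟨⌊2 * x * Real.log P.card⌋₊ + 1, by exact_mod_cast Nat.lt_floor_add_one _,
      by push_cast; linarith [Nat.floor_le hL]⟩
  have hsq : (P.card : ℝ) ^ 2 = Real.exp (2 * Real.log P.card) := by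
    rw [two_mul, Real.exp_add, Real.exp_log (by positivity), sq]
  have hunion : (P.card : ℝ) ^ 2 * (1 - r / U.card) ^ m < 1 := by
    calc (P.card : ℝ) ^ 2 * (1 - r / U.card) ^ m
        ≤ Real.exp (2 * Real.log P.card) * Real.exp (-x⁻¹) ^ m := by
          rw [← hsq]
          gcongr
          · exact sub_nonneg.2 (div_le_one_of_le₀ hrU (by positivity))
          · rw [hx, inv_div]; exact Real.one_sub_le_exp_neg _
      _ = Real.exp (2 * Real.log P.card - m * x⁻¹) := by
          rw [← Real.exp_nat_mul, ← Real.exp_add]; ring_nf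
      _ < 1 := by
          rw [Real.exp_lt_one_iff, sub_neg, ← div_eq_mul_inv, lt_div_iff₀ (by positivity)]
          linarith
  have hPm := card_le_pow_of_separated_of_vcDim_le hF hU hsF hsU hsep hunion hrU
  refine le_pow_of_le_log_pow hP1 hx1 ?_
  calc (P.card : ℝ) ≤ ((m : ℝ) + 1) ^ d := by exact_mod_cast hPm
    _ ≤ (2 * x * Real.log P.card + 2) ^ d :=
      pow_le_pow_left₀ (by positivity) (by linarith) d

end VCDim

section Translation

variable {G : Type*} [AddCommGroup G] {A H X Y : Set G} {d : ℕ} {r c δ η : ℝ}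

lemma ncard_vadd_symmDiff_vadd (A : Set G) (x y : G) :
    ((x +ᵥ A) ∆ (y +ᵥ A)).ncard = (((x - y) +ᵥ A) ∆ A).ncard := by
  rw [← Set.ncard_vadd_set y (((x - y) +ᵥ A) ∆ A), Set.vadd_set_symmDiff, vadd_vadd,
    add_sub_cancel]

/-- The seminorm `x ↦ |(x + A) ∆ A|` attached to a finite set `A`; its balls are the sets
`stabAdd A r`. -/
noncomputable def translationSeminorm (hA : A.Finite) : AddGroupSeminorm G where
  toFun x := ((x +ᵥ A) ∆ A).ncard
  map_zero' := by simp
  add_le' x y := by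
    have hfin (z : G) : (z +ᵥ A).Finite := hA.vadd_set
    have hxy : (((x + y) +ᵥ A) ∆ (y +ᵥ A)).ncard = ((x +ᵥ A) ∆ A).ncard := by
      rw [ncard_vadd_symmDiff_vadd, add_sub_cancel_right]
    rw [← hxy]
    exact_mod_cast (Set.ncard_le_ncard (symmDiff_triangle _ _ _)
      (((hfin _).symmDiff (hfin _)).union ((hfin _).symmDiff hA))).trans (Set.ncard_union_le _ _)
  neg' x := by
    rw [← zero_sub, ← ncard_vadd_symmDiff_vadd, zero_vadd, symmDiff_comm]

lemma seminormBall_translationSeminorm (hA : A.Finite) (r : ℝ) :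
    seminormBall (translationSeminorm hA) r = stabAdd A r := rfl

lemma ncard_vadd_coe_inter (g : G) (S : Finset G) (Y : Set G) [DecidablePred (· ∈ Y)] :
    ((g +ᵥ (S : Set G)) ∩ Y).ncard = {h ∈ S | g + h ∈ Y}.card := by
  rw [← Set.ncard_coe_finset, ← Set.ncard_vadd_set g (({h ∈ S | g + h ∈ Y} : Finset G) : Set G)]
  congr 1
  ext x
  simp [Set.mem_vadd_set_iff_neg_vadd_mem]

lemma ncard_mul_le_of_forall_ncard_vadd_inter_le (hX : X.Finite) (hH : H.Finite)
    (hH₀ : H.Nonempty) (hc : ∀ g ∈ X, c * H.ncard ≤ ((g +ᵥ H) ∩ Y).ncard)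
    (hδ : ∀ h ∈ H, (((h +ᵥ X) ∩ Y).ncard : ℝ) ≤ δ) : X.ncard * c ≤ δ := by
  classical
  lift X to Finset G using hX
  lift H to Finset G using hH
  simp only [ncard_vadd_coe_inter, Set.ncard_coe_finset, Finset.mem_coe] at hc hδ ⊢
  have hH₁ : (0 : ℝ) < H.card := by exact_mod_cast Finset.card_pos.2 hH₀
  have hcomm : ∑ g ∈ X, {h ∈ H | g + h ∈ Y}.card = ∑ h ∈ H, {g ∈ X | h + g ∈ Y}.card := by
    refine (Finset.sum_card_bipartiteAbove_eq_sum_card_bipartiteBelow fun g h ↦ g + h ∈ Y).trans ?_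
    simp only [Finset.bipartiteBelow, add_comm]
  refine le_of_mul_le_mul_right ?_ hH₁
  calc X.card * c * H.card = X.card • (c * H.card) := by rw [nsmul_eq_mul, mul_assoc]
    _ ≤ ∑ g ∈ X, ({h ∈ H | g + h ∈ Y}.card : ℝ) := Finset.card_nsmul_le_sum _ _ _ hc
    _ = ∑ h ∈ H, ({g ∈ X | h + g ∈ Y}.card : ℝ) := by exact_mod_cast hcomm
    _ ≤ H.card • δ := Finset.sum_le_card_nsmul _ _ _ hδ
    _ = δ * H.card := by rw [nsmul_eq_mul, mul_comm]

lemma ncard_sub_le_ncard_vadd_inter {x : G} (hA : A.Finite) (hx : x ∈ stabAdd A r) :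
    A.ncard - r ≤ ((x +ᵥ A) ∩ A).ncard := by
  have hsdiff : ((x +ᵥ A) \ A).ncard ≤ ((x +ᵥ A) ∆ A).ncard :=
    Set.ncard_le_ncard Set.subset_union_left (hA.vadd_set.symmDiff hA)
  have hsplit := Set.ncard_inter_add_ncard_sdiff_eq_ncard (x +ᵥ A) A hA.vadd_set
  rw [Set.ncard_vadd_set] at hsplit
  have hx' : (((x +ᵥ A) ∆ A).ncard : ℝ) ≤ r := hx
  rify at hsdiff hsplit
  linarith

lemma finite_stabAdd (hA : A.Finite) (hr : r < A.ncard) : (stabAdd A r).Finite := by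
  refine (hA.sub hA).subset fun x hx ↦ ?_
  have hpos : 0 < ((x +ᵥ A) ∩ A).ncard := by
    exact_mod_cast (sub_pos.2 hr).trans_le (ncard_sub_le_ncard_vadd_inter hA hx)
  obtain ⟨_, ⟨a, ha, rfl⟩, hxa⟩ := Set.nonempty_of_ncard_ne_zero hpos.ne'
  exact ⟨x + a, hxa, a, ha, add_sub_cancel_right x a⟩

lemma ncard_stabAdd_le (hA : A.Finite) (hA₀ : A.Nonempty) (hr : r ≤ A.ncard / 2) :
    ((stabAdd A r).ncard : ℝ) ≤ 2 * A.ncard := by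
  have hA₁ : (0 : ℝ) < A.ncard := by exact_mod_cast (Set.ncard_pos hA).2 hA₀
  have h : (stabAdd A r).ncard * (1 / 2 : ℝ) ≤ A.ncard :=
    ncard_mul_le_of_forall_ncard_vadd_inter_le (Y := A) (finite_stabAdd hA (by linarith)) hA
      hA₀ (fun x hx ↦ by linarith [ncard_sub_le_ncard_vadd_inter hA hx])
      fun a _ ↦ by exact_mod_cast Set.ncard_le_ncard Set.inter_subset_right hA
  linarith

lemma ncard_le_ncard_add_self (hA : A.Finite) : A.ncard ≤ (A + A).ncard := by
  rcases A.eq_empty_or_nonempty with rfl | ⟨a, ha⟩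
  · simp
  · rw [← Set.ncard_vadd_set a]
    exact Set.ncard_le_ncard (Set.vadd_set_subset_add ha) (hA.add hA)

lemma exists_subset_add_stabAdd_of_vcDim_le (hA : A.Finite) (hd : vcDim (transFam A A) ≤ d)
    (hr : 0 < r) (hrA : r ≤ (A + A).ncard) :
    ∃ P ⊆ A, A ⊆ P + stabAdd A r ∧
      (P.ncard : ℝ) ≤ (2 * (d + 1) ^ 2 * ((A + A).ncard / r)) ^ (d + 1) := by
  classical
  obtain ⟨P, hPA, hsep, hcov⟩ :=
    exists_separated_subset_add_seminormBall (translationSeminorm hA) hA hr.le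
  rw [seminormBall_translationSeminorm] at hcov
  refine ⟨P, hPA, hcov, ?_⟩
  lift P to Finset G using hA.subset hPA
  lift A to Finset G using hA
  rw [← Finset.coe_add, Set.ncard_coe_finset] at hrA ⊢
  rw [Set.ncard_coe_finset]
  refine card_le_of_separated_of_vcDim_le hd (s := fun b ↦ b +ᵥ A)
    (fun b hb ↦ ⟨b, hPA hb, (Finset.coe_vadd_finset b A).symm⟩)
    (fun b hb ↦ Finset.vadd_finset_subset_add (Finset.coe_subset.1 hPA hb)) hr hrA
    fun a ha b hb hab ↦ ?_
  have hcard : (symmDiff (a +ᵥ A) (b +ᵥ A)).card = (((a - b) +ᵥ (A : Set G)) ∆ A).ncard := by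
    rw [← Set.ncard_coe_finset, Finset.coe_symmDiff, Finset.coe_vadd_finset,
      Finset.coe_vadd_finset, ncard_vadd_symmDiff_vadd]
  exact (hsep ha hb hab).le.trans_eq (congrArg Nat.cast hcard.symm)

lemma ncard_le_pow_mul_ncard_stabAdd (hA : A.Finite) (hd : vcDim (transFam A A) ≤ d)
    (hr : 0 < r) (hrA : r < A.ncard) :
    (A.ncard : ℝ) ≤
      (2 * (d + 1) ^ 2 * ((A + A).ncard / r)) ^ (d + 1) * (stabAdd A r).ncard := by
  have hAA : (A.ncard : ℝ) ≤ (A + A).ncard := by exact_mod_cast ncard_le_ncard_add_self hA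
  obtain ⟨P, hPA, hcov, hP⟩ := exists_subset_add_stabAdd_of_vcDim_le hA hd hr (by linarith)
  calc (A.ncard : ℝ) ≤ (P + stabAdd A r).ncard := by
        exact_mod_cast Set.ncard_le_ncard hcov ((hA.subset hPA).add (finite_stabAdd hA hrA))
    _ ≤ P.ncard * (stabAdd A r).ncard := by exact_mod_cast Set.natCard_add_le
    _ ≤ _ := by gcongr

end Translation

section ScaleSelection

variable {G : Type*} [AddCommGroup G] {A : Set G} {q d : ℕ} {η : ℝ}

lemma exists_lt_mul_succ_and_pow_mul_le {b : ℕ → ℕ} (hb : ∀ i, 0 < b i) {T : ℕ} (hT : 1 < T) :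
    ∃ i, b i < T * b (i + 1) ∧ T ^ i * b i ≤ b 0 := by
  by_contra! h
  have hdecay (i : ℕ) : T ^ i * b i ≤ b 0 := by
    induction i with
    | zero => simp
    | succ i ih =>
      have hstep : T * b (i + 1) ≤ b i := by
        by_contra! hlt
        exact (h i hlt).not_ge ih
      calc T ^ (i + 1) * b (i + 1) = T ^ i * (T * b (i + 1)) := by ring
        _ ≤ T ^ i * b i := by gcongr
        _ ≤ b 0 := ih
  have hlt : b 0 < T ^ b 0 * b (b 0) :=
    (Nat.lt_pow_self hT).trans_le (Nat.le_mul_of_pos_right _ (hb _))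
  exact hlt.not_ge (hdecay _)

lemma le_two_mul_of_pow_le {y z : ℝ} (hy : 0 ≤ y) (hz : 1 ≤ z) {D : ℕ} (hD : D ≠ 0)
    (h : z ^ (2 * D) ≤ 2 * y ^ D * z) : z ≤ 2 * y := by
  have hzD : z ^ D ≤ 2 * y ^ D := by
    have hmul : z ^ D * z ≤ 2 * y ^ D * z := by
      calc z ^ D * z ≤ z ^ D * z ^ D := by gcongr; exact le_self_pow₀ hz hD
        _ = z ^ (2 * D) := by rw [two_mul, pow_add]
        _ ≤ 2 * y ^ D * z := h
    exact le_of_mul_le_mul_right hmul (by positivity)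
  refine le_of_pow_le_pow_left₀ hD (by positivity) ?_
  calc z ^ D ≤ 2 * y ^ D := hzD
    _ ≤ 2 ^ D * y ^ D := by gcongr; exact le_self_pow₀ one_le_two hD
    _ = (2 * y) ^ D := (mul_pow _ _ _).symm

lemma stabAdd_mono {r s : ℝ} (h : r ≤ s) : stabAdd A r ⊆ stabAdd A s := fun _ hx ↦ hx.trans h

-- At every scale `|A|` is at most the covering number times the size of the stabilizer, and the
-- covering number grows only polynomially in `M ^ i`; so the stabilizer cannot shrink by a factor
-- `M ^ (2 * (d + 1) ^ 2)` at too many consecutive scales.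
lemma exists_scale_ncard_stabAdd_lt (hA : A.Finite) (hA₀ : A.Nonempty)
    (hd : vcDim (transFam A A) ≤ d) (hη : 0 < η) (hηA : η ≤ A.ncard / 2) {M : ℕ} (hM : 1 < M) :
    ∃ i, (stabAdd A (η / M ^ i)).ncard <
        M ^ (2 * (d + 1) ^ 2) * (stabAdd A (η / M ^ (i + 1))).ncard ∧
      (M : ℝ) ^ (i * (d + 1)) ≤ 2 * (2 * (d + 1) ^ 2 * ((A + A).ncard / η)) := by
  have hM' : (1 : ℝ) < M := by exact_mod_cast hM
  have hA₁ : (0 : ℝ) < A.ncard := by exact_mod_cast (Set.ncard_pos hA).2 hA₀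
  have hle (i : ℕ) : η / (M : ℝ) ^ i ≤ A.ncard / 2 :=
    (div_le_self hη.le (one_le_pow₀ hM'.le)).trans hηA
  have hlt (i : ℕ) : η / (M : ℝ) ^ i < A.ncard := by linarith [hle i, hA₁]
  set b : ℕ → ℕ := fun i ↦ (stabAdd A (η / M ^ i)).ncard
  have hb (i : ℕ) : 0 < b i :=
    (Set.ncard_pos (finite_stabAdd hA (hlt i))).2 ⟨0, by
      simpa [stabAdd] using (by positivity : 0 ≤ η / (M : ℝ) ^ i)⟩
  obtain ⟨i, hi, hdecay⟩ := exists_lt_mul_succ_and_pow_mul_le hb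
    (Nat.one_lt_pow (n := 2 * (d + 1) ^ 2) (by positivity) hM)
  refine ⟨i, hi, le_two_mul_of_pow_le (D := d + 1) (by positivity) (one_le_pow₀ hM'.le)
    (by omega) ?_⟩
  set y : ℝ := 2 * (d + 1) ^ 2 * ((A + A).ncard / η) with hy
  have hAb : (A.ncard : ℝ) ≤ (y * M ^ i) ^ (d + 1) * b i := by
    convert ncard_le_pow_mul_ncard_stabAdd hA hd (r := η / M ^ i) (by positivity) (hlt i) using 3
    rw [hy]
    field_simp
  refine le_of_mul_le_mul_right ?_ (Nat.cast_pos (α := ℝ).2 (hb i))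
  calc ((M : ℝ) ^ (i * (d + 1))) ^ (2 * (d + 1)) * b i
      = ((M ^ (2 * (d + 1) ^ 2)) ^ i * b i : ℕ) := by push_cast; ring
    _ ≤ b 0 := by exact_mod_cast hdecay
    _ ≤ 2 * A.ncard := ncard_stabAdd_le hA hA₀ (hle 0)
    _ ≤ 2 * ((y * M ^ i) ^ (d + 1) * b i) := by gcongr
    _ = 2 * y ^ (d + 1) * M ^ (i * (d + 1)) * b i := by rw [mul_pow, ← pow_mul]; ring

lemma sq_add_two_le_two_pow {n : ℕ} (hn : 6 ≤ n) : n ^ 2 + 2 ≤ 2 ^ n := by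
  induction n, hn using Nat.le_induction with
  | base => norm_num
  | succ n hn ih => rw [pow_succ 2]; nlinarith

lemma exists_scale_closure_stabAdd_subset (hq : q ≠ 0) (hG : ∀ x : G, q • x = 0)
    (hA : A.Finite) (hA₀ : A.Nonempty) (hd : vcDim (transFam A A) ≤ d)
    (hη : 0 < η) (hηA : η ≤ A.ncard / 2) {M : ℝ} (hM : M = 2 ^ (6 * q * (d + 1) ^ 2)) :
    ∃ i : ℕ, (AddSubgroup.closure (stabAdd A (η / M ^ (i + 1))) : Set G) ⊆ stabAdd A η ∧
      M ^ (i * (d + 1)) ≤ 2 * (2 * (d + 1) ^ 2 * ((A + A).ncard / η)) := by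
  set u : ℕ := 6 * q * (d + 1) ^ 2 with hu
  have hu₆ : 6 ≤ u := by
    rw [hu, mul_assoc]
    exact Nat.le_mul_of_pos_right 6 (by positivity)
  obtain ⟨i, hi, hMi⟩ := exists_scale_ncard_stabAdd_lt hA hA₀ hd hη hηA
    (Nat.one_lt_two_pow (n := u) (by omega))
  push_cast at hi hMi
  rw [← hM] at hi hMi
  have hM₁ : 1 ≤ M := hM ▸ one_le_pow₀ one_le_two
  have hle : η / M ^ i ≤ η := div_le_self hη.le (one_le_pow₀ hM₁)
  have hA₁ : (0 : ℝ) < A.ncard := by exact_mod_cast (Set.ncard_pos hA).2 hA₀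
  have hcoef : (3 * q * (u * (2 * (d + 1) ^ 2) : ℕ) + 2 : ℝ) ≤ M := by
    have : 3 * q * (u * (2 * (d + 1) ^ 2)) + 2 = u ^ 2 + 2 := by rw [hu]; ring
    rw [hM]
    exact_mod_cast this.trans_le (sq_add_two_le_two_pow hu₆)
  have hradius : (3 * q * (u * (2 * (d + 1) ^ 2) : ℕ) + 2) * (η / M ^ (i + 1)) ≤ η / M ^ i := by
    calc _ ≤ M * (η / M ^ (i + 1)) := by gcongr
      _ = η / M ^ i := by rw [pow_succ']; field_simp
  have hfin : (stabAdd A (η / M ^ i)).Finite := finite_stabAdd hA (by linarith [hA₁])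
  refine ⟨i, Set.Subset.trans ?_ (stabAdd_mono hle), hMi⟩
  rw [← pow_mul 2 u] at hi
  simp only [← seminormBall_translationSeminorm hA] at hfin hi ⊢
  exact closure_seminormBall_subset hq hG (by positivity) hradius hfin hi

theorem exists_addSubgroup_subset_stabAdd (hq : q ≠ 0) (hG : ∀ x : G, q • x = 0)
    (hA : A.Finite) (hA₀ : A.Nonempty) (hd : vcDim (transFam A A) ≤ d)
    (hη : 0 < η) (hηA : η ≤ A.ncard / 2) :
    ∃ H : AddSubgroup G, (H : Set G) ⊆ stabAdd A η ∧ ∃ P ⊆ A, A ⊆ P + (H : Set G) ∧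
      (P.ncard : ℝ) ≤ 2 ^ (1 + 6 * q * (d + 1) ^ 3) *
        (2 * (d + 1) ^ 2 * ((A + A).ncard / η)) ^ (d + 2) := by
  obtain ⟨M, hM⟩ : ∃ M : ℝ, M = 2 ^ (6 * q * (d + 1) ^ 2) := ⟨_, rfl⟩
  obtain ⟨i, hclosure, hMi⟩ := exists_scale_closure_stabAdd_subset hq hG hA hA₀ hd hη hηA hM
  have hM₁ : 1 ≤ M := hM ▸ one_le_pow₀ one_le_two
  have hle : η / M ^ (i + 1) ≤ η := div_le_self hη.le (one_le_pow₀ hM₁)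
  have hAA : (A.ncard : ℝ) ≤ (A + A).ncard := by exact_mod_cast ncard_le_ncard_add_self hA
  obtain ⟨P, hPA, hcov, hP⟩ := exists_subset_add_stabAdd_of_vcDim_le hA hd
    (r := η / M ^ (i + 1)) (by positivity) (by linarith)
  refine ⟨_, hclosure, P, hPA,
    hcov.trans (Set.add_subset_add_left AddSubgroup.subset_closure), hP.trans ?_⟩
  set y : ℝ := 2 * (d + 1) ^ 2 * ((A + A).ncard / η) with hy
  have hscale : 2 * (d + 1) ^ 2 * ((A + A).ncard / (η / M ^ (i + 1))) = y * M ^ (i + 1) := by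
    rw [hy]
    field_simp
  calc (2 * (d + 1) ^ 2 * ((A + A).ncard / (η / M ^ (i + 1)))) ^ (d + 1)
      = y ^ (d + 1) * M ^ (d + 1) * M ^ (i * (d + 1)) := by
        rw [hscale, mul_pow, ← pow_mul]; ring
    _ ≤ y ^ (d + 1) * M ^ (d + 1) * (2 * y) := by gcongr
    _ = 2 ^ (1 + 6 * q * (d + 1) ^ 3) * y ^ (d + 2) := by rw [hM]; ring

end ScaleSelection

section Cosets

variable {G : Type*} [AddCommGroup G] {A H X : Set G} {s c δ η : ℝ}

lemma ncard_mul_le_of_forall_le_ncard_vadd_sdiff (hA : A.Finite) (hH : H.Finite)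
    (hH₀ : H.Nonempty) (hHη : H ⊆ stabAdd A η) (hXA : X ⊆ A)
    (hc : ∀ g ∈ X, c * H.ncard ≤ ((g +ᵥ H) \ A).ncard) : X.ncard * c ≤ η := by
  refine ncard_mul_le_of_forall_ncard_vadd_inter_le (hA.subset hXA) hH hH₀ (Y := Aᶜ)
    (by simpa only [← Set.sdiff_eq] using hc) fun h hh ↦ le_trans ?_ (hHη hh)
  have hsub : (h +ᵥ X) ∩ Aᶜ ⊆ (h +ᵥ A) \ A := fun x hx ↦ ⟨Set.vadd_set_mono hXA hx.1, hx.2⟩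
  exact_mod_cast Set.ncard_le_ncard (hsub.trans Set.subset_union_left)
    (hA.vadd_set.symmDiff hA)

lemma ncard_mul_le_of_forall_le_ncard_vadd_inter (hA : A.Finite) (hH : H.Finite)
    (hH₀ : H.Nonempty) (hHη : H ⊆ stabAdd A η) (hX : X.Finite) (hXA : Disjoint X A)
    (hc : ∀ g ∈ X, c * H.ncard ≤ ((g +ᵥ H) ∩ A).ncard) : X.ncard * c ≤ η := by
  refine ncard_mul_le_of_forall_ncard_vadd_inter_le hX hH hH₀ hc
    fun h hh ↦ le_trans ?_ (hHη hh)
  have hsub : (h +ᵥ X) ∩ A ⊆ A \ (h +ᵥ A) := fun x hx ↦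
    ⟨hx.2, fun hxA ↦ (Set.disjoint_vadd_set.2 hXA).ne_of_mem hx.1 hxA rfl⟩
  exact_mod_cast Set.ncard_le_ncard (hsub.trans Set.subset_union_right)
    (hA.vadd_set.symmDiff hA)

lemma finite_ZAdd (hA : A.Finite) (hH : H.Finite) (hH₀ : H.Nonempty) (hs : 0 < s) :
    (ZAdd A H s).Finite := by
  refine (hA.sub hH).subset fun g hg ↦ ?_
  have hpos : 0 < ((g +ᵥ H) ∩ A).ncard := by
    have : 0 < s * H.ncard := mul_pos hs (by exact_mod_cast (Set.ncard_pos hH).2 hH₀)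
    exact_mod_cast this.trans_le (le_min_iff.1 hg).1
  obtain ⟨_, ⟨h, hh, rfl⟩, hgh⟩ := Set.nonempty_of_ncard_ne_zero hpos.ne'
  exact ⟨g + h, hgh, h, hh, add_sub_cancel_right g h⟩

lemma ncard_ZAdd_mul_le (hA : A.Finite) (hH : H.Finite) (hH₀ : H.Nonempty)
    (hHη : H ⊆ stabAdd A η) (hs : 0 < s) : (ZAdd A H s).ncard * s ≤ 2 * η := by
  have hZ := finite_ZAdd hA hH hH₀ hs
  have hin : (ZAdd A H s ∩ A).ncard * s ≤ η :=
    ncard_mul_le_of_forall_le_ncard_vadd_sdiff hA hH hH₀ hHη Set.inter_subset_right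
      fun g hg ↦ (le_min_iff.1 hg.1).2
  have hout : (ZAdd A H s \ A).ncard * s ≤ η :=
    ncard_mul_le_of_forall_le_ncard_vadd_inter hA hH hH₀ hHη hZ.sdiff Set.disjoint_sdiff_left
      fun g hg ↦ (le_min_iff.1 hg.1).1
  have hsplit : ((ZAdd A H s ∩ A).ncard + (ZAdd A H s \ A).ncard : ℝ) = (ZAdd A H s).ncard := by
    exact_mod_cast Set.ncard_inter_add_ncard_sdiff_eq_ncard _ A hZ
  rw [← hsplit]
  linarith

lemma add_vadd_coe_addSubgroup (H : AddSubgroup G) {h : G} (hh : h ∈ H) (g : G) :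
    (g + h) +ᵥ (H : Set G) = g +ᵥ (H : Set G) := by
  rw [← vadd_vadd, vadd_coe_set hh]

lemma exists_subset_ncard_symmDiff_add_le {H : AddSubgroup G} {P : Set G} (hA : A.Finite)
    (hH : (H : Set G).Finite) (hHη : (H : Set G) ⊆ stabAdd A η) (hPA : P ⊆ A)
    (hcov : A ⊆ P + (H : Set G)) :
    ∃ F ⊆ P, ((A ∆ (F + (H : Set G))).ncard : ℝ) ≤ 4 * η := by
  have hH₀ : (H : Set G).Nonempty := ⟨0, H.zero_mem⟩
  set F := {p ∈ P | 1 / 2 * ((H : Set G).ncard : ℝ) ≤ ((p +ᵥ (H : Set G)) ∩ A).ncard}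
  have hFP : F ⊆ P := Set.sep_subset _ _
  have hF : (F + (H : Set G)).Finite := (hA.subset (hFP.trans hPA)).add hH
  have hmissed : (A \ (F + (H : Set G))).ncard * (1 / 2 : ℝ) ≤ η := by
    refine ncard_mul_le_of_forall_le_ncard_vadd_sdiff hA hH hH₀ hHη Set.sdiff_subset ?_
    rintro g ⟨hgA, hgF⟩
    obtain ⟨p, hp, h, hh, rfl⟩ := hcov hgA
    rw [add_vadd_coe_addSubgroup H hh]
    have hpF : ((p +ᵥ (H : Set G)) ∩ A).ncard < 1 / 2 * ((H : Set G).ncard : ℝ) :=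
      not_le.1 fun hle ↦ hgF ⟨p, ⟨hp, hle⟩, h, hh, rfl⟩
    have hsplit := Set.ncard_inter_add_ncard_sdiff_eq_ncard (p +ᵥ (H : Set G)) A hH.vadd_set
    rw [Set.ncard_vadd_set] at hsplit
    rify at hsplit
    linarith
  have hextra : ((F + (H : Set G)) \ A).ncard * (1 / 2 : ℝ) ≤ η := by
    refine ncard_mul_le_of_forall_le_ncard_vadd_inter hA hH hH₀ hHη hF.sdiff
      Set.disjoint_sdiff_left ?_
    rintro _ ⟨⟨p, hp, h, hh, rfl⟩, -⟩
    rw [add_vadd_coe_addSubgroup H hh]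
    exact hp.2
  have hunion : ((A ∆ (F + (H : Set G))).ncard : ℝ) ≤
      (A \ (F + (H : Set G))).ncard + ((F + (H : Set G)) \ A).ncard := by
    exact_mod_cast Set.ncard_union_le _ _
  exact ⟨F, hFP, by linarith⟩

end Cosets

section BoundedExponent

variable {G : Type*} [AddCommGroup G] {A : Set G} {q d : ℕ} {ε : ℝ}

lemma two_pow_mul_eight_mul_pow_le (hq : q ≠ 0) (hd : d ≠ 0) {κ : ℝ} (hκ : 1 ≤ κ) :
    2 ^ (1 + 6 * q * (d + 1) ^ 3) * (8 * (d + 1) ^ 2 * κ) ^ (d + 2) ≤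
      2 ^ (64 * q * d ^ 8) * κ ^ (d + 64 * q) := by
  have hq₁ : 1 ≤ q := Nat.one_le_iff_ne_zero.2 hq
  have hd₁ : 1 ≤ d := Nat.one_le_iff_ne_zero.2 hd
  have hbase : 8 * ((d : ℝ) + 1) ^ 2 ≤ 2 ^ (3 + 2 * d) := by
    calc 8 * ((d : ℝ) + 1) ^ 2 ≤ 8 * (2 ^ d) ^ 2 := by
          gcongr
          exact_mod_cast Nat.succ_le_of_lt d.lt_two_pow_self
      _ = 2 ^ (3 + 2 * d) := by ring
  have hexp : 1 + 6 * q * (d + 1) ^ 3 + (3 + 2 * d) * (d + 2) ≤ 64 * q * d ^ 8 := by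
    have hd₁' : 1 ≤ d ^ 8 := Nat.one_le_pow _ _ hd₁
    have hcube : (d + 1) ^ 3 ≤ 8 * d ^ 8 := by
      calc (d + 1) ^ 3 ≤ (2 * d) ^ 3 := by gcongr; omega
        _ = 8 * d ^ 3 := by ring
        _ ≤ 8 * d ^ 8 := by gcongr; norm_num
    have hsquare : (3 + 2 * d) * (d + 2) ≤ 15 * d ^ 8 := by
      calc (3 + 2 * d) * (d + 2) ≤ (5 * d) * (3 * d) := by gcongr <;> omega
        _ = 15 * d ^ 2 := by ring
        _ ≤ 15 * d ^ 8 := by gcongr; norm_num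
    calc _ ≤ d ^ 8 + 6 * q * (8 * d ^ 8) + 15 * d ^ 8 := by gcongr
      _ ≤ 64 * q * d ^ 8 := by nlinarith
  calc 2 ^ (1 + 6 * q * (d + 1) ^ 3) * (8 * (d + 1) ^ 2 * κ) ^ (d + 2)
      ≤ 2 ^ (1 + 6 * q * (d + 1) ^ 3) * (2 ^ (3 + 2 * d) * κ) ^ (d + 2) := by gcongr
    _ = 2 ^ (1 + 6 * q * (d + 1) ^ 3 + (3 + 2 * d) * (d + 2)) * κ ^ (d + 2) := by
      rw [mul_pow, ← pow_mul]; ring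
    _ ≤ 2 ^ (64 * q * d ^ 8) * κ ^ (d + 64 * q) := by
      gcongr
      · norm_num
      · omega

lemma one_le_ncard_add_self_div_div (hA : A.Finite) (hA₀ : A.Nonempty) (hε : 0 < ε)
    (hε₁ : ε ≤ 1) : 1 ≤ ((A + A).ncard / A.ncard / ε : ℝ) := by
  have hA₁ : (0 : ℝ) < A.ncard := by exact_mod_cast (Set.ncard_pos hA).2 hA₀
  have hAA : (A.ncard : ℝ) ≤ (A + A).ncard := by exact_mod_cast ncard_le_ncard_add_self hA
  rw [one_le_div hε, le_div_iff₀ hA₁]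
  nlinarith

lemma exists_addSubgroup_subset_stAdd (hq : q ≠ 0) (hG : ∀ x : G, q • x = 0) (hA : A.Finite)
    (hA₀ : A.Nonempty) (hd : vcDim (transFam A A) = d) (hε : 0 < ε) (hε₁ : ε ≤ 1) :
    ∃ H : AddSubgroup G, (H : Set G) ⊆ stAdd A (ε / 4) ∧ ∃ P ⊆ A, A ⊆ P + (H : Set G) ∧
      (P.ncard : ℝ) ≤
        2 ^ (64 * q * d ^ 8) * ((A + A).ncard / A.ncard / ε : ℝ) ^ (d + 64 * q) := by
  have hκ := one_le_ncard_add_self_div_div hA hA₀ hε hε₁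
  have hA₁ : (0 : ℝ) < A.ncard := by exact_mod_cast (Set.ncard_pos hA).2 hA₀
  rcases eq_or_ne d 0 with rfl | hd₀
  · -- All translates of `A` by its elements coincide: `A` lies in one coset of its stabilizer.
    obtain ⟨a, ha⟩ := hA₀
    refine ⟨AddAction.stabilizer G A, fun h hh ↦ ?_, {a}, Set.singleton_subset_iff.2 ha,
      fun b hb ↦ ⟨a, rfl, b - a, ?_, add_sub_cancel a b⟩, ?_⟩
    · have hhA : h +ᵥ A = A := hh
      change (((h +ᵥ A) ∆ A).ncard : ℝ) ≤ _
      rw [hhA, symmDiff_self, Set.bot_eq_empty, Set.ncard_empty, Nat.cast_zero]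
      positivity
    · have hab : b +ᵥ A = a +ᵥ A := subsingleton_of_vcDim_eq_zero hd ⟨b, hb, rfl⟩ ⟨a, ha, rfl⟩
      rw [SetLike.mem_coe, AddAction.mem_stabilizer_iff, sub_eq_neg_add, ← vadd_vadd, hab,
        neg_vadd_vadd]
    · rw [Set.ncard_singleton, Nat.cast_one]
      exact one_le_mul_of_one_le_of_one_le (one_le_pow₀ one_le_two) (one_le_pow₀ hκ)
  · obtain ⟨H, hH, P, hPA, hcov, hP⟩ := exists_addSubgroup_subset_stabAdd hq hG hA hA₀ hd.le
      (η := ε / 4 * A.ncard) (by positivity) (by nlinarith)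
    refine ⟨H, hH, P, hPA, hcov, hP.trans ?_⟩
    have hscale : 2 * (d + 1) ^ 2 * ((A + A).ncard / (ε / 4 * A.ncard) : ℝ) =
        8 * (d + 1) ^ 2 * ((A + A).ncard / A.ncard / ε) := by
      field_simp
      ring
    rw [hscale]
    exact two_pow_mul_eight_mul_pow_le hq hd₀ hκ

end BoundedExponent

/-- Theorem 6.6 of the paper: for every `q ≥ 1` there is `C = C(q)` such that
for every abelian group `G` of exponent `q` and nonempty finite `A ⊆ G`, with `d = VC_A(A)`
and `k = |A+A|/|A|`, for every `ε ∈ (0,1)` there are a subgroup `H` and an integer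
`N ≤ exp(C·d⁸)(k/ε)^{d+C}` with `H ⊆ St_ε(A)`, `cov(A:H) ≤ N`, `|A △ (F+H)| ≤ ε|A|` for some
`F ⊆ A` with `|F| ≤ N`, and `|Z_{√ε}(A,H)| ≤ 2√ε|A|`. -/
theorem nip_doubling_bounded_exponent_abelian (q : ℕ) (hq : 1 ≤ q) :
    ∃ C : ℝ, ∀ (G : Type*) [AddCommGroup G], (∀ x : G, q • x = 0) →
      ∀ (A : Set G), A.Finite → A.Nonempty →
      ∀ d : ℕ, vcDim (transFam A A) = (d : ℕ∞) →
      ∀ ε : ℝ, 0 < ε → ε < 1 →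
      ∃ (H : AddSubgroup G) (N : ℕ),
        (N : ℝ) ≤ (2 : ℝ) ^ (C * (d : ℝ) ^ 8) *
          ((((A + A).ncard : ℝ) / A.ncard) / ε) ^ ((d : ℝ) + C) ∧
        (H : Set G) ⊆ stAdd A ε ∧
        (∃ F ⊆ A, F.Finite ∧ F.ncard ≤ N ∧ A ⊆ F + (H : Set G)) ∧
        (∃ F ⊆ A, F.Finite ∧ F.ncard ≤ N ∧
          ((A ∆ (F + (H : Set G))).ncard : ℝ) ≤ ε * A.ncard) ∧
        ((ZAdd A (H : Set G) (Real.sqrt ε)).ncard : ℝ) ≤ 2 * Real.sqrt ε * A.ncard := by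
  refine ⟨64 * q, fun G _ hG A hA hA₀ d hd ε hε hε₁ ↦ ?_⟩
  obtain ⟨H, hH, P, hPA, hcov, hP⟩ :=
    exists_addSubgroup_subset_stAdd (by omega) hG hA hA₀ hd hε hε₁.le
  have hA₁ : (0 : ℝ) < A.ncard := by exact_mod_cast (Set.ncard_pos hA).2 hA₀
  have hHfin : (H : Set G).Finite := (finite_stabAdd hA (by nlinarith)).subset hH
  obtain ⟨F, hFP, hF⟩ := exists_subset_ncard_symmDiff_add_le hA hHfin hH hPA hcov
  have hZ := ncard_ZAdd_mul_le hA hHfin ⟨0, H.zero_mem⟩ hH (Real.sqrt_pos.2 hε)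
  refine ⟨H, P.ncard, by exact_mod_cast hP, hH.trans (stabAdd_mono (by nlinarith)),
    ⟨P, hPA, hA.subset hPA, le_rfl, hcov⟩,
    ⟨F, hFP.trans hPA, hA.subset (hFP.trans hPA), Set.ncard_le_ncard hFP (hA.subset hPA),
      by linarith⟩, ?_⟩
  refine le_of_mul_le_mul_right (hZ.trans ?_) (Real.sqrt_pos.2 hε)
  calc 2 * (ε / 4 * A.ncard) ≤ 2 * (ε * A.ncard) := by nlinarith
    _ = 2 * √ε * A.ncard * √ε := by linear_combination -2 * A.ncard * Real.mul_self_sqrt hε.le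
end
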